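/- Let A = (ℝ/ℤ) × [0,1] be the closed annulus and let h : A → A be a homeomorphism that is homotopic to the identity map (as continuous maps) and maps the boundary circle (ℝ/ℤ) × {0} onto itself. Then h is isotopic to the identity: there exists a continuous map F : [0,1] × A → A such that F(0,·) = h, F(1,·) = id, and F(t,·) : A → A is a homeomorphism for every t ∈ [0,1]. -/

import Mathlib

namespace Ann
open Set Filter Topology

/-- Lifting of circle valued maps on real normed spaces. -/
theorem lift_circle {V : Type} [NormedAddCommGroup V] [NormedSpace ℝ V] (p : ℝ)
    (f : V → AddCircle p) (hf : Continuous f) :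
    ∃ F : V → ℝ, Continuous F ∧ ∀ v, (F v : AddCircle p) = f v := by
  obtain ⟨e₀, he⟩ := QuotientAddGroup.mk_surjective (f 0)
  obtain ⟨F, ⟨-, hF⟩, -⟩ := (AddCircle.isCoveringMap_coe p).existsUnique_continuousMap_lifts
    ⟨f, hf⟩ (0 : V) e₀ he
  exact ⟨F, F.continuous, fun v => congrFun hF v⟩

theorem int_const {X : Type} [TopologicalSpace X] {s : Set X} (hs : IsPreconnected s)
    {f : X → ℝ} (hf : ContinuousOn f s) (hi : ∀ x ∈ s, ∃ n : ℤ, f x = n)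
    {x y : X} (hx : x ∈ s) (hy : y ∈ s) : f x = f y := by
  have h1 : IsPreconnected (f '' s) := hs.image f hf
  by_contra hne
  wlog hlt : f x < f y generalizing x y
  · exact this hy hx (Ne.symm hne) (lt_of_le_of_ne (not_lt.mp hlt) (Ne.symm hne))
  obtain ⟨n, hn⟩ := hi x hx
  obtain ⟨m, hm⟩ := hi y hy
  have hnm : n < m := by rw [hn, hm] at hlt; exact_mod_cast hlt
  have h2 : (n : ℝ) + 1 / 2 ∈ f '' s := by
    refine h1.ordConnected.out ⟨x, hx, rfl⟩ ⟨y, hy, rfl⟩ ⟨by rw [hn]; linarith, ?_⟩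
    have : (n : ℝ) + 1 ≤ m := by exact_mod_cast hnm
    rw [hm]; linarith
  obtain ⟨z, hz, hz'⟩ := h2
  obtain ⟨k, hk⟩ := hi z hz
  rw [hk] at hz'
  have h3 : (2 * k : ℝ) = 2 * n + 1 := by linarith
  have h4 : 2 * k = 2 * n + 1 := by exact_mod_cast h3
  omega

theorem coe_eq_int {a b : ℝ} (h : (a : AddCircle (1 : ℝ)) = b) : ∃ n : ℤ, a - b = n := by
  have h2 : ((a - b : ℝ) : AddCircle (1 : ℝ)) = 0 := by
    rw [AddCircle.coe_sub, h, sub_self]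
  rw [AddCircle.coe_eq_zero_iff] at h2
  obtain ⟨n, hn⟩ := h2
  exact ⟨n, by simpa using hn.symm⟩

/-- the plane -/
abbrev E := ℝ × ℝ

theorem isHomeo_of_bdd {f : E → E} (hf : Continuous f) (hb : Function.Bijective f) (C : ℝ)
    (hC : ∀ z, ‖f z - z‖ ≤ C) : IsHomeomorph f := by
  rw [isHomeomorph_iff_continuous_isClosedMap_bijective]
  refine ⟨hf, ?_, hb⟩
  have : IsProperMap f := by
    rw [isProperMap_iff_tendsto_cocompact]
    refine ⟨hf, ?_⟩
    rw [← Metric.cobounded_eq_cocompact, ← tendsto_norm_atTop_iff_cobounded]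
    refine tendsto_atTop_mono (f := fun z : E => ‖z‖ - C) (fun z => ?_)
      (tendsto_atTop_add_const_right _ _ tendsto_norm_cobounded_atTop)
    have h1 := hC z
    have h2 := norm_sub_norm_le z (f z)
    rw [norm_sub_rev] at h2
    linarith
  exact this.isClosedMap

/-- A continuous bijection of bounded displacement as a homeomorphism. -/
noncomputable def mkH (f : E → E) (hf : Continuous f) (hb : Function.Bijective f) (C : ℝ)
    (hC : ∀ z, ‖f z - z‖ ≤ C) : E ≃ₜ E := (isHomeo_of_bdd hf hb C hC).homeomorph f

@[simp] theorem mkH_apply (f : E → E) (hf : Continuous f) (hb : Function.Bijective f) (C : ℝ)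
    (hC : ∀ z, ‖f z - z‖ ≤ C) (z : E) : mkH f hf hb C hC z = f z := rfl

/-- unit translation -/
def e1 : E := (1, 0)

@[simp] theorem e1_fst : e1.1 = 1 := rfl
@[simp] theorem e1_snd : e1.2 = 0 := rfl

/-- Homeomorphisms of the plane commuting with the unit translation and equal to the identity
outside of the open strip. -/
def InG (g : E ≃ₜ E) : Prop :=
  (∀ z : E, (z.2 ≤ 0 ∨ 1 ≤ z.2) → g z = z) ∧ ∀ z, g (z + e1) = g z + e1

/-- the closed strip -/
def S : Set E := {z | 0 ≤ z.2 ∧ z.2 ≤ 1}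

/-- equivariantly isotopic to the identity -/
def Iso (g : E → E) : Prop :=
  ∃ F : ℝ → E → E, Continuous (fun q : ℝ × E => F q.1 q.2) ∧ (∀ z, F 0 z = g z) ∧
    (∀ z, F 1 z = z) ∧ ∀ t ∈ Icc (0 : ℝ) 1, Function.Bijective (F t) ∧
      (∀ z, F t (z + e1) = F t z + e1) ∧ ∀ z, F t z ∈ S ↔ z ∈ S

theorem Iso.comp {g h : E → E} (hg : Iso g) (hh : Iso h) : Iso (fun z => g (h z)) := by
  obtain ⟨F, Fc, F0, F1, Fp⟩ := hg
  obtain ⟨G, Gc, G0, G1, Gp⟩ := hh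
  refine ⟨fun t z => F t (G t z), ?_, ?_, ?_, ?_⟩
  · exact Fc.comp (continuous_fst.prodMk Gc)
  · intro z; simp [F0, G0]
  · intro z; simp [F1, G1]
  · intro t ht
    refine ⟨(Fp t ht).1.comp (Gp t ht).1, fun z => ?_, fun z => ?_⟩
    · change F t (G t (z + e1)) = F t (G t z) + e1
      rw [(Gp t ht).2.1, (Fp t ht).2.1]
    · change F t (G t z) ∈ S ↔ z ∈ S
      rw [(Fp t ht).2.2, (Gp t ht).2.2]

theorem Iso.congr {g h : E → E} (hg : Iso g) (hh : ∀ z, g z = h z) : Iso h := by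
  have : g = h := funext hh
  rwa [← this]

theorem Iso.refl : Iso (fun z => z) :=
  ⟨fun _ z => z, continuous_snd, fun _ => rfl, fun _ => rfl, fun _ _ =>
    ⟨Function.bijective_id, fun _ => rfl, fun _ => Iff.rfl⟩⟩

theorem equiv_zsmul {f : E → E} (hf : ∀ z, f (z + e1) = f z + e1) (n : ℤ) (z : E) :
    f (z + ((n : ℝ), 0)) = f z + ((n : ℝ), 0) := by
  have hnat : ∀ (n : ℕ) (z : E), f (z + ((n : ℝ), 0)) = f z + ((n : ℝ), 0) := by
    intro n
    induction n with
    | zero => intro z; simp [show ((0 : ℝ), (0 : ℝ)) = (0 : E) from rfl]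
    | succ k ih =>
      intro z
      have h1 : ((((k + 1 : ℕ) : ℝ)), (0 : ℝ)) = ((k : ℝ), (0 : ℝ)) + e1 := by
        ext <;> simp
      rw [h1, ← add_assoc, hf, ih, add_assoc]
  obtain ⟨k, rfl | rfl⟩ := n.eq_nat_or_neg
  · simpa using hnat k z
  · have h2 := hnat k (z + (((-(k : ℤ) : ℤ) : ℝ), 0))
    have h3 : z + (((-(k : ℤ) : ℤ) : ℝ), (0 : ℝ)) + ((k : ℝ), 0) = z := by ext <;> simp
    rw [h3] at h2
    rw [h2]
    ext <;> simp

theorem InG.symm {g : E ≃ₜ E} (hg : InG g) : InG g.symm := by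
  refine ⟨fun z hz => ?_, fun z => ?_⟩
  · rw [Homeomorph.symm_apply_eq]; exact (hg.1 z hz).symm
  · rw [Homeomorph.symm_apply_eq, hg.2, Homeomorph.apply_symm_apply]

theorem InG.trans {g h : E ≃ₜ E} (hg : InG g) (hh : InG h) : InG (g.trans h) := by
  refine ⟨fun z hz => ?_, fun z => ?_⟩
  · simp [hg.1 z hz, hh.1 z hz]
  · simp [hg.2, hh.2]

theorem InG.mem_iff {g : E ≃ₜ E} (hg : InG g) (z : E) :
    (0 < (g z).2 ∧ (g z).2 < 1) ↔ (0 < z.2 ∧ z.2 < 1) := by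
  constructor
  · intro h
    by_contra hz
    have : z.2 ≤ 0 ∨ 1 ≤ z.2 := by
      by_contra h'; push Not at h'; exact hz h'
    rw [hg.1 z this] at h
    exact hz h
  · intro h
    by_contra hz
    have : (g z).2 ≤ 0 ∨ 1 ≤ (g z).2 := by
      by_contra h'; push Not at h'; exact hz h'
    have h2 := hg.symm.1 _ this
    rw [Homeomorph.symm_apply_apply] at h2
    rw [← h2] at hz
    exact hz h

theorem exists_bound_periodic {f : E → E} (hf : Continuous f)
    (hp : ∀ z, f (z + e1) = f z + e1) (h0 : ∀ z : E, (z.2 ≤ 0 ∨ 1 ≤ z.2) → f z = z) :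
    ∃ C : ℝ, ∀ z, ‖f z - z‖ ≤ C := by
  have hK : IsCompact (Icc (0 : ℝ) 1 ×ˢ Icc (0 : ℝ) 1) := isCompact_Icc.prod isCompact_Icc
  obtain ⟨C, hC⟩ := hK.exists_bound_of_continuousOn (f := fun z : E => f z - z)
    (by fun_prop)
  refine ⟨C, fun z => ?_⟩
  by_cases hz : z.2 ≤ 0 ∨ 1 ≤ z.2
  · rw [h0 z hz, sub_self, norm_zero]
    exact (norm_nonneg _).trans (hC (0, 0) (by simp))
  · push Not at hz
    have h1 := hC (Int.fract z.1, z.2)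
      ⟨⟨Int.fract_nonneg _, (Int.fract_lt_one _).le⟩, ⟨hz.1.le, hz.2.le⟩⟩
    have h2 : z = (Int.fract z.1, z.2) + (((⌊z.1⌋ : ℤ) : ℝ), 0) := by
      ext <;> simp
    have h3 : f z - z = f (Int.fract z.1, z.2) - (Int.fract z.1, z.2) := by
      conv_lhs => rw [h2, equiv_zsmul hp]
      abel
    rw [h3]; exact h1

end Ann


namespace Ann
open Set Filter Topology

theorem mem_S_iff_of_fix {f : E → E} (hf : Function.Injective f)
    (h0 : ∀ z : E, (z.2 ≤ 0 ∨ 1 ≤ z.2) → f z = z) (z : E) : f z ∈ S ↔ z ∈ S := by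
  by_cases hz : z.2 ≤ 0 ∨ 1 ≤ z.2
  · rw [h0 z hz]
  · have h1 : ¬ ((f z).2 ≤ 0 ∨ 1 ≤ (f z).2) := by
      intro h
      have := hf (h0 _ h)
      rw [this] at h; exact hz h
    push Not at hz h1
    exact ⟨fun _ => ⟨hz.1.le, hz.2.le⟩, fun _ => ⟨h1.1.le, h1.2.le⟩⟩

/-- open cell -/
def cell (s : ℝ) : Set E := {z | (s < z.1 ∧ z.1 < s + 1) ∧ (0 < z.2 ∧ z.2 < 1)}

/-- floor translation -/
noncomputable def fl (s : ℝ) (z : E) : E := (((⌊z.1 - s⌋ : ℤ) : ℝ), 0)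

/-- periodization -/
noncomputable def perF (s : ℝ) (a : E → E) (z : E) : E := fl s z + a (z - fl s z)

theorem fl_eq_zero {s : ℝ} {z : E} (h : s ≤ z.1) (h' : z.1 < s + 1) : fl s z = 0 := by
  have : ⌊z.1 - s⌋ = 0 := by
    rw [Int.floor_eq_zero_iff]; constructor <;> linarith
  simp [fl, this]

theorem fl_add {s : ℝ} {z : E} (n : ℤ) : fl s (((n : ℝ), 0) + z) = ((n : ℝ), 0) + fl s z := by
  have : (n : ℝ) + z.1 - s = z.1 - s + n := by ring
  ext <;> simp [fl, this]
  ring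

theorem sub_fl_mem (s : ℝ) (z : E) : s ≤ (z - fl s z).1 ∧ (z - fl s z).1 < s + 1 := by
  have h1 := Int.floor_le (z.1 - s)
  have h2 := Int.lt_floor_add_one (z.1 - s)
  simp only [fl, Prod.fst_sub]
  constructor <;> linarith

theorem perF_comp {s : ℝ} {a b : E → E} (hb : ∀ z : E, s ≤ z.1 → z.1 < s + 1 →
    s ≤ (b z).1 ∧ (b z).1 < s + 1) (z : E) :
    perF s a (perF s b z) = perF s (fun w => a (b w)) z := by
  have h1 := sub_fl_mem s z
  have h2 := hb _ h1.1 h1.2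
  have h3 : fl s (perF s b z) = fl s z := by
    have := fl_add (s := s) (z := b (z - fl s z)) ⌊z.1 - s⌋
    rw [fl_eq_zero h2.1 h2.2, add_zero] at this
    exact this
  unfold perF at *
  rw [h3, add_sub_cancel_left]

theorem perF_id (s : ℝ) (z : E) : perF s (fun w => w) z = z := by simp [perF]

theorem perF_add_e1 (s : ℝ) (a : E → E) (z : E) : perF s a (z + e1) = perF s a z + e1 := by
  have h : fl s (z + e1) = e1 + fl s z := by
    have := fl_add (s := s) (z := z) 1
    rw [add_comm]
    simpa [e1] using this
  unfold perF
  rw [h, show z + e1 - (e1 + fl s z) = z - fl s z by abel]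
  abel

theorem stay_band {s : ℝ} {a : E → E} (ha : Function.Injective a)
    (h0 : ∀ z : E, (z.1 ≤ s ∨ s + 1 ≤ z.1) → a z = z) (z : E) (h1 : s ≤ z.1) (h2 : z.1 < s + 1) :
    s ≤ (a z).1 ∧ (a z).1 < s + 1 := by
  rcases h1.eq_or_lt with h | h
  · rw [h0 z (Or.inl h.ge)]; exact ⟨h1, h2⟩
  · by_contra hh
    have : (a z).1 ≤ s ∨ s + 1 ≤ (a z).1 := by
      by_contra h'; push Not at h'; exact hh ⟨h'.1.le, h'.2⟩
    have h3 := ha (h0 _ this)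
    rw [h3] at hh; exact hh ⟨h1, h2⟩

theorem perF_bij {s : ℝ} {a : E → E} (ha : Function.Bijective a)
    (h0 : ∀ z : E, (z.1 ≤ s ∨ s + 1 ≤ z.1) → a z = z) : Function.Bijective (perF s a) := by
  let e := Equiv.ofBijective a ha
  have hb : ∀ z : E, (z.1 ≤ s ∨ s + 1 ≤ z.1) → e.symm z = z := by
    intro z hz
    rw [Equiv.symm_apply_eq]; exact (h0 z hz).symm
  rw [Function.bijective_iff_has_inverse]
  refine ⟨perF s e.symm, fun z => ?_, fun z => ?_⟩
  · rw [perF_comp (stay_band ha.1 h0)]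
    rw [show (fun w => e.symm (a w)) = fun w => w from funext fun w => e.symm_apply_apply w]
    exact perF_id s z
  · rw [perF_comp (stay_band e.symm.injective hb)]
    rw [show (fun w => a (e.symm w)) = fun w => w from funext fun w => e.apply_symm_apply w]
    exact perF_id s z

/-- Alexander displacement -/
noncomputable def dd (χ : E → E) (c : E) (τ : ℝ) (w : E) : E :=
  τ • (χ (c + τ⁻¹ • (w - c)) - (c + τ⁻¹ • (w - c)))

theorem dd_continuous {χ : E → E} (hχ : Continuous χ) (c : E) (C : ℝ)
    (hC : ∀ z, ‖χ z - z‖ ≤ C) : Continuous (fun q : ℝ × E => dd χ c q.1 q.2) := by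
  rw [continuous_iff_continuousAt]
  rintro ⟨τ, w⟩
  by_cases hτ : τ = 0
  · subst hτ
    have h0 : dd χ c (0 : ℝ) w = 0 := by simp [dd]
    rw [ContinuousAt]
    simp only [h0]
    refine squeeze_zero_norm (a := fun q : ℝ × E => |q.1| * C) (fun q => ?_) ?_
    · rw [dd, norm_smul, Real.norm_eq_abs]
      exact mul_le_mul_of_nonneg_left (hC _) (abs_nonneg _)
    · have : Continuous (fun q : ℝ × E => |q.1| * C) := by fun_prop
      have h := this.tendsto (0, w)
      simpa using h
  · unfold dd
    have h1 : ContinuousAt (fun q : ℝ × E => c + q.1⁻¹ • (q.2 - c)) (τ, w) := by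
      have h2 : ContinuousAt (fun q : ℝ × E => q.1⁻¹) (τ, w) :=
        ContinuousAt.inv₀ continuousAt_fst hτ
      have h3 : ContinuousAt (fun q : ℝ × E => q.2 - c) (τ, w) := by fun_prop
      exact continuousAt_const.add (h2.smul h3)
    exact continuousAt_fst.smul ((hχ.continuousAt.comp h1).sub h1)

theorem dd_bij {χ : E → E} (hχ : Function.Bijective χ) (c : E) (τ : ℝ) :
    Function.Bijective (fun w => w + dd χ c τ w) := by
  by_cases hτ : τ = 0
  · subst hτ
    have : (fun w => w + dd χ c 0 w) = id := by funext w; simp [dd]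
    rw [this]; exact Function.bijective_id
  · have h1 : (fun w => w + dd χ c τ w)
        = (fun w => c + τ • (w - c)) ∘ χ ∘ (fun w => c + τ⁻¹ • (w - c)) := by
      funext w
      simp only [dd, Function.comp, smul_sub, smul_add, smul_inv_smul₀ hτ]
      abel
    have h2 : ∀ r : ℝ, r ≠ 0 → Function.Bijective (fun w : E => c + r • (w - c)) := by
      intro r hr
      rw [Function.bijective_iff_has_inverse]
      refine ⟨fun w => c + r⁻¹ • (w - c), fun w => ?_, fun w => ?_⟩
      · simp [smul_smul, inv_mul_cancel₀ hr]
      · simp [smul_smul, mul_inv_cancel₀ hr]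
    rw [h1]
    exact (h2 τ hτ).comp (hχ.comp (h2 _ (inv_ne_zero hτ)))

theorem dd_zero {χ : E → E} {s : ℝ} (h0 : ∀ z, z ∉ cell s → χ z = z) {τ : ℝ} (h : 0 ≤ τ)
    (h' : τ ≤ 1) {w : E} (hw : w ∉ cell s) : dd χ (s + 1 / 2, 1 / 2) τ w = 0 := by
  rcases h.eq_or_lt with h | h
  · simp [dd, ← h]
  · unfold dd
    rw [h0, sub_self, smul_zero]
    intro hc
    apply hw
    simp only [cell, mem_ofPred_eq, Prod.fst_add, Prod.snd_add, Prod.smul_fst, Prod.smul_snd,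
      smul_eq_mul, Prod.fst_sub, Prod.snd_sub] at hc ⊢
    obtain ⟨⟨h1, h2⟩, h3, h4⟩ := hc
    have k : ∀ x : ℝ, x = τ * (τ⁻¹ * x) := fun x => by field_simp
    have k1 := k (w.1 - (s + 1 / 2))
    have k2 := k (w.2 - 1 / 2)
    set p := τ⁻¹ * (w.1 - (s + 1 / 2))
    set q := τ⁻¹ * (w.2 - 1 / 2)
    refine ⟨⟨?_, ?_⟩, ?_, ?_⟩ <;> nlinarith

theorem bdd_of_cell {χ : E → E} (hχ : Continuous χ) {s : ℝ} (h0 : ∀ z, z ∉ cell s → χ z = z) :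
    ∃ C, ∀ z, ‖χ z - z‖ ≤ C := by
  have hK : IsCompact (Icc s (s + 1) ×ˢ Icc (0 : ℝ) 1) := isCompact_Icc.prod isCompact_Icc
  obtain ⟨C, hC⟩ := hK.exists_bound_of_continuousOn (f := fun z : E => χ z - z) (by fun_prop)
  refine ⟨C, fun z => ?_⟩
  by_cases hz : z ∈ cell s
  · exact hC z ⟨⟨hz.1.1.le, hz.1.2.le⟩, ⟨hz.2.1.le, hz.2.2.le⟩⟩
  · rw [h0 z hz, sub_self, norm_zero]
    exact (norm_nonneg _).trans (hC (s, 0) (by simp))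

theorem perF_eq_disp (s : ℝ) (a d : E → E) (h : ∀ z, a z = z + d z) (z : E) :
    perF s a z = z + d (s + Int.fract (z.1 - s), z.2) := by
  have h1 : z - fl s z = (s + Int.fract (z.1 - s), z.2) := by
    ext
    · simp only [fl, Prod.fst_sub, Int.fract]; ring
    · simp [fl]
  unfold perF
  rw [h, h1, ← h1]; abel

/-- Alexander trick plus periodization. -/
theorem per_exists {s : ℝ} (χ : E ≃ₜ E) (h0 : ∀ z, z ∉ cell s → χ z = z) :
    ∃ Ψ : E ≃ₜ E, InG Ψ ∧ Iso Ψ ∧ ∀ z : E, s ≤ z.1 → z.1 < s + 1 → Ψ z = χ z := by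
  obtain ⟨C, hC⟩ := bdd_of_cell χ.continuous h0
  set c : E := (s + 1 / 2, 1 / 2) with hc
  let cl : ℝ → ℝ := fun t => max 0 (min 1 (1 - t))
  have cl0 : ∀ t, 0 ≤ cl t := fun t => le_max_left _ _
  have cl1 : ∀ t, cl t ≤ 1 := fun t => max_le (by norm_num) (min_le_left _ _)
  have clc : Continuous cl := by fun_prop
  let a : ℝ → E → E := fun t w => w + dd χ c (cl t) w
  have ab : ∀ t, Function.Bijective (a t) := fun t => dd_bij χ.bijective c _
  have az : ∀ t z, z ∉ cell s → a t z = z := by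
    intro t z hz
    simp only [a, c, dd_zero h0 (cl0 t) (cl1 t) hz, add_zero]
  have ax : ∀ t (z : E), (z.1 ≤ s ∨ s + 1 ≤ z.1) → a t z = z := by
    intro t z hz
    refine az t z fun h => ?_
    rcases hz with hz | hz
    · exact absurd h.1.1 (not_lt.mpr hz)
    · exact absurd h.1.2 (not_lt.mpr hz)
  let F : ℝ → E → E := fun t => perF s (a t)
  have Feq : ∀ t z, F t z = z + dd χ c (cl t) (s + Int.fract (z.1 - s), z.2) := fun t z =>
    perF_eq_disp s (a t) (dd χ c (cl t)) (fun _ => rfl) z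
  have Fc : Continuous (fun q : ℝ × E => F q.1 q.2) := by
    simp only [Feq]
    refine continuous_snd.add ?_
    refine ContinuousOn.comp_fract (β := ℝ × E) (α := ℝ) (s := fun q => q.2.1 - s)
      (f := fun q x => dd χ c (cl q.1) (s + x, q.2.2)) ?_ (by fun_prop) ?_
    · apply Continuous.continuousOn
      exact (dd_continuous χ.continuous c C hC).comp
        (g := fun q : ℝ × E => dd χ c q.1 q.2)
        (f := fun q : (ℝ × E) × ℝ => (cl q.1.1, (s + q.2, q.1.2.2))) (by fun_prop)
    · intro q
      rw [dd_zero h0 (cl0 _) (cl1 _), dd_zero h0 (cl0 _) (cl1 _)]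
      · intro h; have := h.1.2; simp at this
      · intro h; have := h.1.1; simp at this
  have Fz : ∀ t (z : E), (z.2 ≤ 0 ∨ 1 ≤ z.2) → F t z = z := by
    intro t z hz
    simp only [F, perF]
    rw [az]
    · abel
    · intro h
      have h2 := h.2
      simp only [fl, Prod.snd_sub, sub_zero] at h2
      rcases hz with hz | hz
      · exact absurd h2.1 (not_lt.mpr hz)
      · exact absurd h2.2 (not_lt.mpr hz)
  have Fb : ∀ t, Function.Bijective (F t) := fun t => perF_bij (ab t) (ax t)
  have Fe : ∀ t z, F t (z + e1) = F t z + e1 := fun t z => perF_add_e1 s (a t) z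
  have F0c : Continuous (F 0) := Fc.comp (f := fun z : E => ((0 : ℝ), z)) (by fun_prop)
  obtain ⟨C', hC'⟩ := exists_bound_periodic F0c (Fe 0) (Fz 0)
  refine ⟨mkH (F 0) F0c (Fb 0) C' hC', ⟨fun z hz => Fz 0 z hz, fun z => Fe 0 z⟩,
    ⟨F, Fc, fun z => rfl, fun z => ?_, fun t ht => ⟨Fb t, Fe t, mem_S_iff_of_fix (Fb t).1 (Fz t)⟩⟩,
    fun z h1 h2 => ?_⟩
  · rw [Feq]; simp [cl, dd]
  · simp only [mkH_apply, F, perF, fl_eq_zero h1 h2, a, cl, dd]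
    simp

theorem conn_gt {X : Type} [TopologicalSpace X] {D : Set X} (hD : IsPreconnected D) {f : X → ℝ}
    (hf : ContinuousOn f D) {s : ℝ} (hs : ∀ z ∈ D, f z ≠ s) {p : X} (hp : p ∈ D) (hps : s < f p)
    {z : X} (hz : z ∈ D) : s < f z := by
  by_contra h
  obtain ⟨w, hw, hw'⟩ := (hD.image f hf).ordConnected.out ⟨z, hz, rfl⟩ ⟨p, hp, rfl⟩
    ⟨not_lt.mp h, hps.le⟩
  exact hs w hw hw'

theorem conn_lt {X : Type} [TopologicalSpace X] {D : Set X} (hD : IsPreconnected D) {f : X → ℝ}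
    (hf : ContinuousOn f D) {s : ℝ} (hs : ∀ z ∈ D, f z ≠ s) {p : X} (hp : p ∈ D) (hps : f p < s)
    {z : X} (hz : z ∈ D) : f z < s := by
  by_contra h
  obtain ⟨w, hw, hw'⟩ := (hD.image f hf).ordConnected.out ⟨p, hp, rfl⟩ ⟨z, hz, rfl⟩
    ⟨hps.le, not_lt.mp h⟩
  exact hs w hw hw'

theorem conv_gt (s : ℝ) : IsPreconnected {z : E | s < z.1} :=
  (convex_halfSpace_gt (IsLinearMap.mk (fun _ _ => rfl) (fun _ _ => rfl)) s).isPreconnected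

theorem conv_ge (s : ℝ) : IsPreconnected {z : E | s ≤ z.1} :=
  (convex_halfSpace_ge (IsLinearMap.mk (fun _ _ => rfl) (fun _ _ => rfl)) s).isPreconnected

theorem conv_lt (s : ℝ) : IsPreconnected {z : E | z.1 < s} :=
  (convex_halfSpace_lt (IsLinearMap.mk (fun _ _ => rfl) (fun _ _ => rfl)) s).isPreconnected

theorem conv_le (s : ℝ) : IsPreconnected {z : E | z.1 ≤ s} :=
  (convex_halfSpace_le (IsLinearMap.mk (fun _ _ => rfl) (fun _ _ => rfl)) s).isPreconnected

theorem fix_gt {g : E ≃ₜ E} (hg : InG g) {s : ℝ} (hs : ∀ y, g (s, y) = (s, y)) {z : E}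
    (hz : s < z.1) : s < (g z).1 := by
  refine conn_gt (conv_gt s) (f := fun z => (g z).1) (by fun_prop) (fun w hw h => ?_)
    (p := (s + 1, 0)) (by simp) (by rw [hg.1 _ (by simp)]; simp) hz
  have h1 : g (g w) = g w := by
    have := hs (g w).2
    rwa [show ((s : ℝ), (g w).2) = g w from Prod.ext h.symm rfl] at this
  have h2 := g.injective h1
  rw [h2] at h
  simp only [mem_ofPred_eq] at hw
  linarith

theorem fix_lt {g : E ≃ₜ E} (hg : InG g) {s : ℝ} (hs : ∀ y, g (s, y) = (s, y)) {z : E}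
    (hz : z.1 < s) : (g z).1 < s := by
  refine conn_lt (conv_lt s) (f := fun z => (g z).1) (by fun_prop) (fun w hw h => ?_)
    (p := (s - 1, 0)) (by simp) (by rw [hg.1 _ (by simp)]; simp) hz
  have h1 : g (g w) = g w := by
    have := hs (g w).2
    rwa [show ((s : ℝ), (g w).2) = g w from Prod.ext h.symm rfl] at this
  have h2 := g.injective h1
  rw [h2] at h
  simp only [mem_ofPred_eq] at hw
  linarith

/-- restriction of a map to the cell by clamping -/
noncomputable def clampF (s : ℝ) (g : E → E) (z : E) : E :=
  z + (g (max s (min (s + 1) z.1), z.2) - (max s (min (s + 1) z.1), z.2))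

theorem clampF_in {s : ℝ} {g : E → E} {z : E} (h1 : s ≤ z.1) (h2 : z.1 ≤ s + 1) :
    clampF s g z = g z := by
  unfold clampF
  rw [min_eq_right h2, max_eq_right h1]; abel

theorem clampF_out {s : ℝ} {g : E → E} (hs : ∀ y, g (s, y) = (s, y))
    (hs' : ∀ y, g (s + 1, y) = (s + 1, y)) {z : E} (h : z.1 < s ∨ s + 1 < z.1) :
    clampF s g z = z := by
  unfold clampF
  rcases h with h | h
  · rw [min_eq_right (by linarith), max_eq_left h.le, hs]; simp
  · rw [min_eq_left h.le, max_eq_right (by linarith), hs']; simp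

theorem clampF_inv {s : ℝ} {g f : E → E} (hs : ∀ y, g (s, y) = (s, y))
    (hs' : ∀ y, g (s + 1, y) = (s + 1, y)) (hf : ∀ y, f (s, y) = (s, y))
    (hf' : ∀ y, f (s + 1, y) = (s + 1, y)) (hfg : ∀ z, f (g z) = z)
    (hb : ∀ z : E, s ≤ z.1 → z.1 ≤ s + 1 → s ≤ (g z).1 ∧ (g z).1 ≤ s + 1) (z : E) :
    clampF s f (clampF s g z) = z := by
  by_cases h : z.1 < s ∨ s + 1 < z.1
  · rw [clampF_out hs hs' h, clampF_out hf hf' h]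
  · push Not at h
    have h2 := hb z h.1 h.2
    rw [clampF_in h.1 h.2, clampF_in h2.1 h2.2, hfg]

theorem iso_of_fix {g : E ≃ₜ E} (hg : InG g) (s : ℝ) (hs : ∀ y, g (s, y) = (s, y)) : Iso g := by
  have aux : ∀ f : E ≃ₜ E, InG f → (∀ y, f (s, y) = (s, y)) →
      (∀ y, f (s + 1, y) = (s + 1, y)) ∧
      ∀ z : E, s ≤ z.1 → z.1 ≤ s + 1 → s ≤ (f z).1 ∧ (f z).1 ≤ s + 1 := by
    intro f hf hs
    have h1 : ∀ y, f (s + 1, y) = (s + 1, y) := by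
      intro y
      have := hf.2 (s, y)
      rw [hs] at this
      simpa [e1] using this
    refine ⟨h1, fun z h2 h3 => ⟨?_, ?_⟩⟩
    · rcases h2.eq_or_lt with h | h
      · have := hs z.2
        rw [show ((s : ℝ), z.2) = z from Prod.ext h rfl] at this
        rw [this]; exact h2
      · exact (fix_gt hf hs h).le
    · rcases h3.eq_or_lt with h | h
      · have := h1 z.2
        rw [show ((s + 1 : ℝ), z.2) = z from Prod.ext h.symm rfl] at this
        rw [this]; exact h3
      · exact (fix_lt hf h1 h).le
  have hs2 : ∀ y, g.symm (s, y) = (s, y) := fun y => by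
    rw [Homeomorph.symm_apply_eq, hs]
  obtain ⟨a1, a2⟩ := aux g hg hs
  obtain ⟨b1, b2⟩ := aux g.symm hg.symm hs2
  let χ : E ≃ₜ E :=
    { toFun := clampF s g
      invFun := clampF s g.symm
      left_inv := clampF_inv hs a1 hs2 b1 (fun z => g.symm_apply_apply z) a2
      right_inv := clampF_inv hs2 b1 hs a1 (fun z => g.apply_symm_apply z) b2
      continuous_toFun := by unfold clampF; fun_prop
      continuous_invFun := by unfold clampF; fun_prop }
  have χz : ∀ z, z ∉ cell s → χ z = z := by
    intro z hz
    change clampF s g z = z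
    by_cases h : z.1 < s ∨ s + 1 < z.1
    · exact clampF_out hs a1 h
    · push Not at h
      rw [clampF_in h.1 h.2]
      by_cases h3 : z.2 ≤ 0 ∨ 1 ≤ z.2
      · exact hg.1 z h3
      · push Not at h3
        rcases h.1.eq_or_lt with h4 | h4
        · have := hs z.2
          rwa [show ((s : ℝ), z.2) = z from Prod.ext h4 rfl] at this
        rcases h.2.eq_or_lt with h5 | h5
        · have := a1 z.2
          rwa [show ((s + 1 : ℝ), z.2) = z from Prod.ext h5.symm rfl] at this
        exact absurd ⟨⟨h4, h5⟩, h3⟩ hz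
  obtain ⟨Ψ, hΨ, hiso, hΨχ⟩ := per_exists χ χz
  refine hiso.congr fun z => ?_
  have h1 := sub_fl_mem s z
  have h2 : Ψ (z - fl s z) = g (z - fl s z) := by
    rw [hΨχ _ h1.1 h1.2]
    exact clampF_in h1.1 h1.2.le
  have h3 := equiv_zsmul hΨ.2 ⌊z.1 - s⌋ (z - fl s z)
  have h4 := equiv_zsmul hg.2 ⌊z.1 - s⌋ (z - fl s z)
  rw [h2, ← h4] at h3
  change Ψ (z - fl s z + fl s z) = g (z - fl s z + fl s z) at h3
  rwa [sub_add_cancel] at h3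

end Ann


namespace Ann
open Set Filter Topology

section Half
variable (σ x0 : ℝ)

/-- scaling factor upstairs -/
noncomputable def lam (x : ℝ) : ℝ := 1 / (1 + max 0 (x0 - x))
/-- scaling factor downstairs -/
noncomputable def mu (x : ℝ) : ℝ := min 1 (max 0 ((x - σ) / (x0 - σ)))
/-- the plane squeezed to a half plane -/
noncomputable def Ez (z : E) : E :=
  (σ + lam x0 z.1 * (x0 - σ) + max 0 (z.1 - x0), 1 / 2 + lam x0 z.1 * (z.2 - 1 / 2))
/-- inverse of the squeezing -/
noncomputable def Dz (z : E) : E :=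
  (max z.1 x0 + 1 - 1 / mu σ x0 z.1, 1 / 2 + (z.2 - 1 / 2) / mu σ x0 z.1)

variable {σ x0}

theorem lam_pos (x : ℝ) : 0 < lam x0 x := by
  unfold lam
  have := le_max_left 0 (x0 - x)
  positivity

theorem lam_cont : Continuous (lam x0) := by
  unfold lam
  refine continuous_const.div (by fun_prop) fun x => ?_
  have := le_max_left 0 (x0 - x)
  positivity

theorem mu_cont : Continuous (mu σ x0) := by
  unfold mu; fun_prop

theorem Ez_cont : Continuous (Ez σ x0) := by
  have := lam_cont (x0 := x0)
  unfold Ez; fun_prop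

theorem mu_pos (h : σ < x0) {x : ℝ} (hx : σ < x) : 0 < mu σ x0 x := by
  unfold mu
  have : 0 < (x - σ) / (x0 - σ) := div_pos (by linarith) (by linarith)
  exact lt_min one_pos (lt_max_of_lt_right this)

theorem mu_eq_one (h : σ < x0) {x : ℝ} (hx : x0 ≤ x) : mu σ x0 x = 1 := by
  unfold mu
  have : 1 ≤ (x - σ) / (x0 - σ) := by rw [le_div_iff₀ (by linarith)]; linarith
  rw [min_eq_left (this.trans (le_max_right _ _))]

theorem mu_eq (h : σ < x0) {x : ℝ} (h1 : σ ≤ x) (hx : x ≤ x0) :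
    mu σ x0 x = (x - σ) / (x0 - σ) := by
  unfold mu
  have h2 : (x - σ) / (x0 - σ) ≤ 1 := by rw [div_le_one (by linarith)]; linarith
  have h3 : 0 ≤ (x - σ) / (x0 - σ) := div_nonneg (by linarith) (by linarith)
  rw [max_eq_right h3, min_eq_right h2]

theorem Ez_gt (h : σ < x0) (z : E) : σ < (Ez σ x0 z).1 := by
  simp only [Ez]
  have h1 := mul_pos (lam_pos (x0 := x0) z.1) (sub_pos.mpr h)
  have h2 := le_max_left 0 (z.1 - x0)
  linarith

theorem mu_Ez (h : σ < x0) (z : E) : mu σ x0 (Ez σ x0 z).1 = lam x0 z.1 := by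
  rcases le_total z.1 x0 with hz | hz
  · have h1 : (Ez σ x0 z).1 = σ + lam x0 z.1 * (x0 - σ) := by
      simp only [Ez]; rw [max_eq_left (by linarith)]; ring
    have h2 : lam x0 z.1 ≤ 1 := by
      unfold lam
      rw [div_le_one (by have := le_max_left 0 (x0 - z.1); positivity)]
      have := le_max_left 0 (x0 - z.1); linarith
    have h3 := lam_pos (x0 := x0) z.1
    rw [h1, mu_eq h (by nlinarith) (by nlinarith)]
    have : x0 - σ ≠ 0 := by linarith
    field_simp; ring
  · have hl : lam x0 z.1 = 1 := by
      unfold lam; rw [max_eq_left (by linarith)]; norm_num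
    rw [hl]
    apply mu_eq_one h
    simp only [Ez]
    rw [hl, max_eq_right (by linarith)]; linarith

theorem Dz_Ez (h : σ < x0) (z : E) : Dz σ x0 (Ez σ x0 z) = z := by
  have hp := lam_pos (x0 := x0) z.1
  unfold Dz
  rw [mu_Ez h]
  ext
  · simp only [Ez]
    rcases le_total z.1 x0 with hz | hz
    · have h2 : lam x0 z.1 ≤ 1 := by
        unfold lam
        rw [div_le_one (by have := le_max_left 0 (x0 - z.1); positivity)]
        have := le_max_left 0 (x0 - z.1); linarith
      rw [max_eq_left (b := z.1 - x0) (by linarith), max_eq_right (by nlinarith)]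
      unfold lam
      rw [max_eq_right (by linarith), one_div_one_div]; ring
    · have hl : lam x0 z.1 = 1 := by
        unfold lam; rw [max_eq_left (by linarith)]; norm_num
      rw [hl, max_eq_right (b := z.1 - x0) (by linarith), max_eq_left (by linarith)]
      ring
  · simp only [Ez]
    field_simp; ring

theorem Ez_Dz (h : σ < x0) {z : E} (hz : σ < z.1) : Ez σ x0 (Dz σ x0 z) = z := by
  have hp := mu_pos h hz
  have hl : lam x0 (Dz σ x0 z).1 = mu σ x0 z.1 := by
    rcases le_total z.1 x0 with h1 | h1
    · have h2 : mu σ x0 z.1 ≤ 1 := by unfold mu; exact min_le_left _ _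
      have h3 : 1 ≤ 1 / mu σ x0 z.1 := by rw [le_div_iff₀ hp]; linarith
      simp only [Dz, lam]
      rw [max_eq_right h1, max_eq_right (by linarith)]
      rw [show 1 + (x0 - (x0 + 1 - 1 / mu σ x0 z.1)) = 1 / mu σ x0 z.1 by ring, one_div_one_div]
    · rw [mu_eq_one h h1]
      simp only [Dz, lam]
      rw [mu_eq_one h h1, max_eq_left h1, max_eq_left (by linarith)]; norm_num
  unfold Ez
  rw [hl]
  ext
  · rcases le_total z.1 x0 with h1 | h1
    · have h2 : mu σ x0 z.1 ≤ 1 := by unfold mu; exact min_le_left _ _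
      have h3 : 1 ≤ 1 / mu σ x0 z.1 := by rw [le_div_iff₀ hp]; linarith
      simp only [Dz]
      rw [max_eq_right h1, max_eq_left (by linarith), mu_eq h hz.le h1]
      have : x0 - σ ≠ 0 := by linarith
      field_simp; ring
    · simp only [Dz]
      rw [mu_eq_one h h1, max_eq_left h1, max_eq_right (by linarith)]
      ring
  · simp only [Dz]
    field_simp; ring

theorem Dz_contAt (h : σ < x0) {z : E} (hz : σ < z.1) : ContinuousAt (Dz σ x0) z := by
  have h1 : ContinuousAt (fun z : E => mu σ x0 z.1) z :=
    (mu_cont.comp continuous_fst).continuousAt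
  have h0 := (mu_pos h hz).ne'
  unfold Dz
  have h2 : ContinuousAt (fun z : E => max z.1 x0 + 1 - 1 / mu σ x0 z.1) z :=
    ContinuousAt.sub (by fun_prop) (continuousAt_const.div h1 h0)
  have h3 : ContinuousAt (fun z : E => 1 / 2 + (z.2 - 1 / 2) / mu σ x0 z.1) z :=
    continuousAt_const.add (ContinuousAt.div (by fun_prop) h1 h0)
  exact h2.prodMk h3

variable (σ x0) in
/-- the squeezed copy of a map -/
noncomputable def Th (f : E → E) (z : E) : E :=
  open Classical in if σ < z.1 then Ez σ x0 (f (Dz σ x0 z)) else z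

theorem Th_inv (h : σ < x0) {f g : E → E} (hfg : ∀ z, f (g z) = z) (z : E) :
    Th σ x0 f (Th σ x0 g z) = z := by
  unfold Th
  by_cases hz : σ < z.1
  · rw [if_pos hz, if_pos (Ez_gt h _), Dz_Ez h, hfg, Ez_Dz h hz]
  · rw [if_neg hz, if_neg hz]

theorem lam_shift {x a C : ℝ} (ha : |a| ≤ C) : lam x0 (x + a) ≤ (1 + C) * lam x0 x := by
  unfold lam
  have h1 := le_max_left 0 (x0 - x)
  have h2 := le_max_left 0 (x0 - (x + a))
  have hC : 0 ≤ C := (abs_nonneg _).trans ha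
  rw [mul_one_div, div_le_div_iff₀ (by positivity) (by positivity)]
  have h3 : max 0 (x0 - x) ≤ max 0 (x0 - (x + a)) + C := by
    apply max_le (by positivity)
    have := le_max_right 0 (x0 - (x + a))
    have := (abs_le.mp ha).2
    have := (abs_le.mp ha).1
    linarith
  nlinarith

theorem Th_cont (h : σ < x0) {f : E → E} (hf : Continuous f)
    (h0 : ∀ z : E, (z.2 ≤ 0 ∨ 1 ≤ z.2) → f z = z) (hin : Function.Injective f) (C : ℝ)
    (hC : ∀ z, ‖f z - z‖ ≤ C) : Continuous (Th σ x0 f) := by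
  have hC0 : 0 ≤ C := (norm_nonneg _).trans (hC 0)
  rw [continuous_iff_continuousAt]
  intro z
  rcases lt_trichotomy σ z.1 with hz | hz | hz
  · have h1 : ∀ᶠ w : E in 𝓝 z, σ < w.1 := continuous_fst.continuousAt.eventually (lt_mem_nhds hz)
    have h2 : ContinuousAt (fun z => Ez σ x0 (f (Dz σ x0 z))) z :=
      Ez_cont.continuousAt.comp (hf.continuousAt.comp (Dz_contAt h hz))
    refine h2.congr ?_
    filter_upwards [h1] with w hw
    simp [Th, hw]
  · -- boundary line
    have hTz : Th σ x0 f z = z := by simp [Th, hz]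
    have key : ∀ᶠ w : E in 𝓝 z, ‖Th σ x0 f w - w‖ ≤ (x0 - σ + 1) * (2 + C) * mu σ x0 w.1 := by
      have hmu : Tendsto (fun w : E => mu σ x0 w.1) (𝓝 z) (𝓝 0) := by
        have h3 : Tendsto (fun w : E => mu σ x0 w.1) (𝓝 z) (𝓝 (mu σ x0 z.1)) :=
          ((mu_cont (σ := σ) (x0 := x0)).comp continuous_fst).tendsto z
        have h4 : mu σ x0 z.1 = 0 := by simp [mu, ← hz]
        rwa [h4] at h3
      have hsm : ∀ᶠ w : E in 𝓝 z, mu σ x0 w.1 < 1 / (1 + C) :=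
        hmu.eventually (gt_mem_nhds (by positivity))
      have hx : ∀ᶠ w : E in 𝓝 z, w.1 < x0 :=
        continuous_fst.continuousAt.eventually (gt_mem_nhds (by rw [← hz]; exact h))
      filter_upwards [hsm, hx] with w hw hwx
      have hmn : 0 ≤ mu σ x0 w.1 := le_min zero_le_one (le_max_left _ _)
      have hr : 0 ≤ (x0 - σ + 1) * (2 + C) * mu σ x0 w.1 :=
        mul_nonneg (mul_nonneg (by linarith) (by linarith)) hmn
      by_cases hws : σ < w.1
      · have hT : Th σ x0 f w = Ez σ x0 (f (Dz σ x0 w)) := by simp [Th, hws]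
        have hp := mu_pos h hws
        by_cases hD : (Dz σ x0 w).2 ≤ 0 ∨ 1 ≤ (Dz σ x0 w).2
        · rw [hT, h0 _ hD, Ez_Dz h hws, sub_self, norm_zero]; exact hr
        · set p := Dz σ x0 w with hpdef
          have hw2 : w = Ez σ x0 p := (Ez_Dz h hws).symm
          have hfp : ¬ ((f p).2 ≤ 0 ∨ 1 ≤ (f p).2) := by
            intro h'
            have := hin (h0 _ h')
            rw [this] at h'; exact hD h'
          push Not at hD hfp
          have hl : lam x0 p.1 = mu σ x0 w.1 := by rw [hw2, mu_Ez h]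
          have hdisp : |(f p).1 - p.1| ≤ C := by
            have h5 := hC p
            rw [Prod.norm_def] at h5
            exact (le_max_left _ _).trans h5
          have hl2 : lam x0 (f p).1 ≤ (1 + C) * lam x0 p.1 := by
            have := lam_shift (x0 := x0) (x := p.1) hdisp
            rwa [add_sub_cancel] at this
          have hpx : p.1 + C ≤ x0 := by
            simp only [hpdef, Dz]
            rw [max_eq_right hwx.le]
            have : 1 + C ≤ 1 / mu σ x0 w.1 := by
              rw [le_div_iff₀ hp]
              rw [lt_div_iff₀ (by positivity)] at hw
              linarith
            linarith
          have hfx : (f p).1 ≤ x0 := by have := (abs_le.mp hdisp).2; linarith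
          have hl0 := lam_pos (x0 := x0) p.1
          have hl1 := lam_pos (x0 := x0) (f p).1
          rw [hT, hw2, mu_Ez h]
          set a := lam x0 p.1
          set b := lam x0 (f p).1
          rw [Prod.norm_def]
          have hw0 : 0 < x0 - σ := by linarith
          refine max_le ?_ ?_
          · simp only [Prod.fst_sub, Ez]
            rw [max_eq_left (by linarith), max_eq_left (by linarith), Real.norm_eq_abs, abs_le]
            have e1 := mul_nonneg hw0.le hl0.le
            have e2 := mul_nonneg hw0.le hl1.le
            have e3 : (x0 - σ) * b ≤ (x0 - σ) * ((1 + C) * a) :=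
              mul_le_mul_of_nonneg_left hl2 hw0.le
            have e4 : 0 ≤ (2 + C) * a := by positivity
            have e5 : 0 ≤ (x0 - σ) * C * a := by positivity
            constructor <;> nlinarith
          · simp only [Prod.snd_sub, Ez]
            rw [Real.norm_eq_abs, abs_le]
            have e1 : |b * ((f p).2 - 1 / 2)| ≤ b := by
              rw [abs_mul, abs_of_pos hl1]
              have : |(f p).2 - 1 / 2| ≤ 1 := by rw [abs_le]; constructor <;> linarith
              nlinarith
            have e2 : |a * (p.2 - 1 / 2)| ≤ a := by
              rw [abs_mul, abs_of_pos hl0]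
              have : |p.2 - 1 / 2| ≤ 1 := by rw [abs_le]; constructor <;> linarith
              nlinarith
            have e3 := abs_le.mp e1
            have e4 := abs_le.mp e2
            have e5 : 0 ≤ (x0 - σ) * ((2 + C) * a) := by positivity
            constructor <;> nlinarith
      · rw [Th, if_neg hws, sub_self, norm_zero]; exact hr
    have hmu2 : Tendsto (fun w : E => (x0 - σ + 1) * (2 + C) * mu σ x0 w.1) (𝓝 z) (𝓝 0) := by
      have hc : Continuous (fun w : E => (x0 - σ + 1) * (2 + C) * mu σ x0 w.1) :=
        continuous_const.mul ((mu_cont (σ := σ) (x0 := x0)).comp continuous_fst)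
      have h3 := hc.tendsto z
      have h4 : mu σ x0 z.1 = 0 := by simp [mu, ← hz]
      simpa [h4] using h3
    have h5 := squeeze_zero_norm' key hmu2
    have h6 := h5.add (tendsto_id (α := E) (x := 𝓝 z))
    rw [ContinuousAt, hTz]
    simpa using h6
  · have h1 : ∀ᶠ w : E in 𝓝 z, w.1 < σ := continuous_fst.continuousAt.eventually (gt_mem_nhds hz)
    refine continuousAt_id.congr ?_
    filter_upwards [h1] with w hw
    simp [Th, not_lt.mpr hw.le]

end Half

theorem half_right {g : E ≃ₜ E} (hg : InG g) {σ σ2 s' : ℝ} (h : σ < σ2) (hs : σ2 ≤ s')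
    (hgt : ∀ z : E, s' ≤ z.1 → σ2 < (g.symm z).1) :
    ∃ Φ : E ≃ₜ E, (∀ z : E, z.1 ≤ σ → Φ z = g z) ∧ (∀ z : E, s' ≤ z.1 → Φ z = z) ∧
      ∀ z : E, (z.2 ≤ 0 ∨ 1 ≤ z.2) → Φ z = z := by
  obtain ⟨C, hC⟩ := exists_bound_periodic g.continuous hg.2 hg.1
  obtain ⟨C', hC'⟩ := exists_bound_periodic g.symm.continuous hg.symm.2 hg.symm.1
  let T : E ≃ₜ E :=
    { toFun := Th σ σ2 g.symm
      invFun := Th σ σ2 g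
      left_inv := Th_inv h (fun z => g.apply_symm_apply z)
      right_inv := Th_inv h (fun z => g.symm_apply_apply z)
      continuous_toFun := Th_cont h g.symm.continuous hg.symm.1 g.symm.injective C' hC'
      continuous_invFun := Th_cont h g.continuous hg.1 g.injective C hC }
  have lam1 : ∀ x, σ2 ≤ x → lam σ2 x = 1 := by
    intro x hx
    unfold lam; rw [max_eq_left (by linarith)]; norm_num
  have Eid : ∀ z : E, σ2 ≤ z.1 → Ez σ σ2 z = z := by
    intro z hz
    ext
    · simp only [Ez, lam1 _ hz]; rw [max_eq_right (by linarith)]; ring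
    · simp only [Ez, lam1 _ hz]; ring
  refine ⟨T.trans g, fun z hz => ?_, fun z hz => ?_, fun z hz => ?_⟩
  · change g (Th σ σ2 g.symm z) = g z
    rw [Th, if_neg (not_lt.mpr hz)]
  · change g (Th σ σ2 g.symm z) = z
    have hz2 : σ2 ≤ z.1 := hs.trans hz
    rw [Th, if_pos (by linarith)]
    have hD : Dz σ σ2 z = z := by
      conv_lhs => rw [← Eid z hz2]
      exact Dz_Ez h z
    rw [hD, Eid _ (hgt z hz).le, Homeomorph.apply_symm_apply]
  · change g (Th σ σ2 g.symm z) = z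
    have : Th σ σ2 g.symm z = z := by
      unfold Th
      split_ifs with hz1
      · rw [hg.symm.1, Ez_Dz h hz1]
        have hm := mu_pos h hz1
        have hm1 : mu σ σ2 z.1 ≤ 1 := min_le_left _ _
        simp only [Dz]
        rcases hz with hz | hz
        · left
          have : (z.2 - 1 / 2) / mu σ σ2 z.1 ≤ -1 / 2 := by
            rw [div_le_iff₀ hm]; nlinarith
          linarith
        · right
          have : 1 / 2 ≤ (z.2 - 1 / 2) / mu σ σ2 z.1 := by
            rw [le_div_iff₀ hm]; nlinarith
          linarith
      · rfl
    rw [this, hg.1 z hz]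

/-- reflection -/
def refl1 : E ≃ₜ E := (Homeomorph.neg ℝ).prodCongr (Homeomorph.refl ℝ)

theorem half_left {g : E ≃ₜ E} (hg : InG g) {σ σ1 s : ℝ} (h : σ1 < σ) (hs : s ≤ σ1)
    (hgt : ∀ z : E, z.1 ≤ s → (g.symm z).1 < σ1) :
    ∃ Φ : E ≃ₜ E, (∀ z : E, σ ≤ z.1 → Φ z = g z) ∧ (∀ z : E, z.1 ≤ s → Φ z = z) ∧
      ∀ z : E, (z.2 ≤ 0 ∨ 1 ≤ z.2) → Φ z = z := by
  have r1 : ∀ z : E, (refl1 z).1 = -z.1 := fun z => rfl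
  have r2 : ∀ z : E, (refl1 z).2 = z.2 := fun z => rfl
  have rr : ∀ z : E, refl1 (refl1 z) = z := fun z => by ext <;> simp [r1, r2]
  have rs : ∀ z : E, refl1.symm z = refl1 z := fun z => by
    rw [Homeomorph.symm_apply_eq, rr]
  let g' : E ≃ₜ E := (refl1.trans g).trans refl1
  have g'a : ∀ z, g' z = refl1 (g (refl1 z)) := fun z => rfl
  have g's : ∀ z, g'.symm z = refl1 (g.symm (refl1 z)) := fun z => by
    rw [Homeomorph.symm_apply_eq, g'a]; simp [rr]
  have hg' : InG g' := by
    refine ⟨fun z hz => ?_, fun z => ?_⟩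
    · rw [g'a, hg.1 _ (by rwa [r2]), rr]
    · rw [g'a, g'a]
      have h1 := hg.2 (refl1 (z + e1))
      have h2 : refl1 (z + e1) + e1 = refl1 z := by ext <;> simp [r1, r2]
      rw [h2] at h1
      rw [h1]
      ext <;> simp [r1, r2]
  obtain ⟨Φ, h1, h2, h3⟩ := half_right hg' (σ := -σ) (σ2 := -σ1) (s' := -s) (by linarith)
    (by linarith) (fun z hz => by
      rw [g's, r1]
      have := hgt (refl1 z) (by rw [r1]; linarith)
      linarith)
  refine ⟨(refl1.trans Φ).trans refl1, fun z hz => ?_, fun z hz => ?_, fun z hz => ?_⟩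
  · change refl1 (Φ (refl1 z)) = g z
    rw [h1 _ (by rw [r1]; linarith), g'a, rr, rr]
  · change refl1 (Φ (refl1 z)) = z
    rw [h2 _ (by rw [r1]; linarith), rr]
  · change refl1 (Φ (refl1 z)) = z
    rw [h3 _ (by rwa [r2]), rr]

/-- Step 2. -/
theorem iso_of_band {g : E ≃ₜ E} (hg : InG g) {s σ1 σ2 : ℝ} (h12 : σ1 < σ2)
    (hb : ∀ z : E, σ1 ≤ z.1 → z.1 ≤ σ2 → s < (g z).1 ∧ (g z).1 < s + 1) : Iso g := by
  have b1 := hb (σ1, 0) le_rfl h12.le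
  rw [hg.1 _ (by simp)] at b1
  have b2 := hb (σ2, 0) h12.le le_rfl
  rw [hg.1 _ (by simp)] at b2
  simp only at b1 b2
  have hr : ∀ z : E, s + 1 ≤ z.1 → σ2 < (g.symm z).1 := by
    intro z hz
    refine conn_gt (conv_ge (s + 1)) (f := fun z => (g.symm z).1) (by fun_prop) (fun w hw h => ?_)
      (p := (s + 1, 0)) (by simp) (by rw [hg.symm.1 _ (by simp)]; exact b2.2) hz
    have := (hb (g.symm w) (by rw [h]; exact h12.le) h.le).2
    rw [Homeomorph.apply_symm_apply] at this
    exact absurd this (not_lt.mpr hw)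
  have hl : ∀ z : E, z.1 ≤ s → (g.symm z).1 < σ1 := by
    intro z hz
    refine conn_lt (conv_le s) (f := fun z => (g.symm z).1) (by fun_prop) (fun w hw h => ?_)
      (p := (s, 0)) (by simp) (by rw [hg.symm.1 _ (by simp)]; exact b1.1) hz
    have := (hb (g.symm w) h.ge (by rw [h]; exact h12.le)).1
    rw [Homeomorph.apply_symm_apply] at this
    exact absurd this (not_lt.mpr hw)
  set σ := (σ1 + σ2) / 2 with hσ
  obtain ⟨Φr, r1, r2, r3⟩ := half_right hg (σ := σ) (by linarith) b2.2.le hr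
  obtain ⟨Φl, l1, l2, l3⟩ := half_left hg (σ := σ) (by linarith) b1.1.le hl
  let χ : E ≃ₜ E := (Φr.trans g.symm).trans Φl
  have χa : ∀ z, χ z = Φl (g.symm (Φr z)) := fun z => rfl
  have χz : ∀ z, z ∉ cell s → χ z = z := by
    intro z hz
    rw [χa]
    by_cases h1 : z.2 ≤ 0 ∨ 1 ≤ z.2
    · rw [r3 z h1, hg.symm.1 z h1, l3 z h1]
    by_cases h2 : z.1 ≤ s
    · rw [r1 z (by linarith), Homeomorph.symm_apply_apply, l2 z h2]
    by_cases h3 : s + 1 ≤ z.1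
    · rw [r2 z h3, l1 _ (by have := hr z h3; linarith), Homeomorph.apply_symm_apply]
    push Not at h1 h2 h3
    exact absurd ⟨⟨h2, h3⟩, h1⟩ hz
  obtain ⟨Ψ, hΨ, hiso, hΨχ⟩ := per_exists χ χz
  have hfix : ∀ y, (g.trans Ψ.symm) (σ, y) = (σ, y) := by
    intro y
    change Ψ.symm (g (σ, y)) = (σ, y)
    rw [Homeomorph.symm_apply_eq, hΨχ _ (by simp only; linarith) (by simp only; linarith), χa,
      r1 _ le_rfl, Homeomorph.symm_apply_apply, l1 _ le_rfl]
  have h2 := iso_of_fix (hg.trans hΨ.symm) σ hfix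
  refine (hiso.comp h2).congr fun z => ?_
  change Ψ (Ψ.symm (g z)) = g z
  rw [Homeomorph.apply_symm_apply]

end Ann


namespace Ann
open Set Filter Topology

/-- clamp to the unit interval -/
def cl01 (x : ℝ) : ℝ := max 0 (min 1 x)

theorem cl01_cont : Continuous cl01 := by unfold cl01; fun_prop

theorem cl01_of_le {x : ℝ} (h : x ≤ 0) : cl01 x = 0 := by
  unfold cl01; rw [min_eq_right (by linarith), max_eq_left h]
theorem cl01_of_ge {x : ℝ} (h : 1 ≤ x) : cl01 x = 1 := by
  unfold cl01; rw [min_eq_left h, max_eq_right (by norm_num)]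

theorem coe_one_eq_zero : ((1 : ℝ) : AddCircle (1 : ℝ)) = 0 := AddCircle.coe_period 1

/-- Step 3: a Hex type lemma. -/
theorem hex_joined {m : E → ℝ} (hm : Continuous m)
    (h0 : ∀ z : E, (z.2 ≤ 0 ∨ 1 ≤ z.2) → m z = z.1) (C : ℝ) (hC : ∀ z, |m z - z.1| ≤ C)
    {b b' : ℝ} (hb : b < b') :
    JoinedIn {z : E | b < m z ∧ m z < b'} ((b + b') / 2, 0) ((b + b') / 2, 1) := by
  by_contra hnot
  set O : Set E := {z : E | b < m z ∧ m z < b'} with hO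
  have hOo : IsOpen O := (isOpen_lt continuous_const hm).inter (isOpen_lt hm continuous_const)
  set p : E := ((b + b') / 2, 0) with hp
  set O1 : Set E := pathComponentIn O p with hO1
  have hO1o : IsOpen O1 := hOo.pathComponentIn p
  have hO1s : O1 ⊆ O := pathComponentIn_subset
  have seg : ∀ (y : ℝ), (y ≤ 0 ∨ 1 ≤ y) → ∀ x, b < x → x < b' →
      JoinedIn O ((b + b') / 2, y) (x, y) := by
    intro y hy x h1 h2
    have hc : Convex ℝ ((Ioo b b') ×ˢ ({y} : Set ℝ)) := (convex_Ioo b b').prod (convex_singleton y)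
    have hpc : IsPathConnected ((Ioo b b') ×ˢ ({y} : Set ℝ)) :=
      hc.isPathConnected ⟨(x, y), ⟨h1, h2⟩, rfl⟩
    have hj := hpc.joinedIn ((b + b') / 2, y) ⟨⟨by linarith, by linarith⟩, rfl⟩ (x, y)
      ⟨⟨h1, h2⟩, rfl⟩
    refine hj.mono ?_
    rintro ⟨u, v⟩ ⟨hu, hv⟩
    simp only [mem_singleton_iff] at hv
    subst hv
    simp only [hO, mem_ofPred_eq]
    rw [h0 _ hy]; exact hu
  let k : E → ℝ := fun z => cl01 ((m z - b) / (b' - b))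
  have hbb : 0 < b' - b := by linarith
  have hk : Continuous k := cl01_cont.comp (by fun_prop)
  have kz : ∀ z, m z ≤ b → k z = 0 := fun z hz =>
    cl01_of_le (div_nonpos_of_nonpos_of_nonneg (by linarith) hbb.le)
  have k1 : ∀ z, b' ≤ m z → k z = 1 := fun z hz =>
    cl01_of_ge (by rw [le_div_iff₀ hbb]; linarith)
  classical
  let f : E → AddCircle (1 : ℝ) := O1.piecewise (fun z => (k z : AddCircle (1 : ℝ))) (fun _ => 0)
  have φz : ∀ z, z ∉ O → (k z : AddCircle (1 : ℝ)) = 0 := by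
    intro z hz
    by_cases h1 : m z ≤ b
    · rw [kz z h1]; rfl
    · by_cases h2 : b' ≤ m z
      · rw [k1 z h2]; exact coe_one_eq_zero
      · push Not at h1 h2
        exact absurd ⟨h1, h2⟩ hz
  have hf : Continuous f := by
    refine Continuous.piecewise ?_ ((AddCircle.continuous_mk' 1).comp hk) continuous_const
    intro a ha
    apply φz
    intro haO
    have h1 : IsOpen (pathComponentIn O a) := hOo.pathComponentIn a
    have h2 : a ∈ pathComponentIn O a := mem_pathComponentIn_self haO
    obtain ⟨w, hw1, hw2⟩ := mem_closure_iff.mp ha.1 _ h1 h2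
    have h3 : a ∈ O1 := JoinedIn.trans hw2 (JoinedIn.symm hw1)
    exact ha.2 (by rwa [hO1o.interior_eq])
  have fz : ∀ z, z ∉ O → f z = 0 := by
    intro z hz
    have : z ∉ O1 := fun h => hz (hO1s h)
    simp [f, this]
  obtain ⟨θ, hθ, hθf⟩ := lift_circle 1 f hf
  have integ : ∀ z, f z = 0 → ∃ n : ℤ, θ z = n := by
    intro z hz
    have h1 : ((θ z : ℝ) : AddCircle (1 : ℝ)) = (0 : ℝ) := by rw [hθf, hz]; rfl
    obtain ⟨n, hn⟩ := coe_eq_int h1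
    exact ⟨n, by linarith⟩
  -- left and right
  have hC0 : 0 ≤ C := (abs_nonneg _).trans (hC 0)
  have hleft : θ (b - C, 0) = θ (b - C, 1) := by
    refine int_const (conv_le (b - C)) hθ.continuousOn (fun z hz => ?_) (x := (b - C, 0))
      (y := (b - C, 1)) (by simp) (by simp)
    apply integ; apply fz
    intro h
    have h1 := (abs_le.mp (hC z)).2
    have h2 := h.1
    simp only [mem_ofPred_eq] at hz
    linarith
  have hright : θ (b' + C, 0) = θ (b' + C, 1) := by
    refine int_const (conv_ge (b' + C)) hθ.continuousOn (fun z hz => ?_) (x := (b' + C, 0))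
      (y := (b' + C, 1)) (by simp) (by simp)
    apply integ; apply fz
    intro h
    have h1 := (abs_le.mp (hC z)).1
    have h2 := h.2
    simp only [mem_ofPred_eq] at hz
    linarith
  have htop : θ (b - C, 1) = θ (b' + C, 1) := by
    refine int_const (X := ℝ) isPreconnected_univ (f := fun x => θ (x, 1)) (by fun_prop)
      (fun x _ => ?_) (x := b - C) (y := b' + C) trivial trivial
    apply integ
    by_cases hx : (x, (1 : ℝ)) ∈ O
    · have : (x, (1 : ℝ)) ∉ O1 := by
        intro h1
        apply hnot
        simp only [hO, mem_ofPred_eq] at hx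
        rw [h0 _ (by simp)] at hx
        exact JoinedIn.trans h1 (seg 1 (Or.inr le_rfl) x hx.1 hx.2).symm
      simp [f, this]
    · exact fz _ hx
  have hbot : θ (b - C, 0) - k (b - C, 0) = θ (b' + C, 0) - k (b' + C, 0) := by
    refine int_const (X := ℝ) isPreconnected_univ (f := fun x => θ (x, 0) - k (x, 0))
      (by fun_prop) (fun x _ => ?_) (x := b - C) (y := b' + C) trivial trivial
    have h1 : ((θ (x, 0) : ℝ) : AddCircle (1 : ℝ)) = (k (x, 0) : ℝ) := by
      rw [hθf]
      by_cases hx : (x, (0 : ℝ)) ∈ O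
      · have : (x, (0 : ℝ)) ∈ O1 := by
          simp only [hO, mem_ofPred_eq] at hx
          rw [h0 _ (by simp)] at hx
          exact seg 0 (Or.inl le_rfl) x hx.1 hx.2
        simp [f, this]
      · rw [fz _ hx, φz _ hx]
    exact coe_eq_int h1
  rw [kz _ (by rw [h0 _ (by simp)]; simp [hC0]), k1 _ (by rw [h0 _ (by simp)]; simp [hC0])] at hbot
  linarith

/-- vertical clamp -/
def vcl (z : E) : E := (z.1, cl01 z.2)

theorem cl01_mem (x : ℝ) : 0 ≤ cl01 x ∧ cl01 x ≤ 1 :=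
  ⟨le_max_left _ _, max_le zero_le_one (min_le_left _ _)⟩

theorem cl01_id {x : ℝ} (h : 0 ≤ x) (h' : x ≤ 1) : cl01 x = x := by
  unfold cl01; rw [min_eq_right h', max_eq_right h]

theorem hex_joined' {m : E → ℝ} (hm : Continuous m)
    (h0 : ∀ z : E, (z.2 ≤ 0 ∨ 1 ≤ z.2) → m z = z.1) (C : ℝ) (hC : ∀ z, |m z - z.1| ≤ C)
    {b b' : ℝ} (hb : b < b') :
    JoinedIn ({z : E | b < m z ∧ m z < b'} ∩ S) ((b + b') / 2, 0) ((b + b') / 2, 1) := by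
  obtain ⟨γ, hγ⟩ := hex_joined hm h0 C hC hb
  have hv : Continuous vcl := by
    unfold vcl
    exact continuous_fst.prodMk (cl01_cont.comp continuous_snd)
  have hmv : ∀ z, m (vcl z) = m z := by
    intro z
    by_cases h1 : z.2 ≤ 0
    · have : vcl z = (z.1, 0) := by simp [vcl, cl01_of_le h1]
      rw [this, h0 _ (by simp), h0 z (Or.inl h1)]
    by_cases h2 : 1 ≤ z.2
    · have : vcl z = (z.1, 1) := by simp [vcl, cl01_of_ge h2]
      rw [this, h0 _ (by simp), h0 z (Or.inr h2)]
    push Not at h1 h2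
    have : vcl z = z := by simp [vcl, cl01_id h1.le h2.le]
    rw [this]
  refine ⟨(γ.map hv).cast ?_ ?_, fun t => ?_⟩
  · simp [vcl, cl01_id]
  · simp [vcl, cl01_id]
  · change vcl (γ t) ∈ _
    refine ⟨?_, cl01_mem _⟩
    simp only [mem_ofPred_eq, hmv]
    exact hγ t

end Ann


namespace Ann
open Set Filter Topology

/-- conjugate extension -/
theorem conj_ext {U Ω Kc : Set E} (hU : IsOpen U) (hΩ : IsOpen Ω) (hK : IsCompact Kc) (hKU : Kc ⊆ U)
    {k j : E → E} (hk : ∀ z ∈ U, k z ∈ Ω) (hj : ∀ z ∈ Ω, j z ∈ U) (hjk : ∀ z ∈ U, j (k z) = z)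
    (hkj : ∀ z ∈ Ω, k (j z) = z) (kc : ContinuousOn k U) (jc : ContinuousOn j Ω)
    (ψ : E ≃ₜ E) (hψ : ∀ z, z ∉ Kc → ψ z = z) :
    ∃ Φ : E ≃ₜ E, (∀ z ∈ U, Φ (k z) = k (ψ z)) ∧ (∀ w, w ∉ k '' Kc → Φ w = w) := by
  classical
  let f : (E ≃ₜ E) → E → E := fun ψ w => if w ∈ Ω then k (ψ (j w)) else w
  have stay : ∀ ψ : E ≃ₜ E, (∀ z, z ∉ Kc → ψ z = z) → ∀ z ∈ U, ψ z ∈ U := by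
    intro ψ hψ z hz
    by_cases h : ψ z ∈ Kc
    · exact hKU h
    · have := ψ.injective (hψ _ h)
      rw [this]; exact hz
  have fid : ∀ ψ : E ≃ₜ E, (∀ z, z ∉ Kc → ψ z = z) → ∀ w, w ∉ k '' Kc → f ψ w = w := by
    intro ψ hψ w hw
    simp only [f]
    split_ifs with h
    · have h1 : j w ∉ Kc := fun h' => hw ⟨j w, h', hkj w h⟩
      rw [hψ _ h1, hkj w h]
    · rfl
  have fc : ∀ ψ : E ≃ₜ E, (∀ z, z ∉ Kc → ψ z = z) → Continuous (f ψ) := by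
    intro ψ hψ
    rw [continuous_iff_continuousAt]
    intro w
    by_cases h : w ∈ Ω
    · have h1 : ContinuousOn (fun w => k (ψ (j w))) Ω :=
        kc.comp (ψ.continuous.comp_continuousOn jc) fun z hz => stay ψ hψ _ (hj z hz)
      refine (h1.continuousAt (hΩ.mem_nhds h)).congr ?_
      filter_upwards [hΩ.mem_nhds h] with w' hw'
      simp [f, hw']
    · have hcl : IsClosed (k '' Kc) := (hK.image_of_continuousOn (kc.mono hKU)).isClosed
      have hw : w ∈ (k '' Kc)ᶜ := by
        rintro ⟨z, hz, rfl⟩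
        exact h (hk z (hKU hz))
      refine continuousAt_id.congr ?_
      filter_upwards [hcl.isOpen_compl.mem_nhds hw] with w' hw'
      exact (fid ψ hψ w' hw').symm
  have finv : ∀ ψ φ : E ≃ₜ E, (∀ z, z ∉ Kc → ψ z = z) → (∀ z, φ (ψ z) = z) →
      ∀ w, f φ (f ψ w) = w := by
    intro ψ φ hψ h w
    simp only [f]
    by_cases hw : w ∈ Ω
    · have h1 := stay ψ hψ _ (hj w hw)
      rw [if_pos hw, if_pos (hk _ h1), hjk _ h1, h, hkj w hw]
    · rw [if_neg hw, if_neg hw]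
  have hψ' : ∀ z, z ∉ Kc → ψ.symm z = z := fun z hz => by
    rw [Homeomorph.symm_apply_eq, hψ z hz]
  refine ⟨{ toFun := f ψ
            invFun := f ψ.symm
            left_inv := finv ψ ψ.symm hψ (fun z => ψ.symm_apply_apply z)
            right_inv := finv ψ.symm ψ hψ' (fun z => ψ.apply_symm_apply z)
            continuous_toFun := fc ψ hψ
            continuous_invFun := fc ψ.symm hψ' }, fun z hz => ?_, fid ψ hψ⟩
  change f ψ (k z) = k (ψ z)
  simp only [f]
  rw [if_pos (hk z hz), hjk z hz]

/-- piecewise linear push of the line -/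
noncomputable def plp (a b p q x : ℝ) : ℝ :=
  x + (q - p) * max 0 (min ((x - a) / (p - a)) ((b - x) / (b - p)))

theorem plp_of_le {a b p q x : ℝ} (h1 : a < p) (h : x ≤ a) : plp a b p q x = x := by
  unfold plp
  have : (x - a) / (p - a) ≤ 0 := div_nonpos_of_nonpos_of_nonneg (by linarith) (by linarith)
  rw [max_eq_left ((min_le_left _ _).trans this)]; ring

theorem plp_of_ge {a b p q x : ℝ} (h2 : p < b) (h : b ≤ x) : plp a b p q x = x := by
  unfold plp
  have : (b - x) / (b - p) ≤ 0 := div_nonpos_of_nonpos_of_nonneg (by linarith) (by linarith)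
  rw [max_eq_left ((min_le_right _ _).trans this)]; ring

theorem plp_left {a b p q x : ℝ} (h1 : a < p) (h2 : p < b) (h : a ≤ x) (h' : x ≤ p) :
    plp a b p q x = a + (x - a) * ((q - a) / (p - a)) := by
  unfold plp
  have e1 : (x - a) / (p - a) ≤ 1 := by rw [div_le_one (by linarith)]; linarith
  have e2 : 1 ≤ (b - x) / (b - p) := by rw [le_div_iff₀ (by linarith)]; linarith
  have e3 : 0 ≤ (x - a) / (p - a) := div_nonneg (by linarith) (by linarith)
  rw [min_eq_left (e1.trans e2), max_eq_right e3]
  have : p - a ≠ 0 := by linarith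
  field_simp; ring

theorem plp_right {a b p q x : ℝ} (h1 : a < p) (h2 : p < b) (h : p ≤ x) (h' : x ≤ b) :
    plp a b p q x = b - (b - x) * ((b - q) / (b - p)) := by
  unfold plp
  have e1 : 1 ≤ (x - a) / (p - a) := by rw [le_div_iff₀ (by linarith)]; linarith
  have e2 : (b - x) / (b - p) ≤ 1 := by rw [div_le_one (by linarith)]; linarith
  have e3 : 0 ≤ (b - x) / (b - p) := div_nonneg (by linarith) (by linarith)
  rw [min_eq_right (e2.trans e1), max_eq_right e3]
  have : b - p ≠ 0 := by linarith
  field_simp; ring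

theorem plp_apply {a b p q : ℝ} (h1 : a < p) (h2 : p < b) : plp a b p q p = q := by
  rw [plp_left h1 h2 h1.le le_rfl]
  have : p - a ≠ 0 := by linarith
  field_simp; ring

theorem plp_inv {a b p q : ℝ} (h1 : a < p) (h2 : p < b) (h3 : a < q) (h4 : q < b) (x : ℝ) :
    plp a b q p (plp a b p q x) = x := by
  rcases le_total x a with h | h
  · rw [plp_of_le h1 h, plp_of_le h3 h]
  rcases le_total b x with h' | h'
  · rw [plp_of_ge h2 h', plp_of_ge h4 h']
  have n1 : p - a ≠ 0 := by linarith
  have n2 : q - a ≠ 0 := by linarith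
  have n3 : b - p ≠ 0 := by linarith
  have n4 : b - q ≠ 0 := by linarith
  rcases le_total x p with h5 | h5
  · rw [plp_left h1 h2 h h5]
    have e1 : 0 ≤ (x - a) * ((q - a) / (p - a)) :=
      mul_nonneg (by linarith) (div_nonneg (by linarith) (by linarith))
    have e2 : (x - a) * ((q - a) / (p - a)) ≤ q - a := by
      rw [mul_div_assoc', div_le_iff₀ (by linarith)]; nlinarith
    rw [plp_left h3 h4 (by linarith) (by linarith)]
    field_simp; ring
  · rw [plp_right h1 h2 h5 h']
    have e1 : 0 ≤ (b - x) * ((b - q) / (b - p)) :=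
      mul_nonneg (by linarith) (div_nonneg (by linarith) (by linarith))
    have e2 : (b - x) * ((b - q) / (b - p)) ≤ b - q := by
      rw [mul_div_assoc', div_le_iff₀ (by linarith)]; nlinarith
    rw [plp_right h3 h4 (by linarith) (by linarith)]
    field_simp; ring

/-- fibrewise push -/
theorem push_exists {a b : ℝ} {p q : ℝ → ℝ} (hp : Continuous p) (hq : Continuous q)
    (hpm : ∀ y, a < p y ∧ p y < b) (hqm : ∀ y, a < q y ∧ q y < b) :
    ∃ ψ : E ≃ₜ E, ∀ z : E, ψ z = (plp a b (p z.2) (q z.2) z.1, z.2) := by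
  have cont : ∀ p q : ℝ → ℝ, Continuous p → Continuous q → (∀ y, a < p y ∧ p y < b) →
      Continuous fun z : E => (plp a b (p z.2) (q z.2) z.1, z.2) := by
    intro p q hp hq hpm
    have h1 : Continuous fun z : E => (z.1 - a) / (p z.2 - a) :=
      Continuous.div (by fun_prop) (by fun_prop) fun z => by have := hpm z.2; linarith
    have h2 : Continuous fun z : E => (b - z.1) / (b - p z.2) :=
      Continuous.div (by fun_prop) (by fun_prop) fun z => by have := hpm z.2; linarith
    unfold plp
    fun_prop
  refine ⟨{ toFun := fun z => (plp a b (p z.2) (q z.2) z.1, z.2)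
            invFun := fun z => (plp a b (q z.2) (p z.2) z.1, z.2)
            left_inv := fun z => ?_
            right_inv := fun z => ?_
            continuous_toFun := cont p q hp hq hpm
            continuous_invFun := cont q p hq hp hqm }, fun z => rfl⟩
  · ext
    · exact plp_inv (hpm _).1 (hpm _).2 (hqm _).1 (hqm _).2 _
    · rfl
  · ext
    · exact plp_inv (hqm _).1 (hqm _).2 (hpm _).1 (hpm _).2 _
    · rfl

section Polar
variable (L a : ℝ)

/-- inverse radius -/
noncomputable def rh (q : E) : ℝ := (1 - q.1) / q.1
/-- angular coordinate -/
noncomputable def xi (q : E) : ℝ := 1 - 2 * q.2 / L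
/-- denominator -/
noncomputable def Dn (q : E) : ℝ := |xi L q + a * rh q| + 1 - |xi L q|
/-- the shift in polar coordinates -/
noncomputable def Kf (q : E) : E :=
  (1 / (1 + rh q / Dn L a q), L * (1 - (xi L q + a * rh q) / Dn L a q) / 2)

variable {L a}

theorem rh_pos {q : E} (h : 0 < q.1) (h' : q.1 < 1) : 0 < rh q := div_pos (by linarith) h

theorem xi_abs (hL : 0 < L) {q : E} (h : 0 < q.2) (h' : q.2 < L) : |xi L q| < 1 := by
  unfold xi
  have h1 : 0 < 2 * q.2 / L := by positivity
  have h2 : 2 * q.2 / L < 2 := by rw [div_lt_iff₀ hL]; linarith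
  rw [abs_lt]; constructor <;> linarith

theorem Dn_pos (hL : 0 < L) {q : E} (h : 0 < q.2) (h' : q.2 < L) : 0 < Dn L a q := by
  unfold Dn
  have h1 := xi_abs hL h h'
  have h2 := abs_nonneg (xi L q + a * rh q)
  linarith

theorem Kf_mem (hL : 0 < L) {q : E} (h1 : 0 < q.1) (h2 : q.1 < 1) (h3 : 0 < q.2) (h4 : q.2 < L) :
    (0 < (Kf L a q).1 ∧ (Kf L a q).1 < 1) ∧ (0 < (Kf L a q).2 ∧ (Kf L a q).2 < L) := by
  have hD := Dn_pos (a := a) hL h3 h4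
  have hr := rh_pos h1 h2
  have hx := xi_abs hL h3 h4
  have hq : 0 < rh q / Dn L a q := div_pos hr hD
  have hab : |(xi L q + a * rh q) / Dn L a q| < 1 := by
    rw [abs_div, abs_of_pos hD, div_lt_one hD]
    unfold Dn; linarith
  rw [abs_lt] at hab
  simp only [Kf]
  refine ⟨⟨by positivity, ?_⟩, ?_, ?_⟩
  · rw [div_lt_one (by linarith)]; linarith
  · have : 0 < L * (1 - (xi L q + a * rh q) / Dn L a q) := mul_pos hL (by linarith)
    linarith
  · nlinarith

theorem rh_Kf (hL : 0 < L) {q : E} (h1 : 0 < q.1) (h2 : q.1 < 1) (h3 : 0 < q.2) (h4 : q.2 < L) :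
    rh (Kf L a q) = rh q / Dn L a q := by
  have hD := Dn_pos (a := a) hL h3 h4
  have hr := rh_pos h1 h2
  have hw : 0 < rh q / Dn L a q := div_pos hr hD
  have e : rh (Kf L a q) = (1 - 1 / (1 + rh q / Dn L a q)) / (1 / (1 + rh q / Dn L a q)) := rfl
  rw [e]
  generalize rh q / Dn L a q = w at hw
  field_simp
  ring

theorem xi_Kf (hL : 0 < L) (q : E) : xi L (Kf L a q) = (xi L q + a * rh q) / Dn L a q := by
  have hL' := hL.ne'
  unfold Kf
  set w := (xi L q + a * rh q) / Dn L a q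
  simp only [xi]
  field_simp
  ring

theorem Kf_inv (hL : 0 < L) {q : E} (h1 : 0 < q.1) (h2 : q.1 < 1) (h3 : 0 < q.2) (h4 : q.2 < L) :
    Kf L (-a) (Kf L a q) = q := by
  have hD := Dn_pos (a := a) hL h3 h4
  have hr := rh_pos h1 h2
  have hD0 := hD.ne'
  have e1 : xi L (Kf L a q) + (-a) * rh (Kf L a q) = xi L q / Dn L a q := by
    rw [xi_Kf hL, rh_Kf hL h1 h2 h3 h4]; field_simp; ring
  have e2 : Dn L (-a) (Kf L a q) = 1 / Dn L a q := by
    rw [Dn, e1, xi_Kf hL, abs_div, abs_div, abs_of_pos hD]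
    field_simp
    unfold Dn; ring
  have e3 : rh (Kf L a q) / Dn L (-a) (Kf L a q) = rh q := by
    rw [e2, rh_Kf hL h1 h2 h3 h4]; field_simp
  have e4 : (xi L (Kf L a q) + (-a) * rh (Kf L a q)) / Dn L (-a) (Kf L a q) = xi L q := by
    rw [e1, e2]; field_simp
  rw [Kf, e3, e4]
  ext
  · simp only [rh]; field_simp; ring
  · simp only [xi]; field_simp; ring

theorem Kf_contAt (hL : 0 < L) {q : E} (h1 : 0 < q.1) (hq1 : q.1 ≤ 1) (hD : 0 < Dn L a q) :
    ContinuousAt (Kf L a) q := by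
  have r1 : ContinuousAt rh q := by
    unfold rh; exact ContinuousAt.div (by fun_prop) (by fun_prop) h1.ne'
  have x1 : ContinuousAt (xi L) q := by
    unfold xi; exact ContinuousAt.sub (by fun_prop) (ContinuousAt.div_const (by fun_prop) _)
  have d1 : ContinuousAt (Dn L a) q := by unfold Dn; fun_prop
  have hr : 0 ≤ rh q := div_nonneg (by linarith) h1.le
  have w1 : ContinuousAt (fun q => rh q / Dn L a q) q := r1.div d1 hD.ne'
  have w2 : ContinuousAt (fun q => (xi L q + a * rh q) / Dn L a q) q :=
    ContinuousAt.div (by fun_prop) d1 hD.ne'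
  have w3 : ContinuousAt (fun q => 1 / (1 + rh q / Dn L a q)) q :=
    ContinuousAt.div (by fun_prop) (by fun_prop) (by positivity)
  unfold Kf
  exact w3.prodMk (by fun_prop)

theorem Kf_one (hL : 0 < L) (t : ℝ) : Kf L a (1, t) = (1, t) ∧ Dn L a (1, t) = 1 := by
  have h1 : rh (1, t) = 0 := by simp [rh]
  have h2 : Dn L a (1, t) = 1 := by simp [Dn, h1]
  refine ⟨?_, h2⟩
  rw [Kf, h1, h2]
  ext
  · simp
  · simp only [xi]; field_simp; ring

/-- as the first coordinate tends to zero, the unit shift sends everything near `(1/2, 0)`. -/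
theorem Kf_zero (hL : 0 < L) {ε : ℝ} (hε : 0 < ε) : ∃ η > 0, η < 1 ∧ ∀ q : E, 0 < q.1 → q.1 < η →
    0 < q.2 → q.2 < L → |(Kf L 1 q).1 - 1 / 2| < ε ∧ (Kf L 1 q).2 < ε := by
  -- λ = 1/ρ
  obtain ⟨l0, hl0, hl1, hl2, hl3⟩ : ∃ l0 > (0 : ℝ), l0 ≤ 1 / 2 ∧ l0 < ε ∧ L * l0 < ε := by
    refine ⟨min (1 / 2) (min (ε / 2) (ε / (2 * L))), by positivity, min_le_left _ _, ?_, ?_⟩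
    · have := (min_le_right (1 / 2 : ℝ) (min (ε / 2) (ε / (2 * L)))).trans (min_le_left _ _)
      linarith
    · have := (min_le_right (1 / 2 : ℝ) (min (ε / 2) (ε / (2 * L)))).trans (min_le_right _ _)
      rw [le_div_iff₀ (by positivity)] at this
      nlinarith
  refine ⟨l0 / (1 + l0), by positivity, by rw [div_lt_one (by positivity)]; linarith, ?_⟩
  intro q h1 h2 h3 h4
  have hq : q.1 < 1 := h2.trans (by rw [div_lt_one (by positivity)]; linarith)
  have hr := rh_pos h1 hq
  have hD := Dn_pos (a := 1) hL h3 h4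
  have hx := xi_abs hL h3 h4
  -- 1 < l0 * ρ
  have hlr : 1 < l0 * rh q := by
    unfold rh
    rw [mul_div_assoc', lt_div_iff₀ h1]
    rw [lt_div_iff₀ (by positivity)] at h2
    linarith
  have hr2 : 2 < rh q := by nlinarith
  set ρ := rh q
  set ξ := xi L q
  have hDe : Dn L 1 q = ξ + ρ + 1 - |ξ| := by
    have : 0 < ξ + 1 * ρ := by have := (abs_lt.mp hx).1; linarith
    change |ξ + 1 * ρ| + 1 - |ξ| = _
    rw [abs_of_pos this]; ring
  have hb := abs_lt.mp hx
  have hn := abs_nonneg ξ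
  have hle := le_abs_self ξ
  have hle2 := neg_abs_le ξ
  set D := Dn L 1 q
  constructor
  · change |1 / (1 + ρ / D) - 1 / 2| < ε
    have e1 : 1 / (1 + ρ / D) - 1 / 2 = (D - ρ) / (2 * (D + ρ)) := by field_simp; ring
    rw [e1, abs_div, abs_of_pos (show 0 < 2 * (D + ρ) by positivity), div_lt_iff₀ (by positivity)]
    have e2 : |D - ρ| ≤ 1 := by rw [abs_le]; constructor <;> linarith
    nlinarith
  · change L * (1 - (ξ + 1 * ρ) / D) / 2 < ε
    have e1 : L * (1 - (ξ + 1 * ρ) / D) / 2 = L * (1 - |ξ|) / (2 * D) := by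
      rw [hDe]
      have : ξ + ρ + 1 - |ξ| ≠ 0 := by rw [← hDe]; exact hD.ne'
      field_simp; ring
    rw [e1, div_lt_iff₀ (by positivity)]
    have e2 : ρ / 2 ≤ D := by rw [hDe]; linarith
    have e3 : L * (1 - |ξ|) ≤ L := by nlinarith
    have e4 : L < L * l0 * ρ := by nlinarith
    have e5 : L * l0 * ρ < ε * ρ := mul_lt_mul_of_pos_right hl3 hr
    nlinarith

end Polar

end Ann


namespace Ann
open Set Filter Topology

section Squeeze
variable (R : ℝ)
/-- contraction factor -/
noncomputable def sqm (x : ℝ) : ℝ := 1 - (1 - R / (2 * max x (R / 2))) ^ 2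
/-- inverse factor -/
noncomputable def sqn (y : ℝ) : ℝ := R ^ 2 / (4 * (R - max y (R / 2)) * max y (R / 2))
/-- squeezing the plane into a ball -/
noncomputable def sq (z : E) : E := sqm R ‖z‖ • z
/-- inverse of squeezing -/
noncomputable def sqi (z : E) : E := sqn R ‖z‖ • z

variable {R}

theorem sqm_pos (hR : 0 < R) (x : ℝ) : 0 < sqm R x ∧ sqm R x ≤ 1 := by
  unfold sqm
  have h : R / 2 ≤ max x (R / 2) := le_max_right _ _
  set m := max x (R / 2)
  have hm : 0 < m := by linarith
  have h1 : 0 < R / (2 * m) := by positivity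
  have h2 : R / (2 * m) ≤ 1 := by rw [div_le_one (by positivity)]; linarith
  constructor <;> nlinarith

theorem sqm_small (hR : 0 < R) {x : ℝ} (h : x ≤ R / 2) : sqm R x = 1 := by
  unfold sqm
  rw [max_eq_right h]
  have : R / (2 * (R / 2)) = 1 := by field_simp
  rw [this]; ring

theorem sqn_small (hR : 0 < R) {x : ℝ} (h : x ≤ R / 2) : sqn R x = 1 := by
  unfold sqn
  rw [max_eq_right h]
  field_simp; ring

theorem sq_small (hR : 0 < R) {z : E} (h : ‖z‖ ≤ R / 2) : sq R z = z := by simp [sq, sqm_small hR h]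
theorem sqi_small (hR : 0 < R) {z : E} (h : ‖z‖ ≤ R / 2) : sqi R z = z := by simp [sqi, sqn_small hR h]

theorem sq_norm (hR : 0 < R) {z : E} (h : R / 2 ≤ ‖z‖) : ‖sq R z‖ = R - R ^ 2 / (4 * ‖z‖) := by
  have hz : 0 < ‖z‖ := by linarith
  rw [sq, norm_smul, Real.norm_of_nonneg (sqm_pos hR _).1.le, sqm, max_eq_left h]
  field_simp; ring

theorem sqi_norm (hR : 0 < R) {z : E} (h : R / 2 ≤ ‖z‖) (h' : ‖z‖ < R) :
    ‖sqi R z‖ = R ^ 2 / (4 * (R - ‖z‖)) := by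
  have hz : 0 < ‖z‖ := by linarith
  have h2 : 0 < R - ‖z‖ := by linarith
  have h3 : 0 ≤ sqn R ‖z‖ := by
    unfold sqn; rw [max_eq_left h]; positivity
  rw [sqi, norm_smul, Real.norm_of_nonneg h3, sqn, max_eq_left h]
  field_simp

theorem sq_lt (hR : 0 < R) (z : E) : ‖sq R z‖ < R := by
  rcases le_total ‖z‖ (R / 2) with h | h
  · rw [sq_small hR h]; linarith
  · have hz : 0 < ‖z‖ := by linarith
    rw [sq_norm hR h]
    have : 0 < R ^ 2 / (4 * ‖z‖) := by positivity
    linarith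

theorem sqi_sq (hR : 0 < R) (z : E) : sqi R (sq R z) = z := by
  rcases le_total ‖z‖ (R / 2) with h | h
  · rw [sq_small hR h, sqi_small hR h]
  · have hz : 0 < ‖z‖ := by linarith
    have h1 := sq_norm hR h
    have h2 : R / 2 ≤ ‖sq R z‖ := by
      rw [h1]
      have : R ^ 2 / (4 * ‖z‖) ≤ R / 2 := by rw [div_le_iff₀ (by positivity)]; nlinarith
      linarith
    have h0 : 4 * ‖z‖ - R ≠ 0 := by linarith
    have hy : R - R ^ 2 / (4 * ‖z‖) ≠ 0 := by rw [← h1]; linarith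
    rw [sqi, sqn, max_eq_left h2, h1, sq, smul_smul, sqm, max_eq_left h]
    have : R ^ 2 / (4 * (R - (R - R ^ 2 / (4 * ‖z‖))) * (R - R ^ 2 / (4 * ‖z‖))) *
        (1 - (1 - R / (2 * ‖z‖)) ^ 2) = 1 := by
      rw [div_mul_eq_mul_div, div_eq_one_iff_eq]
      · field_simp; ring
      · refine mul_ne_zero ?_ hy
        have : 0 < R ^ 2 / (4 * ‖z‖) := by positivity
        linarith
    rw [this, one_smul]

theorem sq_sqi (hR : 0 < R) {z : E} (hz : ‖z‖ < R) : sq R (sqi R z) = z := by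
  rcases le_total ‖z‖ (R / 2) with h | h
  · rw [sqi_small hR h, sq_small hR h]
  · have hz0 : 0 < ‖z‖ := by linarith
    have hz1 : 0 < R - ‖z‖ := by linarith
    have h1 := sqi_norm hR h hz
    have h2 : R / 2 ≤ ‖sqi R z‖ := by
      rw [h1, le_div_iff₀ (by positivity)]; nlinarith
    rw [sq, sqm, max_eq_left h2, h1, sqi, smul_smul, sqn, max_eq_left h]
    have : (1 - (1 - R / (2 * (R ^ 2 / (4 * (R - ‖z‖))))) ^ 2) *
        (R ^ 2 / (4 * (R - ‖z‖) * ‖z‖)) = 1 := by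
      field_simp; ring
    rw [this, one_smul]

theorem sq_cont (hR : 0 < R) : Continuous (sq R) := by
  unfold sq sqm
  have h : ∀ z : E, (2 * max ‖z‖ (R / 2)) ≠ 0 := fun z => by
    have : R / 2 ≤ max ‖z‖ (R / 2) := le_max_right _ _
    linarith
  have : Continuous fun z : E => R / (2 * max ‖z‖ (R / 2)) :=
    continuous_const.div (by fun_prop) h
  fun_prop

theorem sqi_contAt (hR : 0 < R) {z : E} (hz : ‖z‖ < R) : ContinuousAt (sqi R) z := by
  unfold sqi sqn
  have h : R / 2 ≤ max ‖z‖ (R / 2) := le_max_right _ _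
  have h' : max ‖z‖ (R / 2) < R := max_lt hz (by linarith)
  have h0 : 4 * (R - max ‖z‖ (R / 2)) * max ‖z‖ (R / 2) ≠ 0 := by
    have : 0 < R - max ‖z‖ (R / 2) := by linarith
    have : 0 < max ‖z‖ (R / 2) := by linarith
    positivity
  have : ContinuousAt (fun z : E => R ^ 2 / (4 * (R - max ‖z‖ (R / 2)) * max ‖z‖ (R / 2))) z :=
    ContinuousAt.div continuousAt_const (by fun_prop) h0
  exact this.smul continuousAt_id

end Squeeze

/-- collar data -/
structure Collar (N L a0 b0 : ℝ) (c : E → E) (θ tt : E → ℝ) : Prop where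
  hN : 2 ≤ N
  hL : 2 ≤ L
  cc : Continuous c
  θc : Continuous θ
  θ_c : ∀ q : E, 0 < q.1 → q.1 < 1 → θ (c q) = q.1
  t_c : ∀ q : E, 0 < q.1 → q.1 < 1 → tt (c q) = q.2
  c_θ : ∀ z : E, 0 < θ z → θ z < 1 → c (θ z, tt z) = z
  tc : ContinuousOn tt {z | 0 < θ z ∧ θ z < 1}
  mem : ∀ z : E, 0 < θ z → θ z < 1 → ((0 < z.2 ∧ z.2 < N) ↔ (0 < tt z ∧ tt z < L))
  low : ∀ z : E, z.2 ≤ 1 → θ z = cl01 ((3 * z.1 + 1) / 2)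
  high : ∀ z : E, N - 1 ≤ z.2 → θ z = cl01 ((3 * z.1 + 1) / 2)
  tlow : ∀ z : E, z.2 ≤ 1 → 0 < θ z → θ z < 1 → tt z = z.2
  left : ∀ z : E, z.1 ≤ a0 → θ z = 0
  right : ∀ z : E, b0 ≤ z.1 → θ z = 1

/-- the shift in the collar -/
noncomputable def kk (L : ℝ) (c : E → E) (θ tt : E → ℝ) (a : ℝ) (z : E) : E :=
  open Classical in if 0 < θ z ∧ θ z < 1 then c (Kf L a (θ z, tt z)) else z

section KK
variable {N L a0 b0 : ℝ} {c : E → E} {θ tt : E → ℝ}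

theorem Collar.L_pos (K : Collar N L a0 b0 c θ tt) : 0 < L := by linarith [K.hL]

theorem Collar.kk_in (K : Collar N L a0 b0 c θ tt) (a : ℝ) {z : E} (h1 : 0 < θ z) (h2 : θ z < 1) (hz : 0 < z.2 ∧ z.2 < N) :
    (0 < θ (kk L c θ tt a z) ∧ θ (kk L c θ tt a z) < 1) ∧
      (0 < (kk L c θ tt a z).2 ∧ (kk L c θ tt a z).2 < N) ∧
      θ (kk L c θ tt a z) = (Kf L a (θ z, tt z)).1 ∧
      tt (kk L c θ tt a z) = (Kf L a (θ z, tt z)).2 := by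
  have ht := (K.mem z h1 h2).mp hz
  have hm := Kf_mem (a := a) K.L_pos (q := (θ z, tt z)) h1 h2 ht.1 ht.2
  have e : kk L c θ tt a z = c (Kf L a (θ z, tt z)) := by simp [kk, h1, h2]
  have e1 : θ (kk L c θ tt a z) = (Kf L a (θ z, tt z)).1 := by
    rw [e, K.θ_c _ hm.1.1 hm.1.2]
  have e2 : tt (kk L c θ tt a z) = (Kf L a (θ z, tt z)).2 := by
    rw [e, K.t_c _ hm.1.1 hm.1.2]
  have h3 : 0 < θ (kk L c θ tt a z) ∧ θ (kk L c θ tt a z) < 1 := by rw [e1]; exact hm.1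
  refine ⟨h3, ?_, e1, e2⟩
  rw [K.mem _ h3.1 h3.2, e2]; exact hm.2

theorem Collar.kk_mem (K : Collar N L a0 b0 c θ tt) (a : ℝ) {z : E} (h1 : 0 < θ z) (hz : 0 < z.2 ∧ z.2 < N) :
    0 < θ (kk L c θ tt a z) ∧ (0 < (kk L c θ tt a z).2 ∧ (kk L c θ tt a z).2 < N) := by
  by_cases h2 : θ z < 1
  · have := K.kk_in a h1 h2 hz
    exact ⟨this.1.1, this.2.1⟩
  · have : kk L c θ tt a z = z := by simp [kk, h2]
    rw [this]; exact ⟨h1, hz⟩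

theorem Collar.kk_inv (K : Collar N L a0 b0 c θ tt) (a : ℝ) {z : E} (h1 : 0 < θ z) (hz : 0 < z.2 ∧ z.2 < N) :
    kk L c θ tt (-a) (kk L c θ tt a z) = z := by
  by_cases h2 : θ z < 1
  · have ht := (K.mem z h1 h2).mp hz
    have := K.kk_in a h1 h2 hz
    rw [kk, if_pos this.1, this.2.2.1, this.2.2.2]
    rw [show ((Kf L a (θ z, tt z)).1, (Kf L a (θ z, tt z)).2) = Kf L a (θ z, tt z) from rfl,
      Kf_inv K.L_pos h1 h2 ht.1 ht.2, K.c_θ z h1 h2]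
  · have : ∀ a, kk L c θ tt a z = z := by simp [kk, h2]
    rw [this, this]

theorem Collar.unif (K : Collar N L a0 b0 c θ tt) (a : ℝ) {ε : ℝ} (hε : 0 < ε) : ∃ η < (1 : ℝ), ∀ q : E, η < q.1 → q.1 < 1 →
    0 < q.2 → q.2 < L → ‖c (Kf L a q) - c q‖ < ε := by
  have hn : ∀ t : ℝ, {q : E | ‖c (Kf L a q) - c q‖ < ε} ∈ 𝓝 ((1 : ℝ), t) := by
    intro t
    have h1 : ContinuousAt (Kf L a) ((1 : ℝ), t) :=
      Kf_contAt K.L_pos (by norm_num) le_rfl (by rw [(Kf_one K.L_pos t).2]; norm_num)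
    have h2 : ContinuousAt (fun q => ‖c (Kf L a q) - c q‖) ((1 : ℝ), t) :=
      ((K.cc.continuousAt.comp h1).sub K.cc.continuousAt).norm
    refine h2.eventually_lt continuousAt_const ?_
    rw [(Kf_one K.L_pos t).1]; simpa using hε
  obtain ⟨u, v, hu, hv, hu1, hv1, huv⟩ := generalized_tube_lemma (s := {(1 : ℝ)})
    isCompact_singleton (t := Icc 0 L) isCompact_Icc
    (n := interior {q : E | ‖c (Kf L a q) - c q‖ < ε}) isOpen_interior (by
      rintro ⟨x, t⟩ ⟨hx, ht⟩
      rw [mem_singleton_iff] at hx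
      simp only at hx
      subst hx
      exact mem_interior_iff_mem_nhds.mpr (hn t))
  obtain ⟨η, hη, hη'⟩ := (mem_nhds_iff_exists_Ioo_subset.mp
    (hu.mem_nhds (hu1 rfl)) : ∃ l r, (1 : ℝ) ∈ Ioo l r ∧ Ioo l r ⊆ u)
  refine ⟨η, hη'.1.1, fun q h1 h2 h3 h4 => ?_⟩
  have h5 : q ∈ interior {q : E | ‖c (Kf L a q) - c q‖ < ε} :=
    huv (mk_mem_prod (hη'.2 ⟨h1, h2.trans hη'.1.2⟩) (hv1 ⟨h3.le, h4.le⟩))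
  exact (interior_subset h5 : q ∈ {q : E | ‖c (Kf L a q) - c q‖ < ε})

theorem Collar.kk_contAt (K : Collar N L a0 b0 c θ tt) (a : ℝ) {z : E} (h1 : 0 < θ z) (hz : 0 < z.2 ∧ z.2 < N) :
    ContinuousAt (kk L c θ tt a) z := by
  have hUo : ∀ᶠ w : E in 𝓝 z, 0 < w.2 ∧ w.2 < N :=
    (continuous_snd.continuousAt.eventually_const_lt hz.1).and
      (continuous_snd.continuousAt.eventually_lt_const hz.2)
  have hpos : ∀ᶠ w : E in 𝓝 z, 0 < θ w := K.θc.continuousAt.eventually_const_lt h1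
  by_cases h2 : θ z < 1
  · have hlt : ∀ᶠ w : E in 𝓝 z, θ w < 1 := K.θc.continuousAt.eventually_lt_const h2
    have ht := (K.mem z h1 h2).mp hz
    have t1 : ContinuousAt tt z := K.tc.continuousAt (hpos.and hlt)
    have k1 : ContinuousAt (fun w => c (Kf L a (θ w, tt w))) z := by
      have h3 : ContinuousAt (Kf L a) (θ z, tt z) :=
        Kf_contAt K.L_pos h1 h2.le (Dn_pos K.L_pos ht.1 ht.2)
      have h4 : ContinuousAt (fun w => Kf L a (θ w, tt w)) z :=
        ContinuousAt.comp (g := Kf L a) (f := fun w => (θ w, tt w)) h3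
          (K.θc.continuousAt.prodMk t1)
      exact K.cc.continuousAt.comp h4
    refine k1.congr ?_
    filter_upwards [hpos, hlt] with w w1 w2
    simp [kk, w1, w2]
  · have hkz : kk L c θ tt a z = z := by simp [kk, h2]
    rw [Metric.continuousAt_iff']
    intro ε hε
    obtain ⟨η, hη, hη2⟩ := K.unif a (half_pos hε)
    have hgt : ∀ᶠ w : E in 𝓝 z, η < θ w :=
      K.θc.continuousAt.eventually_const_lt (by linarith)
    filter_upwards [hUo, hpos, hgt, Metric.ball_mem_nhds z (half_pos hε)] with w w1 w2 w3 w4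
    rw [hkz]
    rw [Metric.mem_ball] at w4
    by_cases w5 : θ w < 1
    · have wt := (K.mem w w2 w5).mp w1
      have := hη2 (θ w, tt w) w3 w5 wt.1 wt.2
      rw [K.c_θ w w2 w5, ← dist_eq_norm] at this
      have e : kk L c θ tt a w = c (Kf L a (θ w, tt w)) := by simp [kk, w2, w5]
      rw [e]
      calc _ ≤ dist (c (Kf L a (θ w, tt w))) w + dist w z := dist_triangle _ _ _
        _ < ε := by linarith
    · have e : kk L c θ tt a w = w := by simp [kk, w5]
      rw [e]; linarith

theorem Collar.a0_le (K : Collar N L a0 b0 c θ tt) : a0 ≤ -(1 / 3) := by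
  have h1 := K.left (a0, 0) le_rfl
  rw [K.low _ (by norm_num)] at h1
  by_contra h
  push Not at h
  have : 0 < cl01 ((3 * a0 + 1) / 2) := lt_max_of_lt_right (lt_min one_pos (by linarith))
  simp only at h1
  linarith

theorem Collar.le_b0 (K : Collar N L a0 b0 c θ tt) : 1 / 3 ≤ b0 := by
  have h1 := K.right (b0, 0) le_rfl
  rw [K.low _ (by norm_num)] at h1
  by_contra h
  push Not at h
  have : cl01 ((3 * b0 + 1) / 2) < 1 := max_lt one_pos (min_lt_of_right_lt (by linarith))
  simp only at h1
  linarith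

end KK
end Ann


namespace Ann
open Set Filter Topology

theorem Collar.near {N L a0 b0 : ℝ} {c : E → E} {θ tt : E → ℝ} (K : Collar N L a0 b0 c θ tt)
    {r : ℝ} (hr : 0 < r) : ∃ η > 0, η < 1 ∧ ∀ z : E, 0 < θ z → θ z < η → 0 < z.2 → z.2 < N →
      ‖kk L c θ tt 1 z‖ < r := by
  have h0 : c (1 / 2, 0) = 0 := by
    have e1 : θ (0, 0) = 1 / 2 := by
      rw [K.low _ (by norm_num)]
      simp only [mul_zero, zero_add]
      rw [cl01_id (by norm_num) (by norm_num)]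
    have e2 : tt (0, 0) = 0 := K.tlow (0, 0) (by norm_num) (by rw [e1]; norm_num)
      (by rw [e1]; norm_num)
    have := K.c_θ (0, 0) (by rw [e1]; norm_num) (by rw [e1]; norm_num)
    rw [e1, e2] at this
    exact this
  obtain ⟨ε, hε, hε'⟩ := (Metric.continuousAt_iff.mp (K.cc.continuousAt (x := (1 / 2, 0)))) r hr
  obtain ⟨η, hη, hη1, hη2⟩ := Kf_zero K.L_pos hε
  refine ⟨η, hη, hη1, fun z h1 h2 h3 h4 => ?_⟩
  have h5 : θ z < 1 := h2.trans hη1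
  have ht := (K.mem z h1 h5).mp ⟨h3, h4⟩
  have hm := Kf_mem (a := 1) K.L_pos (q := (θ z, tt z)) h1 h5 ht.1 ht.2
  obtain ⟨g1, g2⟩ := hη2 (θ z, tt z) h1 h2 ht.1 ht.2
  have e : kk L c θ tt 1 z = c (Kf L 1 (θ z, tt z)) := by simp [kk, h1, h5]
  have := @hε' (Kf L 1 (θ z, tt z)) (by
    rw [Prod.dist_eq, max_lt_iff, Real.dist_eq, Real.dist_eq]
    refine ⟨g1, ?_⟩
    rw [sub_zero, abs_of_pos hm.2.1]; exact g2)
  rw [e]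
  rwa [h0, dist_zero_right] at this

theorem brown {N L a0 b0 : ℝ} {c : E → E} {θ tt : E → ℝ} (K : Collar N L a0 b0 c θ tt)
    {a1 b1 : ℝ} (ha : a1 < a0) (hb : b0 < b1) :
    ∃ χ : E ≃ₜ E, (∀ z : E, (z.1 < a1 ∨ b1 < z.1 ∨ z.2 ≤ 0 ∨ N ≤ z.2) → χ z = z) ∧
      ∃ τ : ℝ, -(1 / 3) < τ ∧ τ < 1 / 3 ∧ ∀ y : ℝ, 0 < y → y < N →
        0 < θ (χ (τ, y)) ∧ θ (χ (τ, y)) < 1 := by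
  classical
  obtain ⟨η, hη, hη1, hnear⟩ := K.near (r := 1 / 6) (by norm_num)
  obtain ⟨R, hRdef⟩ : ∃ R : ℝ, R = 1 / 3 := ⟨_, rfl⟩
  have hR : 0 < R := by norm_num [hRdef]
  set U : Set E := {z | 0 < z.2 ∧ z.2 < N} with hUdef
  have hU : IsOpen U := (isOpen_lt continuous_const continuous_snd).inter
    (isOpen_lt continuous_snd continuous_const)
  set W : Set E := {z | z ∈ U ∧ 0 < θ z} with hWdef
  have hW : IsOpen W := hU.inter (isOpen_lt continuous_const K.θc)
  set k := kk L c θ tt with hk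
  have kW : ∀ a, ∀ z ∈ W, k a z ∈ W := fun a z hz =>
    ⟨(K.kk_mem a hz.2 hz.1).2, (K.kk_mem a hz.2 hz.1).1⟩
  have kinv : ∀ a, ∀ z ∈ W, k (-a) (k a z) = z := fun a z hz => K.kk_inv a hz.2 hz.1
  have kinv1 : ∀ z ∈ W, k (-1) (k 1 z) = z := kinv 1
  have kinv2 : ∀ z ∈ W, k 1 (k (-1) z) = z := fun z hz => by simpa using kinv (-1) z hz
  have kc : ∀ a, ∀ z ∈ W, ContinuousAt (k a) z := fun a z hz => K.kk_contAt a hz.2 hz.1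
  -- squeezing
  have sqC : ∀ z ∈ U, sq R z ∈ W ∧ θ (sq R z) < 1 := by
    intro z hz
    have h1 := sqm_pos hR ‖z‖
    have h2 : (sq R z).2 = sqm R ‖z‖ * z.2 := rfl
    have h3 := sq_lt hR z
    rw [Prod.norm_def, max_lt_iff, Real.norm_eq_abs, Real.norm_eq_abs, abs_lt, abs_lt] at h3
    have h4 : θ (sq R z) = (3 * (sq R z).1 + 1) / 2 := by
      rw [K.low _ (by linarith [h3.2.2]), cl01_id] <;> linarith [h3.1.1, h3.1.2]
    refine ⟨⟨⟨?_, ?_⟩, ?_⟩, ?_⟩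
    · rw [h2]; exact mul_pos h1.1 hz.1
    · rw [h2]; have := hz.1; have := hz.2; nlinarith
    · change 0 < θ (sq R z)
      rw [h4]; linarith [h3.1.1]
    · rw [h4]; linarith [h3.1.2]
  let k' : E → E := fun z => if 0 < θ z then k (-1) (sq R (k 1 z)) else z
  let j : E → E := fun z => if 0 < θ z then k (-1) (sqi R (k 1 z)) else z
  have k'neg : ∀ z, ¬ 0 < θ z → k' z = z := fun z hz => if_neg hz
  have k'pos : ∀ z, 0 < θ z → k' z = k (-1) (sq R (k 1 z)) := fun z hz => if_pos hz
  have jneg : ∀ z, ¬ 0 < θ z → j z = z := fun z hz => if_neg hz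
  have jpos : ∀ z, 0 < θ z → j z = k (-1) (sqi R (k 1 z)) := fun z hz => if_pos hz
  have ksmall : ∀ z ∈ U, 0 < θ z → θ z < η → ‖k 1 z‖ < R / 2 := fun z hz h1 h2 => by
    have := hnear z h1 h2 hz.1 hz.2
    rw [hRdef]; linarith
  have k'id : ∀ z ∈ U, θ z < η → k' z = z := by
    intro z hz h1
    by_cases h2 : 0 < θ z
    · rw [k'pos z h2, sq_small hR (ksmall z hz h2 h1).le, kinv1 z ⟨hz, h2⟩]
    · exact k'neg z h2
  have jid : ∀ z ∈ U, θ z < η → j z = z := by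
    intro z hz h1
    by_cases h2 : 0 < θ z
    · rw [jpos z h2, sqi_small hR (ksmall z hz h2 h1).le, kinv1 z ⟨hz, h2⟩]
    · exact jneg z h2
  have k'C : ∀ z ∈ W, k' z ∈ U ∧ 0 < θ (k' z) ∧ θ (k' z) < 1 := by
    intro z hz
    rw [k'pos z hz.2]
    have h1 := sqC _ (kW 1 z hz).1
    have := K.kk_in (-1) h1.1.2 h1.2 h1.1.1
    exact ⟨this.2.1, this.1⟩
  set Ω : Set E := {z | z ∈ U ∧ θ z < η} ∪
    {z | z ∈ W ∧ (‖k 1 z‖ < R ∧ sqi R (k 1 z) ∈ W)} with hΩdef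
  have hη' : IsOpen {z | z ∈ U ∧ θ z < η} := hU.inter (isOpen_lt K.θc continuous_const)
  have hΩ2 : IsOpen {z | z ∈ W ∧ (‖k 1 z‖ < R ∧ sqi R (k 1 z) ∈ W)} := by
    rw [isOpen_iff_mem_nhds]
    rintro z ⟨hz, h1, h2⟩
    have c1 := kc 1 z hz
    have c2 : ContinuousAt (fun z => sqi R (k 1 z)) z := ContinuousAt.comp (sqi_contAt hR h1) c1
    filter_upwards [hW.mem_nhds hz, c1.norm.eventually_lt_const h1,
      c2.preimage_mem_nhds (hW.mem_nhds h2)] with w w1 w2 w3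
    exact ⟨w1, w2, w3⟩
  have hΩ : IsOpen Ω := hη'.union hΩ2
  obtain ⟨δ, hδ⟩ : ∃ δ : ℝ, δ = 1 / 4 := ⟨_, rfl⟩
  have hN := K.hN
  set Kc : Set E := Icc a1 b1 ×ˢ Icc δ (N - δ) with hKc
  have hKcU : Kc ⊆ U := by
    rintro z ⟨-, h1, h2⟩
    exact ⟨by linarith, by linarith⟩
  have hA := K.a0_le
  have hB := K.le_b0
  -- push functions
  let hh : ℝ → ℝ := fun y => cl01 ((min y (N - y) - δ) / δ)
  have hhc : Continuous hh := cl01_cont.comp (by fun_prop)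
  have hh01 : ∀ y, 0 ≤ hh y ∧ hh y ≤ 1 := fun y => cl01_mem _
  have hh0 : ∀ y, (y < δ ∨ N - δ < y) → hh y = 0 := by
    intro y hy
    refine cl01_of_le (div_nonpos_of_nonpos_of_nonneg ?_ (by norm_num [hδ]))
    rcases hy with hy | hy
    · have := min_le_left y (N - y); linarith
    · have := min_le_right y (N - y); linarith
  have hh1 : ∀ y, 1 < y → y < N - 1 → hh y = 1 := by
    intro y h1 h2
    refine cl01_of_ge ?_
    rw [le_div_iff₀ (by norm_num [hδ])]
    have : 1 < min y (N - y) := lt_min h1 (by linarith)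
    linarith
  set τ : ℝ := (η - 1) / 3 with hτ
  set ζ0 : ℝ := (a1 + a0) / 2 with hζ0
  set n0 : ℝ := (b0 + b1) / 2 with hn0
  let ζ : ℝ → ℝ := fun y => τ + (ζ0 - τ) * hh y
  let n : ℝ → ℝ := fun y => τ + (n0 - τ) * hh y
  have ζm : ∀ y, a1 < ζ y ∧ ζ y ≤ τ := fun y => by
    have := hh01 y
    simp only [ζ]
    constructor <;> nlinarith
  have nm : ∀ y, τ ≤ n y ∧ n y < b1 := fun y => by
    have := hh01 y
    simp only [n]
    constructor <;> nlinarith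
  have τm : a1 < τ ∧ τ < b1 := ⟨by linarith, by linarith⟩
  obtain ⟨ψ, hψ⟩ := push_exists (a := a1) (b := b1) (p := ζ) (q := n) (by fun_prop) (by fun_prop)
    (fun y => ⟨(ζm y).1, by linarith [(ζm y).2]⟩) (fun y => ⟨by linarith [(nm y).1], (nm y).2⟩)
  obtain ⟨ω, hω⟩ := push_exists (a := a1) (b := b1) (p := fun _ => τ) (q := ζ) (by fun_prop)
    (by fun_prop) (fun y => τm) (fun y => ⟨(ζm y).1, by linarith [(ζm y).2]⟩)
  have hψid : ∀ z, z ∉ Kc → ψ z = z := by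
    intro z hz
    rw [hψ]
    ext
    · simp only
      by_cases h1 : z.1 < a1
      · exact plp_of_le (ζm _).1 h1.le
      by_cases h2 : b1 < z.1
      · exact plp_of_ge (by linarith [(ζm z.2).2]) h2.le
      have h3 : hh z.2 = 0 := by
        apply hh0
        by_contra h3
        push Not at h1 h2 h3
        exact hz ⟨⟨h1, h2⟩, h3⟩
      simp [plp, ζ, n, h3]
    · rfl
  obtain ⟨Φ, hΦ1, hΦ2⟩ := conj_ext (U := U) (Ω := Ω) (Kc := Kc) (k := k') (j := j) hU hΩ
    (isCompact_Icc.prod isCompact_Icc) hKcU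
    (by
      intro z hz
      by_cases h : 0 < θ z
      · right
        have hzW : z ∈ W := ⟨hz, h⟩
        have h1 := sqC _ (kW 1 z hzW).1
        rw [k'pos z h]
        refine ⟨kW _ _ h1.1, ?_⟩
        rw [kinv2 _ h1.1, sqi_sq hR]
        exact ⟨sq_lt hR _, kW 1 z hzW⟩
      · left
        rw [k'neg z h]
        exact ⟨hz, by linarith⟩)
    (by
      rintro z (⟨hz, h1⟩ | ⟨hz, h1, h2⟩)
      · rw [jid z hz h1]; exact hz
      · rw [jpos z hz.2]
        exact (kW _ _ h2).1)
    (by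
      intro z hz
      by_cases h : 0 < θ z
      · have hzW : z ∈ W := ⟨hz, h⟩
        have h1 := sqC _ (kW 1 z hzW).1
        rw [jpos _ (k'C z hzW).2.1, k'pos z h, kinv2 _ h1.1, sqi_sq hR, kinv1 z hzW]
      · rw [k'neg z h, jneg z h])
    (by
      rintro z (⟨hz, h1⟩ | ⟨hz, h1, h2⟩)
      · rw [jid z hz h1, k'id z hz h1]
      · rw [jpos z hz.2, k'pos _ (kW _ _ h2).2, kinv2 _ h2, sq_sqi hR h1, kinv1 z hz])
    (by
      intro z hz
      refine ContinuousAt.continuousWithinAt ?_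
      by_cases h : θ z < η
      · refine continuousAt_id.congr ?_
        filter_upwards [hη'.mem_nhds ⟨hz, h⟩] with w hw
        exact (k'id w hw.1 hw.2).symm
      · have hzW : z ∈ W := ⟨hz, by linarith⟩
        have h1 := sqC _ (kW 1 z hzW).1
        have c1 : ContinuousAt (fun z => sq R (k 1 z)) z :=
          ContinuousAt.comp (sq_cont hR).continuousAt (kc 1 z hzW)
        have c2 : ContinuousAt (fun z => k (-1) (sq R (k 1 z))) z :=
          ContinuousAt.comp (g := k (-1)) (kc (-1) _ h1.1) c1
        refine c2.congr ?_
        filter_upwards [hW.mem_nhds hzW] with w hw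
        exact (k'pos w hw.2).symm)
    (by
      intro z hz
      refine ContinuousAt.continuousWithinAt ?_
      rcases hz with h | ⟨hz, h1, h2⟩
      · refine continuousAt_id.congr ?_
        filter_upwards [hη'.mem_nhds h] with w hw
        exact (jid w hw.1 hw.2).symm
      · have c1 : ContinuousAt (fun z => sqi R (k 1 z)) z :=
          ContinuousAt.comp (sqi_contAt hR h1) (kc 1 z hz)
        have c2 : ContinuousAt (fun z => k (-1) (sqi R (k 1 z))) z :=
          ContinuousAt.comp (g := k (-1)) (kc (-1) _ h2) c1
        refine c2.congr ?_
        filter_upwards [hW.mem_nhds hz] with w hw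
        exact (jpos w hw.2).symm)
    ψ hψid
  refine ⟨ω.trans Φ, ?_, τ, by linarith, by linarith, ?_⟩
  · intro z hz
    have h1 : ω z = z := by
      rw [hω]
      ext
      · simp only
        rcases hz with hz | hz | hz
        · exact plp_of_le τm.1 hz.le
        · exact plp_of_ge τm.2 hz.le
        · have : hh z.2 = 0 := hh0 _ (by
            rcases hz with hz | hz
            · left; linarith
            · right; linarith)
          simp [plp, ζ, this]
      · rfl
    rw [Homeomorph.trans_apply, h1]
    apply hΦ2
    rintro ⟨w, hw, rfl⟩
    by_cases hw0 : 0 < θ w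
    · have h3 := k'C w ⟨hKcU hw, hw0⟩
      have h4 := h3.1
      rcases hz with hz | hz | hz | hz
      · have := K.left (k' w) (by linarith); linarith [h3.2.1]
      · have := K.right (k' w) (by linarith); linarith [h3.2.2]
      · linarith [h4.1]
      · linarith [h4.2]
    · rw [k'neg w hw0] at hz
      have h4 := hKcU hw
      rcases hz with hz | hz | hz | hz
      · linarith [hw.1.1]
      · linarith [hw.1.2]
      · linarith [h4.1]
      · linarith [h4.2]
  · intro y hy hy'
    have e1 : ω (τ, y) = (ζ y, y) := by
      rw [hω]; simp only; rw [plp_apply τm.1 τm.2]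
    have hz : ((ζ y, y) : E) ∈ U := ⟨hy, hy'⟩
    have cases_y : y ≤ 1 ∨ N - 1 ≤ y ∨ hh y = 1 := by
      by_cases h1 : y ≤ 1
      · exact Or.inl h1
      by_cases h2 : N - 1 ≤ y
      · exact Or.inr (Or.inl h2)
      push Not at h1 h2
      exact Or.inr (Or.inr (hh1 y h1 h2))
    have t1 : θ (ζ y, y) < η := by
      have base : cl01 ((3 * ζ y + 1) / 2) < η := by
        refine max_lt hη (min_lt_of_right_lt ?_)
        have := (ζm y).2
        linarith
      rcases cases_y with h | h | h
      · rw [K.low _ h]; exact base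
      · rw [K.high _ h]; exact base
      · rw [K.left _ (by simp only [ζ, h]; linarith)]; exact hη
    have t2 : 0 < θ (n y, y) := by
      have base : 0 < cl01 ((3 * n y + 1) / 2) := by
        refine lt_max_of_lt_right (lt_min one_pos ?_)
        have := (nm y).1
        linarith
      rcases cases_y with h | h | h
      · rw [K.low _ h]; exact base
      · rw [K.high _ h]; exact base
      · rw [K.right _ (by simp only [n, h]; linarith)]; exact one_pos
    have e2 : Φ (ζ y, y) = k' (n y, y) := by
      have h1 := hΦ1 _ hz
      rw [k'id _ hz t1] at h1
      rw [h1, hψ]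
      simp only
      rw [plp_apply (ζm y).1 (by linarith [(ζm y).2])]
    rw [Homeomorph.trans_apply, e1, e2]
    exact (k'C (n y, y) ⟨⟨hy, hy'⟩, t2⟩).2

end Ann


namespace Ann
open Set Filter Topology

/-- piecewise linear interpolation -/
noncomputable def pl (a : ℤ → ℝ) (t : ℝ) : ℝ := a ⌊t⌋ + Int.fract t * (a (⌊t⌋ + 1) - a ⌊t⌋)

theorem pl_eq (a : ℤ → ℝ) (k : ℤ) {t : ℝ} (h1 : (k : ℝ) ≤ t) (h2 : t ≤ k + 1) :
    pl a t = a k + (t - k) * (a (k + 1) - a k) := by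
  rcases h2.lt_or_eq with h | h
  · have : ⌊t⌋ = k := Int.floor_eq_iff.mpr ⟨h1, h⟩
    rw [pl, Int.fract, this]
  · have : t = ((k + 1 : ℤ) : ℝ) := by push_cast; exact h
    rw [this, pl, Int.floor_intCast, Int.fract_intCast]; push_cast; ring

theorem pl_cont (a : ℤ → ℝ) : Continuous (pl a) := by
  rw [continuous_iff_continuousAt]
  intro t
  set n := ⌊t⌋ with hn
  have h1 := Int.floor_le t
  have h2 := Int.lt_floor_add_one t
  have hc : ContinuousAt (fun t : ℝ => a n + max 0 (t - n) * (a (n + 1) - a n) +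
      min 0 (t - n) * (a n - a (n - 1))) t := by fun_prop
  refine hc.congr ?_
  filter_upwards [Ioo_mem_nhds (show (n : ℝ) - 1 < t by linarith) (show t < (n : ℝ) + 1 from h2)]
    with r hr
  rcases le_total (n : ℝ) r with h | h
  · rw [pl_eq a n h hr.2.le, max_eq_right (by linarith), min_eq_left (by linarith)]; ring
  · rw [pl_eq a (n - 1) (by push_cast; exact hr.1.le) (by push_cast; linarith),
      max_eq_left (by linarith), min_eq_right (by linarith)]
    simp only [sub_add_cancel]
    push_cast; ring

theorem pl_bdd {a : ℤ → ℝ} {C : ℝ} (h : ∀ k, |a k| ≤ C) (t : ℝ) : |pl a t| ≤ C := by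
  have h1 := abs_le.mp (h ⌊t⌋)
  have h2 := abs_le.mp (h (⌊t⌋ + 1))
  have h3 := Int.fract_nonneg t
  have h4 := (Int.fract_lt_one t).le
  unfold pl
  rw [abs_le]; constructor <;> nlinarith

/-- bi-infinite lattice path -/
structure LP (X Y : ℤ → ℤ) (N L : ℤ) : Prop where
  hL : 4 ≤ L
  inj : ∀ i j, X i = X j → Y i = Y j → i = j
  step : ∀ k, (X (k + 1) - X k = 1 ∧ Y (k + 1) - Y k = 0) ∨
    (X (k + 1) - X k = -1 ∧ Y (k + 1) - Y k = 0) ∨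
    (X (k + 1) - X k = 0 ∧ Y (k + 1) - Y k = 1) ∨ (X (k + 1) - X k = 0 ∧ Y (k + 1) - Y k = -1)
  low : ∀ k ≤ 2, X k = 0 ∧ Y k = k
  high : ∀ k, L - 2 ≤ k → X k = 0 ∧ Y k = N - L + k
  mid : ∀ k, 2 ≤ k → k ≤ L - 2 → 2 ≤ Y k ∧ Y k ≤ N - 2

section defs
variable (X Y : ℤ → ℤ)
/-- step -/
def dX (k : ℤ) : ℝ := ((X (k + 1) - X k : ℤ) : ℝ)
/-- turning -/
def al (k : ℤ) : ℝ := dX Y (k - 1) * dX X k - dX X (k - 1) * dX Y k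
/-- miter x -/
def MX (k : ℤ) : ℝ := dX Y k + al X Y k * dX X k
/-- miter y -/
def MY (k : ℤ) : ℝ := -dX X k + al X Y k * dX Y k
/-- collar map -/
noncomputable def cm (q : E) : E :=
  (pl (fun k => (X k : ℝ)) q.2 + q.1 * pl (MX X Y) q.2,
   pl (fun k => (Y k : ℝ)) q.2 + q.1 * pl (MY X Y) q.2)
/-- normal coordinate -/
def uu (k : ℤ) (z : E) : ℝ := (z.1 - X k) * dX Y k - (z.2 - Y k) * dX X k
/-- tangential coordinate -/
def ss (k : ℤ) (z : E) : ℝ := (z.1 - X k) * dX X k + (z.2 - Y k) * dX Y k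
end defs

theorem cm_cont (X Y : ℤ → ℤ) : Continuous (cm X Y) := by
  have := pl_cont (fun k => (X k : ℝ))
  have := pl_cont (fun k => (Y k : ℝ))
  have := pl_cont (MX X Y)
  have := pl_cont (MY X Y)
  unfold cm; fun_prop

section L
variable {X Y : ℤ → ℤ} {N L : ℤ}

theorem LP.steps (P : LP X Y N L) (k : ℤ) : (dX X k = 1 ∧ dX Y k = 0) ∨ (dX X k = -1 ∧ dX Y k = 0) ∨
    (dX X k = 0 ∧ dX Y k = 1) ∨ (dX X k = 0 ∧ dX Y k = -1) := by
  unfold dX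
  exact_mod_cast P.step k

theorem LP.sqs (P : LP X Y N L) (k : ℤ) : dX X k ^ 2 + dX Y k ^ 2 = 1 := by
  rcases P.steps k with ⟨h, h'⟩ | ⟨h, h'⟩ | ⟨h, h'⟩ | ⟨h, h'⟩ <;> rw [h, h'] <;> norm_num

theorem LP.turn (P : LP X Y N L) (k : ℤ) :
    (al X Y (k + 1) = 0 ∧ dX X (k + 1) = dX X k ∧ dX Y (k + 1) = dX Y k) ∨
    (al X Y (k + 1) = 1 ∧ dX X (k + 1) = dX Y k ∧ dX Y (k + 1) = -dX X k) ∨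
    (al X Y (k + 1) = -1 ∧ dX X (k + 1) = -dX Y k ∧ dX Y (k + 1) = dX X k) := by
  have nb : ¬ (dX X (k + 1) = -dX X k ∧ dX Y (k + 1) = -dX Y k) := by
    rintro ⟨h1, h2⟩
    unfold dX at h1 h2
    norm_cast at h1 h2
    have := P.inj (k + 1 + 1) k (by omega) (by omega)
    omega
  unfold al
  rw [add_sub_cancel_right]
  rcases P.steps k with ⟨h, h'⟩ | ⟨h, h'⟩ | ⟨h, h'⟩ | ⟨h, h'⟩ <;>
  rcases P.steps (k + 1) with ⟨g, g'⟩ | ⟨g, g'⟩ | ⟨g, g'⟩ | ⟨g, g'⟩ <;>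
  rw [h, h', g, g'] at nb <;> rw [h, h', g, g'] <;>
  first | (exfalso; revert nb; norm_num; done) | norm_num

theorem LP.al_abs (P : LP X Y N L) (k : ℤ) : al X Y k = 0 ∨ al X Y k = 1 ∨ al X Y k = -1 := by
  have := P.turn (k - 1)
  rw [sub_add_cancel] at this
  tauto

theorem LP.form (P : LP X Y N L) (k : ℤ) (u t : ℝ) (h1 : (k : ℝ) ≤ t) (h2 : t ≤ k + 1) :
    uu X Y k (cm X Y (u, t)) = u ∧ ss X Y k (cm X Y (u, t)) =
      (t - k) + u * ((1 - (t - k)) * al X Y k - (t - k) * al X Y (k + 1)) := by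
  have hM1 : MX X Y (k + 1) = dX Y k - al X Y (k + 1) * dX X k := by
    unfold MX
    rcases P.turn k with ⟨h, h', h''⟩ | ⟨h, h', h''⟩ | ⟨h, h', h''⟩ <;> rw [h, h', h''] <;> ring
  have hM2 : MY X Y (k + 1) = -dX X k - al X Y (k + 1) * dX Y k := by
    unfold MY
    rcases P.turn k with ⟨h, h', h''⟩ | ⟨h, h', h''⟩ | ⟨h, h', h''⟩ <;> rw [h, h', h''] <;> ring
  have eX : (X (k + 1) : ℝ) - X k = dX X k := by unfold dX; push_cast; ring
  have eY : (Y (k + 1) : ℝ) - Y k = dX Y k := by unfold dX; push_cast; ring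
  have hs := P.sqs k
  simp only [uu, ss, cm]
  rw [pl_eq _ k h1 h2, pl_eq _ k h1 h2, pl_eq _ k h1 h2, pl_eq _ k h1 h2, hM1, hM2, eX, eY, MX, MY]
  generalize dX X k = p at *
  generalize dX Y k = q at *
  constructor
  · linear_combination (u) * hs
  · linear_combination ((t - k) + u * ((1 - (t - k)) * al X Y k - (t - k) * al X Y (k + 1))) * hs

theorem LP.recon (P : LP X Y N L) (k : ℤ) {z w : E} (h1 : uu X Y k z = uu X Y k w) (h2 : ss X Y k z = ss X Y k w) :
    z = w := by
  have hs := P.sqs k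
  unfold uu at h1
  unfold ss at h2
  generalize dX X k = p at *
  generalize dX Y k = q at *
  ext
  · linear_combination q * h1 + p * h2 - (z.1 - w.1) * hs
  · linear_combination -p * h1 + q * h2 - (z.2 - w.2) * hs

theorem LP.trans (P : LP X Y N L) (k : ℤ) (z : E) :
    (al X Y (k + 1) = 0 ∧ uu X Y (k + 1) z = uu X Y k z ∧ ss X Y (k + 1) z = ss X Y k z - 1) ∨
    (al X Y (k + 1) = 1 ∧ uu X Y (k + 1) z = 1 - ss X Y k z ∧ ss X Y (k + 1) z = uu X Y k z) ∨
    (al X Y (k + 1) = -1 ∧ uu X Y (k + 1) z = ss X Y k z - 1 ∧ ss X Y (k + 1) z = -uu X Y k z) := by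
  have hs := P.sqs k
  have eX : (X (k + 1) : ℝ) = X k + dX X k := by unfold dX; push_cast; ring
  have eY : (Y (k + 1) : ℝ) = Y k + dX Y k := by unfold dX; push_cast; ring
  unfold uu ss
  rw [eX, eY]
  rcases P.turn k with ⟨h, h', h''⟩ | ⟨h, h', h''⟩ | ⟨h, h', h''⟩
  · left; rw [h', h'']; refine ⟨h, by ring, by linear_combination -hs⟩
  · right; left; rw [h', h'']; refine ⟨h, by linear_combination hs, by ring⟩
  · right; right; rw [h', h'']; refine ⟨h, by linear_combination -hs, by ring⟩

theorem LP.ss_bd (P : LP X Y N L) (k : ℤ) {u t : ℝ} (hu : |u| ≤ 1 / 3) (h1 : (k : ℝ) ≤ t) (h2 : t ≤ k + 1) :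
    u * al X Y k ≤ ss X Y k (cm X Y (u, t)) ∧
      ss X Y k (cm X Y (u, t)) ≤ 1 - u * al X Y (k + 1) ∧
      (t < k + 1 → ss X Y k (cm X Y (u, t)) < 1 - u * al X Y (k + 1)) ∧
      (k < t → u * al X Y k < ss X Y k (cm X Y (u, t))) := by
  rw [(P.form k u t h1 h2).2]
  obtain ⟨a1, a2⟩ := abs_le.mp hu
  have hD : 0 < 1 - u * (al X Y k + al X Y (k + 1)) := by
    rcases P.al_abs k with h | h | h <;> rcases P.al_abs (k + 1) with g | g | g <;>
      rw [h, g] <;> linarith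
  have e1 : (t - k) + u * ((1 - (t - k)) * al X Y k - (t - k) * al X Y (k + 1)) =
    u * al X Y k + (t - k) * (1 - u * (al X Y k + al X Y (k + 1))) := by ring
  have e2 : u * al X Y k + (t - k) * (1 - u * (al X Y k + al X Y (k + 1))) =
    1 - u * al X Y (k + 1) - (1 + k - t) * (1 - u * (al X Y k + al X Y (k + 1))) := by ring
  refine ⟨?_, ?_, fun h => ?_, fun h => ?_⟩
  · rw [e1]; have := mul_nonneg (sub_nonneg.mpr h1) hD.le; linarith
  · rw [e1, e2]
    have := mul_nonneg (show 0 ≤ 1 + (k : ℝ) - t by linarith) hD.le; linarith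
  · rw [e1, e2]
    have := mul_pos (show 0 < 1 + (k : ℝ) - t by linarith) hD; linarith
  · rw [e1]; have := mul_pos (sub_pos.mpr h) hD; linarith

theorem LP.ss_bd' (P : LP X Y N L) (k : ℤ) {u t : ℝ} (hu : |u| ≤ 1 / 3) (h1 : (k : ℝ) ≤ t) (h2 : t ≤ k + 1) :
    -|u| ≤ ss X Y k (cm X Y (u, t)) ∧ ss X Y k (cm X Y (u, t)) ≤ 1 + |u| := by
  obtain ⟨b1, b2, -, -⟩ := P.ss_bd k hu h1 h2
  have := neg_abs_le u
  have := le_abs_self u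
  constructor
  · rcases P.al_abs k with h | h | h <;> rw [h] at b1 <;> linarith [abs_nonneg u]
  · rcases P.al_abs (k + 1) with h | h | h <;> rw [h] at b2 <;> linarith [abs_nonneg u]

/-- bounding box -/
theorem LP.box (P : LP X Y N L) (k : ℤ) {u t : ℝ} (hu : |u| ≤ 1 / 3) (h1 : (k : ℝ) ≤ t) (h2 : t ≤ k + 1) :
    (((min (X k) (X (k + 1)) : ℤ) : ℝ) - 1 / 3 ≤ (cm X Y (u, t)).1 ∧
      (cm X Y (u, t)).1 ≤ ((max (X k) (X (k + 1)) : ℤ) : ℝ) + 1 / 3) ∧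
    (((min (Y k) (Y (k + 1)) : ℤ) : ℝ) - 1 / 3 ≤ (cm X Y (u, t)).2 ∧
      (cm X Y (u, t)).2 ≤ ((max (Y k) (Y (k + 1)) : ℤ) : ℝ) + 1 / 3) := by
  obtain ⟨b1, b2⟩ := P.ss_bd' k hu h1 h2
  have b3 := (P.form k u t h1 h2).1
  obtain ⟨a1, a2⟩ := abs_le.mp hu
  set z := cm X Y (u, t)
  have eX : (X (k + 1) : ℝ) = X k + dX X k := by unfold dX; push_cast; ring
  have eY : (Y (k + 1) : ℝ) = Y k + dX Y k := by unfold dX; push_cast; ring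
  push_cast
  rw [eX, eY]
  unfold uu at b3
  unfold ss at b1 b2
  rcases P.steps k with ⟨h, h'⟩ | ⟨h, h'⟩ | ⟨h, h'⟩ | ⟨h, h'⟩ <;> rw [h, h'] at b1 b2 b3 <;> rw [h, h'] <;>
  · rw [min_def, min_def, max_def, max_def]
    refine ⟨⟨?_, ?_⟩, ?_, ?_⟩ <;> split_ifs <;> linarith

theorem LP.far (P : LP X Y N L) {k l : ℤ} (h : k + 2 ≤ l) : ¬ ((min (X k) (X (k + 1)) ≤ max (X l) (X (l + 1)) ∧
    min (X l) (X (l + 1)) ≤ max (X k) (X (k + 1))) ∧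
    (min (Y k) (Y (k + 1)) ≤ max (Y l) (Y (l + 1)) ∧
    min (Y l) (Y (l + 1)) ≤ max (Y k) (Y (k + 1)))) := by
  intro hh
  have i1 := P.inj k l
  have i2 := P.inj k (l + 1)
  have i3 := P.inj (k + 1) l
  have i4 := P.inj (k + 1) (l + 1)
  have s1 := P.step k
  have s2 := P.step l
  have j1 : ¬ (X k = X l ∧ Y k = Y l) := fun h => by have := i1 h.1 h.2; omega
  have j2 : ¬ (X k = X (l + 1) ∧ Y k = Y (l + 1)) := fun h => by have := i2 h.1 h.2; omega
  have j3 : ¬ (X (k + 1) = X l ∧ Y (k + 1) = Y l) := fun h => by have := i3 h.1 h.2; omega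
  have j4 : ¬ (X (k + 1) = X (l + 1) ∧ Y (k + 1) = Y (l + 1)) := fun h => by
    have := i4 h.1 h.2; omega
  clear i1 i2 i3 i4
  rcases s1 with ⟨h1, h2⟩ | ⟨h1, h2⟩ | ⟨h1, h2⟩ | ⟨h1, h2⟩ <;>
  rcases s2 with ⟨g1, g2⟩ | ⟨g1, g2⟩ | ⟨g1, g2⟩ | ⟨g1, g2⟩ <;> omega

theorem LP.inj_aux (P : LP X Y N L) {u t u' t' : ℝ} (hu : |u| ≤ 1 / 3) (hu' : |u'| ≤ 1 / 3) (h : t ≤ t')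
    (he : cm X Y (u, t) = cm X Y (u', t')) : u = u' ∧ t = t' := by
  set k := ⌊t⌋ with hk
  set l := ⌊t'⌋ with hl
  have k1 : (k : ℝ) ≤ t := Int.floor_le t
  have k2 : t < k + 1 := Int.lt_floor_add_one t
  have l1 : (l : ℝ) ≤ t' := Int.floor_le t'
  have l2 : t' < l + 1 := Int.lt_floor_add_one t'
  have hkl : k ≤ l := Int.floor_mono h
  have fk := P.form k u t k1 k2.le
  have fl := P.form l u' t' l1 l2.le
  have bk := P.ss_bd k hu k1 k2.le
  have bl := P.ss_bd l hu' l1 l2.le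
  rcases hkl.eq_or_lt with hkl | hkl
  · rw [← hkl] at fl
    have hu : u = u' := by rw [← fk.1, ← fl.1, he]
    refine ⟨hu, ?_⟩
    have e : ss X Y k (cm X Y (u, t)) = ss X Y k (cm X Y (u', t')) := by rw [he]
    rw [fk.2, fl.2, ← hu] at e
    obtain ⟨a1, a2⟩ := abs_le.mp (‹|u| ≤ 1 / 3›)
    have hD : 0 < 1 - u * (al X Y k + al X Y (k + 1)) := by
      rcases P.al_abs k with h | h | h <;> rcases P.al_abs (k + 1) with g | g | g <;>
        rw [h, g] <;> linarith
    have : (t - t') * (1 - u * (al X Y k + al X Y (k + 1))) = 0 := by linear_combination e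
    rcases mul_eq_zero.mp this with h | h
    · linarith
    · exact absurd h hD.ne'
  · exfalso
    by_cases hkl' : l = k + 1
    · rw [hkl'] at bl fl
      rw [← he] at bl fl
      have b3 := bk.2.2.1 k2
      have u1 := fk.1
      have u2 := fl.1
      rcases P.trans k (cm X Y (u, t)) with ⟨e1, e2, e3⟩ | ⟨e1, e2, e3⟩ | ⟨e1, e2, e3⟩ <;>
      · rw [e1] at b3
        have b4 := bl.1
        rw [e1] at b4
        linarith
    · refine P.far (k := k) (l := l) (by omega) ?_
      have x1 := P.box k hu k1 k2.le
      have x2 := P.box l hu' l1 l2.le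
      rw [← he] at x2
      have key : ∀ a b : ℤ, (a : ℝ) - 1 / 3 ≤ b + 1 / 3 → a ≤ b := by
        intro a b hab
        by_contra hc
        push Not at hc
        have : (b : ℝ) + 1 ≤ a := by exact_mod_cast hc
        linarith
      refine ⟨⟨key _ _ ?_, key _ _ ?_⟩, key _ _ ?_, key _ _ ?_⟩
      · linarith [x1.1.1, x2.1.2]
      · linarith [x1.1.2, x2.1.1]
      · linarith [x1.2.1, x2.2.2]
      · linarith [x1.2.2, x2.2.1]

theorem LP.cm_inj (P : LP X Y N L) {q q' : E} (hu : |q.1| ≤ 1 / 3) (hu' : |q'.1| ≤ 1 / 3)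
    (he : cm X Y q = cm X Y q') : q = q' := by
  rcases le_total q.2 q'.2 with h | h
  · have := P.inj_aux hu hu' h he
    exact Prod.ext this.1 this.2
  · have := P.inj_aux hu' hu h he.symm
    exact Prod.ext this.1.symm this.2.symm

/-- solve inside a cell -/
theorem LP.solve (P : LP X Y N L) (k : ℤ) {z : E} (hu : |uu X Y k z| < 1 / 3)
    (h1 : uu X Y k z * al X Y k ≤ ss X Y k z) (h2 : ss X Y k z ≤ 1 - uu X Y k z * al X Y (k + 1)) :
    ∃ q : E, |q.1| < 1 / 3 ∧ cm X Y q = z := by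
  obtain ⟨a1, a2⟩ := abs_lt.mp hu
  set u := uu X Y k z with hudef
  have hD : 0 < 1 - u * (al X Y k + al X Y (k + 1)) := by
    rcases P.al_abs k with h | h | h <;> rcases P.al_abs (k + 1) with g | g | g <;>
      rw [h, g] <;> linarith
  set s := (ss X Y k z - u * al X Y k) / (1 - u * (al X Y k + al X Y (k + 1))) with hs
  have s0 : 0 ≤ s := div_nonneg (by linarith) hD.le
  have s1 : s ≤ 1 := by rw [hs, div_le_one hD]; linarith
  refine ⟨(u, k + s), hu, ?_⟩
  have f := P.form k u (k + s) (by linarith) (by linarith)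
  refine P.recon k f.1 ?_
  rw [f.2]
  have e : s * (1 - u * (al X Y k + al X Y (k + 1))) = ss X Y k z - u * al X Y k := by
    rw [hs]; field_simp
  linear_combination e

theorem LP.solve' (P : LP X Y N L) (k : ℤ) {z : E} (hu : |uu X Y k z| < 1 / 3)
    (h1 : -(1 / 3) < ss X Y k z) (h2 : ss X Y k z < 4 / 3) :
    ∃ q : E, |q.1| < 1 / 3 ∧ cm X Y q = z := by
  obtain ⟨a1, a2⟩ := abs_lt.mp hu
  by_cases g1 : uu X Y k z * al X Y k ≤ ss X Y k z
  · by_cases g2 : ss X Y k z ≤ 1 - uu X Y k z * al X Y (k + 1)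
    · exact P.solve k hu g1 g2
    · push Not at g2
      have hal := P.al_abs (k + 1 + 1)
      rcases P.trans k z with ⟨e1, e2, e3⟩ | ⟨e1, e2, e3⟩ | ⟨e1, e2, e3⟩ <;>
      · rw [e1] at g2
        refine P.solve (k + 1) ?_ ?_ ?_
        · rw [e2, abs_lt]; constructor <;> linarith
        · rw [e1, e2, e3]; linarith
        · rw [e2, e3]; rcases hal with h | h | h <;> rw [h] <;> linarith
  · push Not at g1
    have hal := P.al_abs (k - 1)
    have ht := P.trans (k - 1) z
    rw [sub_add_cancel] at ht
    rcases ht with ⟨e1, e2, e3⟩ | ⟨e1, e2, e3⟩ | ⟨e1, e2, e3⟩ <;>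
    · rw [e1] at g1
      refine P.solve (k - 1) ?_ ?_ ?_
      · rw [abs_lt]; constructor <;> linarith
      · rcases hal with h | h | h <;> rw [h] <;> linarith
      · rw [sub_add_cancel, e1]; linarith

theorem LP.image_open (P : LP X Y N L) : IsOpen (cm X Y '' {q | |q.1| < 1 / 3}) := by
  have : cm X Y '' {q | |q.1| < 1 / 3} =
      ⋃ k : ℤ, {z | |uu X Y k z| < 1 / 3 ∧ (-(1 / 3) < ss X Y k z ∧ ss X Y k z < 4 / 3)} := by
    ext z
    simp only [mem_image, mem_iUnion]
    constructor
    · rintro ⟨⟨u, t⟩, hu, rfl⟩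
      have hu : |u| < 1 / 3 := hu
      have k1 := Int.floor_le t
      have k2 := (Int.lt_floor_add_one t).le
      have b := P.ss_bd' ⌊t⌋ hu.le k1 k2
      refine ⟨⌊t⌋, ?_, ?_, ?_⟩
      · rw [(P.form ⌊t⌋ u t k1 k2).1]; exact hu
      · linarith [b.1]
      · linarith [b.2]
    · rintro ⟨k, h1, h2, h3⟩
      obtain ⟨q, hq, e⟩ := P.solve' k h1 h2 h3
      exact ⟨q, hq, e⟩
  rw [this]
  refine isOpen_iUnion fun k => ?_
  have c1 : Continuous (uu X Y k) := by unfold uu; fun_prop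
  have c2 : Continuous (ss X Y k) := by unfold ss; fun_prop
  exact (isOpen_lt c1.abs continuous_const).inter
    ((isOpen_lt continuous_const c2).inter (isOpen_lt c2 continuous_const))

end L
end Ann


namespace Ann
open Set Filter Topology

theorem isClosedMap_of_bdd {f : E → E} (hf : Continuous f) (C : ℝ)
    (hC : ∀ z, ‖f z - z‖ ≤ C) : IsClosedMap f := by
  have : IsProperMap f := by
    rw [isProperMap_iff_tendsto_cocompact]
    refine ⟨hf, ?_⟩
    rw [← Metric.cobounded_eq_cocompact, ← tendsto_norm_atTop_iff_cobounded]
    refine tendsto_atTop_mono (f := fun z : E => ‖z‖ - C) (fun z => ?_)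
      (tendsto_atTop_add_const_right _ _ tendsto_norm_cobounded_atTop)
    have h1 := hC z
    have h2 := norm_sub_norm_le z (f z)
    rw [norm_sub_rev] at h2
    linarith
  exact this.isClosedMap

section L
variable {X Y : ℤ → ℤ} {N L : ℤ}

theorem LP.dlow (P : LP X Y N L) {k : ℤ} (hk : k ≤ 1) : dX X k = 0 ∧ dX Y k = 1 := by
  have h1 := P.low k (by omega)
  have h2 := P.low (k + 1) (by omega)
  unfold dX
  rw [h1.1, h1.2, h2.1, h2.2]
  constructor <;> push_cast <;> ring

theorem LP.dhigh (P : LP X Y N L) {k : ℤ} (hk : L - 2 ≤ k) : dX X k = 0 ∧ dX Y k = 1 := by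
  have h1 := P.high k (by omega)
  have h2 := P.high (k + 1) (by omega)
  unfold dX
  rw [h1.1, h1.2, h2.1, h2.2]
  constructor <;> push_cast <;> ring

theorem LP.alow (P : LP X Y N L) {k : ℤ} (hk : k ≤ 1) : al X Y k = 0 := by
  have h1 := P.dlow hk
  have h2 := P.dlow (k := k - 1) (by omega)
  unfold al
  rw [h1.1, h1.2, h2.1, h2.2]; ring

theorem LP.ahigh (P : LP X Y N L) {k : ℤ} (hk : L - 1 ≤ k) : al X Y k = 0 := by
  have h1 := P.dhigh (k := k) (by omega)
  have h2 := P.dhigh (k := k - 1) (by omega)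
  unfold al
  rw [h1.1, h1.2, h2.1, h2.2]; ring

theorem LP.hN (P : LP X Y N L) : 4 ≤ N := by
  have := P.mid 2 le_rfl (by have := P.hL; omega)
  omega

theorem LP.Y_ge (P : LP X Y N L) {k : ℤ} (hk : 2 ≤ k) : 2 ≤ Y k := by
  by_cases h : k ≤ L - 2
  · exact (P.mid k hk h).1
  · have := P.hN
    have := (P.high k (by omega)).2
    omega

theorem LP.Y_le (P : LP X Y N L) {k : ℤ} (hk : k ≤ L - 2) : Y k ≤ N - 2 := by
  by_cases h : 2 ≤ k
  · exact (P.mid k h hk).2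
  · have := P.hN
    have := (P.low k (by omega)).2
    omega

theorem LP.Y_bdd (P : LP X Y N L) (k : ℤ) : |Y k - k| ≤ N + L := by
  have := P.hN
  have := P.hL
  rw [abs_le]
  by_cases h : k ≤ 2
  · have := (P.low k h).2; omega
  by_cases h' : k ≤ L - 2
  · have := P.mid k (by omega) h'; omega
  · have := (P.high k (by omega)).2; omega

theorem LP.cm_low (P : LP X Y N L) {u t : ℝ} (ht : t ≤ 1) : cm X Y (u, t) = (u, t) := by
  obtain ⟨k, hk1, hk2⟩ : ∃ k : ℤ, (k : ℝ) < t ∧ t ≤ k + 1 :=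
    ⟨⌈t⌉ - 1, by push_cast; linarith [Int.ceil_lt_add_one t], by push_cast; linarith [Int.le_ceil t]⟩
  have hk : k ≤ 0 := by
    have : (k : ℝ) < 1 := by linarith
    have : k < 1 := by exact_mod_cast this
    omega
  have f := P.form k u t hk1.le hk2
  refine P.recon k ?_ ?_
  · rw [f.1, uu, (P.dlow (k := k) (by omega)).1, (P.dlow (k := k) (by omega)).2,
      (P.low k (by omega)).1]; push_cast; ring
  · rw [f.2, ss, (P.dlow (k := k) (by omega)).1, (P.dlow (k := k) (by omega)).2,
      (P.low k (by omega)).2, P.alow (k := k) (by omega), P.alow (k := k + 1) (by omega)]; ring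

theorem LP.cm_high (P : LP X Y N L) {u t : ℝ} (ht : (L : ℝ) - 1 ≤ t) : cm X Y (u, t) = (u, t + N - L) := by
  have hk1 := Int.floor_le t
  have hk2 := (Int.lt_floor_add_one t).le
  set k := ⌊t⌋
  have hk : L - 1 ≤ k := Int.le_floor.mpr (by push_cast; exact ht)
  have f := P.form k u t hk1 hk2
  have h0 := P.high k (by omega)
  have h1 : (Y k : ℝ) = N - L + k := by rw [h0.2]; push_cast; ring
  refine P.recon k ?_ ?_
  · rw [f.1, uu, (P.dhigh (k := k) (by omega)).1, (P.dhigh (k := k) (by omega)).2,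
      h0.1]; push_cast; ring
  · rw [f.2, ss, (P.dhigh (k := k) (by omega)).1, (P.dhigh (k := k) (by omega)).2,
      h1, P.ahigh (k := k) (by omega), P.ahigh (k := k + 1) (by omega)]; ring

theorem LP.t_low (P : LP X Y N L) {u t : ℝ} (hu : |u| ≤ 1 / 3) (hz : (cm X Y (u, t)).2 ≤ 1) : t ≤ 1 := by
  by_contra ht
  push Not at ht
  have hk1 := Int.floor_le t
  have hk2 := (Int.lt_floor_add_one t).le
  have hk : 1 ≤ ⌊t⌋ := Int.le_floor.mpr (by push_cast; exact ht.le)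
  generalize ⌊t⌋ = k at *
  rcases hk.eq_or_lt with h | h
  · rw [← h] at hk1 hk2
    have b := (P.ss_bd 1 hu hk1 hk2).2.2.2 (by push_cast; exact ht)
    rw [P.alow le_rfl, ss, (P.dlow le_rfl).1, (P.dlow le_rfl).2, (P.low 1 (by norm_num)).2] at b
    push_cast at b; linarith
  · have b := (P.box k hu hk1 hk2).2.1
    have : (2 : ℤ) ≤ min (Y k) (Y (k + 1)) := le_min (P.Y_ge (by omega)) (P.Y_ge (by omega))
    have : (2 : ℝ) ≤ ((min (Y k) (Y (k + 1)) : ℤ) : ℝ) := by exact_mod_cast this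
    linarith

theorem LP.t_high (P : LP X Y N L) {u t : ℝ} (hu : |u| ≤ 1 / 3) (hz : (N : ℝ) - 1 ≤ (cm X Y (u, t)).2) :
    (L : ℝ) - 1 ≤ t := by
  by_contra ht
  push Not at ht
  have hk1 := Int.floor_le t
  have hk2 := (Int.lt_floor_add_one t).le
  have hk : ⌊t⌋ < L - 1 := Int.floor_lt.mpr (by push_cast; exact ht)
  generalize ⌊t⌋ = k at *
  rcases (show k = L - 2 ∨ k ≤ L - 3 by omega) with h | h
  · rw [h] at hk1 hk2
    have b := (P.ss_bd (L - 2) hu hk1 hk2).2.2.1 (by push_cast; linarith)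
    rw [P.ahigh (by omega), ss, (P.dhigh le_rfl).1, (P.dhigh le_rfl).2, (P.high (L - 2) le_rfl).2]
      at b
    push_cast at b; linarith
  · have b := (P.box k hu hk1 hk2).2.2
    have : max (Y k) (Y (k + 1)) ≤ N - 2 := max_le (P.Y_le (by omega)) (P.Y_le (by omega))
    have : ((max (Y k) (Y (k + 1)) : ℤ) : ℝ) ≤ N - 2 := by exact_mod_cast this
    linarith

theorem LP.cm_x (P : LP X Y N L) {X0 X1 : ℤ} (hX : ∀ k, X0 ≤ X k ∧ X k ≤ X1) {u t : ℝ} (hu : |u| ≤ 1 / 3) :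
    X0 - 1 / 3 ≤ (cm X Y (u, t)).1 ∧ (cm X Y (u, t)).1 ≤ X1 + 1 / 3 := by
  have b := (P.box ⌊t⌋ hu (Int.floor_le t) (Int.lt_floor_add_one t).le).1
  have h1 : X0 ≤ min (X ⌊t⌋) (X (⌊t⌋ + 1)) := le_min (hX _).1 (hX _).1
  have h2 : max (X ⌊t⌋) (X (⌊t⌋ + 1)) ≤ X1 := max_le (hX _).2 (hX _).2
  have h1 : (X0 : ℝ) ≤ ((min (X ⌊t⌋) (X (⌊t⌋ + 1)) : ℤ) : ℝ) := by exact_mod_cast h1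
  have h2 : ((max (X ⌊t⌋) (X (⌊t⌋ + 1)) : ℤ) : ℝ) ≤ X1 := by exact_mod_cast h2
  constructor <;> linarith

theorem LP.cm_y (P : LP X Y N L) {u t : ℝ} (hu : |u| ≤ 1 / 3) : |(cm X Y (u, t)).2 - t| ≤ N + L + 3 := by
  have b := (P.box ⌊t⌋ hu (Int.floor_le t) (Int.lt_floor_add_one t).le).2
  have k1 := Int.floor_le t
  have k2 := (Int.lt_floor_add_one t).le
  generalize ⌊t⌋ = k at *
  have h1 := abs_le.mp (P.Y_bdd k)
  have h2 := abs_le.mp (P.Y_bdd (k + 1))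
  have h3 : k - (N + L) ≤ min (Y k) (Y (k + 1)) := le_min (by omega) (by omega)
  have h4 : max (Y k) (Y (k + 1)) ≤ k + 1 + (N + L) := max_le (by omega) (by omega)
  have h3 : (k : ℝ) - (N + L) ≤ ((min (Y k) (Y (k + 1)) : ℤ) : ℝ) := by exact_mod_cast h3
  have h4 : ((max (Y k) (Y (k + 1)) : ℤ) : ℝ) ≤ k + 1 + (N + L) := by exact_mod_cast h4
  rw [abs_le]; constructor <;> linarith

theorem LP.closed_image (P : LP X Y N L) {X0 X1 : ℤ} (hX : ∀ k, X0 ≤ X k ∧ X k ≤ X1) {W : Set E} (hW : IsClosed W) :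
    IsClosed (cm X Y '' (W ∩ {q | |q.1| ≤ 1 / 3})) := by
  let cl : ℝ → ℝ := fun u => max (-(1 / 3)) (min (1 / 3) u)
  have hcl : ∀ u, |cl u| ≤ 1 / 3 := fun u => abs_le.mpr
    ⟨le_max_left _ _, max_le (by norm_num) (min_le_left _ _)⟩
  have hcl' : ∀ u, |u| ≤ 1 / 3 → cl u = u := fun u hu => by
    have := abs_le.mp hu
    show max _ (min _ _) = _
    rw [min_eq_right this.2, max_eq_right this.1]
  let g : E → E := fun q => cm X Y (cl q.1, q.2) + (q.1 - cl q.1, 0)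
  have hcc : Continuous cl := by fun_prop
  have hg : Continuous g := by
    have := cm_cont X Y
    fun_prop
  have hC : ∀ q, ‖g q - q‖ ≤ max (|(X0 : ℝ)| + |(X1 : ℝ)| + 1) (N + L + 3 : ℝ) := by
    intro q
    have h1 := P.cm_x hX (t := q.2) (hcl q.1)
    have h2 := P.cm_y (t := q.2) (hcl q.1)
    have h3 := abs_le.mp (hcl q.1)
    rw [Prod.norm_def]
    refine max_le_max ?_ ?_
    · simp only [g, Prod.fst_sub, Prod.fst_add, Real.norm_eq_abs]
      have a1 := abs_le.mp (le_refl |(X0 : ℝ)|)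
      have a2 := abs_le.mp (le_refl |(X1 : ℝ)|)
      have a3 := abs_nonneg (X0 : ℝ)
      have a4 := abs_nonneg (X1 : ℝ)
      push_cast
      rw [abs_le]; constructor <;> linarith
    · simp only [g, Prod.snd_sub, Prod.snd_add, Real.norm_eq_abs, add_zero]
      exact h2
  have hcm := isClosedMap_of_bdd hg _ hC
  have he : cm X Y '' (W ∩ {q | |q.1| ≤ 1 / 3}) = g '' (W ∩ {q | |q.1| ≤ 1 / 3}) := by
    refine image_congr fun q hq => ?_
    simp only [g, hcl' _ hq.2, sub_self, Prod.mk.eta]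
    exact (add_zero _).symm
  rw [he]
  refine hcm _ (hW.inter (isClosed_le (by fun_prop) continuous_const))

theorem LP.collar_exists (P : LP X Y N L) {X0 X1 : ℤ} (hX : ∀ k, X0 ≤ X k ∧ X k ≤ X1) :
    ∃ (c : E → E) (θ tt : E → ℝ), Collar N L (X0 - 1 / 2) (X1 + 1 / 2) c θ tt ∧
      ∀ z : E, 0 < θ z → θ z < 1 → 0 < z.2 → z.2 < N →
        ∃ k, 0 ≤ k ∧ k ≤ L ∧ |z.1 - X k| ≤ 4 / 3 ∧ |z.2 - Y k| ≤ 4 / 3 := by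
  classical
  obtain ⟨D, hD⟩ : ∃ D : Set E, D = {q | |q.1| ≤ 1 / 3} := ⟨_, rfl⟩
  have memD : ∀ q : E, q ∈ D ↔ |q.1| ≤ 1 / 3 := fun q => by rw [hD]; rfl
  obtain ⟨ic, hic⟩ : ∃ ic : E → E, ∀ q, q ∈ D → ic (cm X Y q) = q := by
    refine ⟨Function.invFunOn (cm X Y) D, fun q hq => ?_⟩
    have h1 := Function.invFunOn_mem (f := cm X Y) (s := D) ⟨q, hq, rfl⟩
    have h2 := Function.invFunOn_eq (f := cm X Y) (s := D) ⟨q, hq, rfl⟩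
    exact P.cm_inj ((memD _).mp h1) ((memD _).mp hq) h2
  have hCb : IsClosed (cm X Y '' D) := by
    have := P.closed_image hX isClosed_univ
    rwa [univ_inter, ← hD] at this
  have icc : ContinuousOn ic (cm X Y '' D) := by
    rw [continuousOn_iff_isClosed]
    intro W hW
    refine ⟨_, P.closed_image hX hW, ?_⟩
    rw [← hD]
    ext z
    constructor
    · rintro ⟨h1, q, hq, rfl⟩
      rw [mem_preimage, hic q hq] at h1
      exact ⟨⟨q, ⟨h1, hq⟩, rfl⟩, q, hq, rfl⟩
    · rintro ⟨⟨q, ⟨h1, hq⟩, rfl⟩, -⟩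
      refine ⟨?_, q, hq, rfl⟩
      rw [mem_preimage, hic q hq]; exact h1
  obtain ⟨F, hF1, hF2⟩ : ∃ F : E → AddCircle (1 : ℝ),
      (∀ q, q ∈ D → F (cm X Y q) = (((3 * q.1 + 1) / 2 : ℝ) : AddCircle (1 : ℝ))) ∧
      ∀ z, z ∉ cm X Y '' D → F z = 0 := by
    refine ⟨fun z => if z ∈ cm X Y '' D then (((3 * (ic z).1 + 1) / 2 : ℝ) : AddCircle (1 : ℝ))
      else 0, fun q hq => ?_, fun z hz => if_neg hz⟩
    show ite _ _ _ = _
    rw [if_pos ⟨q, hq, rfl⟩, hic q hq]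
  have Fc : Continuous F := by
    have hU : IsClosed (cm X Y '' {q | |q.1| < 1 / 3})ᶜ := P.image_open.isClosed_compl
    have hun : cm X Y '' D ∪ (cm X Y '' {q | |q.1| < 1 / 3})ᶜ = univ := by
      ext z
      simp only [mem_union, mem_univ, iff_true, mem_compl_iff]
      by_contra hc
      push Not at hc
      obtain ⟨h1, q, hq, rfl⟩ := hc
      exact h1 ⟨q, (memD q).mpr (le_of_lt hq), rfl⟩
    rw [← continuousOn_univ, ← hun]
    refine ContinuousOn.union_of_isClosed ?_ ?_ hCb hU
    · have : ContinuousOn (fun z => (((3 * (ic z).1 + 1) / 2 : ℝ) : AddCircle (1 : ℝ)))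
          (cm X Y '' D) := (AddCircle.continuous_mk' (1 : ℝ)).comp_continuousOn (by fun_prop)
      refine this.congr ?_
      rintro _ ⟨q, hq, rfl⟩
      simp only
      rw [hF1 q hq, hic q hq]
    · refine (continuousOn_const (c := (0 : AddCircle (1 : ℝ)))).congr fun z hz => ?_
      by_cases hz' : z ∈ cm X Y '' D
      · obtain ⟨q, hq, rfl⟩ := hz'
        rw [hF1 q hq]
        have h1 : ¬ |q.1| < 1 / 3 := fun h => hz ⟨q, h, rfl⟩
        have h2 : |q.1| = 1 / 3 := le_antisymm ((memD q).mp hq) (not_lt.mp h1)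
        rcases eq_or_eq_neg_of_abs_eq h2 with h | h <;> rw [h]
        · rw [show ((3 * (1 / 3) + 1) / 2 : ℝ) = 1 by norm_num]; exact coe_one_eq_zero
        · rw [show ((3 * (-(1 / 3)) + 1) / 2 : ℝ) = 0 by norm_num]; exact AddCircle.coe_zero _
      · exact hF2 z hz'
  have coe_cl : ∀ x : ℝ, ¬ |x| ≤ 1 / 3 → ((cl01 ((3 * x + 1) / 2) : ℝ) : AddCircle (1 : ℝ)) = 0 := by
    intro x hx
    rw [not_le, lt_abs] at hx
    rcases hx with h | h
    · rw [cl01_of_ge (by linarith)]; exact coe_one_eq_zero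
    · rw [cl01_of_le (by linarith)]; exact AddCircle.coe_zero _
  have cl_id : ∀ x : ℝ, |x| ≤ 1 / 3 → cl01 ((3 * x + 1) / 2) = (3 * x + 1) / 2 := by
    intro x hx
    have := abs_le.mp hx
    exact cl01_id (by linarith) (by linarith)
  have Flow : ∀ z : E, z.2 ≤ 1 → F z = ((cl01 ((3 * z.1 + 1) / 2) : ℝ) : AddCircle (1 : ℝ)) := by
    intro z hz
    by_cases hx : |z.1| ≤ 1 / 3
    · have e : cm X Y z = z := P.cm_low (u := z.1) hz
      have := hF1 z ((memD z).mpr hx)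
      rw [e] at this
      rw [this, cl_id _ hx]
    · rw [coe_cl _ hx]
      refine hF2 z ?_
      rintro ⟨⟨u, t⟩, hq, rfl⟩
      have hq := (memD _).mp hq
      rw [P.cm_low (P.t_low hq hz)] at hx
      exact hx hq
  have Fhigh : ∀ z : E, (N : ℝ) - 1 ≤ z.2 →
      F z = ((cl01 ((3 * z.1 + 1) / 2) : ℝ) : AddCircle (1 : ℝ)) := by
    intro z hz
    by_cases hx : |z.1| ≤ 1 / 3
    · have e : cm X Y (z.1, z.2 - N + L) = z := by
        rw [P.cm_high (by linarith)]
        ext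
        · rfl
        · simp only; ring
      have := hF1 (z.1, z.2 - N + L) ((memD _).mpr hx)
      rw [e] at this
      rw [this, cl_id _ hx]
    · rw [coe_cl _ hx]
      refine hF2 z ?_
      rintro ⟨⟨u, t⟩, hq, rfl⟩
      have hq := (memD _).mp hq
      rw [P.cm_high (P.t_high hq hz)] at hx
      exact hx hq
  obtain ⟨θ, θc, hθ, θ0⟩ : ∃ θ : E → ℝ, Continuous θ ∧ (∀ z, (θ z : AddCircle (1 : ℝ)) = F z) ∧
      θ (-1, 0) = 0 := by
    obtain ⟨G, Gc, hG⟩ := lift_circle (1 : ℝ) F Fc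
    refine ⟨fun z => G z - G (-1, 0), by fun_prop, fun z => ?_, sub_self _⟩
    rw [AddCircle.coe_sub, hG, hG, Flow (-1, 0) (by norm_num), cl01_of_le (by norm_num),
      AddCircle.coe_zero, sub_zero]
  have clc : Continuous (fun z : E => cl01 ((3 * z.1 + 1) / 2)) := cl01_cont.comp (by fun_prop)
  have hlow : ∀ z : E, z.2 ≤ 1 → θ z = cl01 ((3 * z.1 + 1) / 2) := by
    intro z hz
    have hconv : IsPreconnected {z : E | z.2 ≤ 1} :=
      (convex_halfSpace_le (f := fun z : E => z.2) ⟨fun _ _ => rfl, fun _ _ => rfl⟩ 1).isPreconnected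
    have := int_const hconv (f := fun z => θ z - cl01 ((3 * z.1 + 1) / 2))
      (θc.sub clc).continuousOn (fun w hw => coe_eq_int (by rw [hθ, Flow w hw])) (x := z)
      (y := ((-1, 0) : E)) hz (show (0 : ℝ) ≤ 1 by norm_num)
    simp only at this
    rw [θ0, cl01_of_le (x := (3 * (-1) + 1) / 2) (by norm_num)] at this
    linarith
  have Dconv : IsPreconnected D := by
    have : Convex ℝ D := by
      have : D = {q : E | q.1 ≤ 1 / 3} ∩ {q : E | -(1 / 3) ≤ q.1} := by
        ext q; rw [memD, abs_le]; exact and_comm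
      rw [this]
      exact (convex_halfSpace_le (f := fun z : E => z.1) ⟨fun _ _ => rfl, fun _ _ => rfl⟩ _).inter
        (convex_halfSpace_ge (f := fun z : E => z.1) ⟨fun _ _ => rfl, fun _ _ => rfl⟩ _)
    exact this.isPreconnected
  have cmc := cm_cont X Y
  have hD0 : ((0, 0) : E) ∈ D := (memD _).mpr (by norm_num)
  have hcm : ∀ q, q ∈ D → θ (cm X Y q) = (3 * q.1 + 1) / 2 := by
    intro q hq
    have := int_const Dconv (f := fun q => θ (cm X Y q) - (3 * q.1 + 1) / 2)
      (Continuous.continuousOn (by fun_prop)) (fun w hw => coe_eq_int (by rw [hθ, hF1 w hw]))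
      hq hD0
    simp only at this
    have e0 : θ (cm X Y (0, 0)) = 1 / 2 := by
      rw [P.cm_low (u := 0) (t := 0) (by norm_num), hlow _ (by norm_num)]
      simp only
      rw [cl01_id (by norm_num) (by norm_num)]; norm_num
    rw [e0] at this
    linarith
  have hhigh : ∀ z : E, (N : ℝ) - 1 ≤ z.2 → θ z = cl01 ((3 * z.1 + 1) / 2) := by
    intro z hz
    have hconv : IsPreconnected {z : E | (N : ℝ) - 1 ≤ z.2} :=
      (convex_halfSpace_ge (f := fun z : E => z.2) ⟨fun _ _ => rfl, fun _ _ => rfl⟩ _).isPreconnected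
    have := int_const hconv (f := fun z => θ z - cl01 ((3 * z.1 + 1) / 2))
      (θc.sub clc).continuousOn (fun w hw => coe_eq_int (by rw [hθ, Fhigh w hw])) (x := z)
      (y := ((0, N) : E)) hz (show (N : ℝ) - 1 ≤ N by linarith)
    simp only at this
    have e := hcm (0, L) ((memD _).mpr (by norm_num))
    rw [P.cm_high (by linarith), show (L : ℝ) + N - L = N by ring] at e
    rw [e, cl01_id (x := (3 * 0 + 1) / 2) (by norm_num) (by norm_num)] at this
    linarith
  have hin : ∀ z : E, 0 < θ z → θ z < 1 → ∃ q : E, |q.1| < 1 / 3 ∧ cm X Y q = z := by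
    intro z h1 h2
    have : z ∈ cm X Y '' D := by
      by_contra hc
      obtain ⟨n, hn⟩ := coe_eq_int (a := θ z) (b := 0) (by rw [hθ, hF2 z hc, AddCircle.coe_zero])
      rw [sub_zero] at hn
      rw [hn] at h1 h2
      have h1 : 0 < n := by exact_mod_cast h1
      have h2 : n < 1 := by exact_mod_cast h2
      omega
    obtain ⟨q, hq, rfl⟩ := this
    rw [hcm q hq] at h1 h2
    exact ⟨q, abs_lt.mpr ⟨by linarith, by linarith⟩, rfl⟩
  have hinteg : ∀ z, z ∉ cm X Y '' D → ∃ n : ℤ, θ z = n := by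
    intro z hz
    obtain ⟨n, hn⟩ := coe_eq_int (a := θ z) (b := 0) (by rw [hθ, hF2 z hz, AddCircle.coe_zero])
    exact ⟨n, by linarith⟩
  have hX0 : X0 ≤ 0 := by have := (hX 0).1; rwa [(P.low 0 (by norm_num)).1] at this
  have hX1 : 0 ≤ X1 := by have := (hX 0).2; rwa [(P.low 0 (by norm_num)).1] at this
  have hX0 : (X0 : ℝ) ≤ 0 := by exact_mod_cast hX0
  have hX1 : (0 : ℝ) ≤ X1 := by exact_mod_cast hX1
  have qD : ∀ q : E, 0 < q.1 → q.1 < 1 → (((2 * q.1 - 1) / 3, q.2) : E) ∈ D := fun q h1 h2 =>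
    (memD _).mpr (abs_le.mpr ⟨by simp only; linarith, by simp only; linarith⟩)
  have tcm : ∀ q, |q.1| < 1 / 3 → (ic (cm X Y q)).2 = q.2 := fun q hq => by
    rw [hic q ((memD q).mpr hq.le)]
  have hmem : ∀ u t : ℝ, |u| < 1 / 3 → ((0 < (cm X Y (u, t)).2 ∧ (cm X Y (u, t)).2 < N) ↔
      (0 < t ∧ t < L)) := by
    intro u t hu
    have hN : (4 : ℝ) ≤ N := by exact_mod_cast P.hN
    have hL : (4 : ℝ) ≤ L := by exact_mod_cast P.hL
    constructor
    · rintro ⟨h1, h2⟩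
      constructor
      · by_contra hc
        rw [P.cm_low (by linarith)] at h1
        exact hc h1
      · by_contra hc
        rw [P.cm_high (by linarith)] at h2
        simp only at h2
        linarith
    · rintro ⟨h1, h2⟩
      constructor
      · by_contra hc
        have := P.t_low hu.le (t := t) (by linarith)
        rw [P.cm_low this] at hc
        exact hc h1
      · by_contra hc
        have := P.t_high hu.le (t := t) (by linarith)
        rw [P.cm_high this] at hc
        simp only at hc
        linarith
  refine ⟨fun q => cm X Y ((2 * q.1 - 1) / 3, q.2), θ, fun z => (ic z).2, ⟨?_, ?_, ?_, θc, ?_, ?_,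
    ?_, ?_, ?_, hlow, hhigh, ?_, ?_, ?_⟩, ?_⟩
  · have := P.hN
    have : (4 : ℝ) ≤ N := by exact_mod_cast this
    linarith
  · have := P.hL
    have : (4 : ℝ) ≤ L := by exact_mod_cast this
    linarith
  · fun_prop
  · intro q h1 h2
    rw [hcm _ (qD q h1 h2)]; ring
  · intro q h1 h2
    rw [hic _ (qD q h1 h2)]
  · intro z h1 h2
    obtain ⟨q, hq, rfl⟩ := hin z h1 h2
    have hq' := (memD q).mpr hq.le
    simp only
    rw [hcm q hq', hic q hq']
    congr 1
    ext
    · simp only; ring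
    · rfl
  · have : ContinuousOn (fun z => (ic z).2) (cm X Y '' D) := by fun_prop
    refine this.mono ?_
    rintro z ⟨h1, h2⟩
    obtain ⟨q, hq, rfl⟩ := hin z h1 h2
    exact ⟨q, (memD q).mpr hq.le, rfl⟩
  · intro z h1 h2
    obtain ⟨⟨u, t⟩, hq, rfl⟩ := hin z h1 h2
    rw [tcm _ hq]
    exact hmem u t hq
  · intro z hz h1 h2
    obtain ⟨⟨u, t⟩, hq, rfl⟩ := hin z h1 h2
    rw [tcm _ hq, P.cm_low (P.t_low hq.le hz)]
  · intro z hz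
    have hc : ∀ w ∈ {w : E | w.1 ≤ (X0 : ℝ) - 1 / 2}, ∃ n : ℤ, θ w = n := by
      intro w hw
      refine hinteg w ?_
      rintro ⟨⟨u, t⟩, hq, rfl⟩
      have := (P.cm_x hX (t := t) ((memD _).mp hq)).1
      have hw : (cm X Y (u, t)).1 ≤ (X0 : ℝ) - 1 / 2 := hw
      linarith
    have := int_const (conv_le _) θc.continuousOn hc (x := z) (y := (((X0 : ℝ) - 1 / 2, 0) : E)) hz
      (le_refl ((X0 : ℝ) - 1 / 2))
    rw [this, hlow _ (by norm_num), cl01_of_le (by simp only; linarith)]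
  · intro z hz
    have hc : ∀ w ∈ {w : E | (X1 : ℝ) + 1 / 2 ≤ w.1}, ∃ n : ℤ, θ w = n := by
      intro w hw
      refine hinteg w ?_
      rintro ⟨⟨u, t⟩, hq, rfl⟩
      have := (P.cm_x hX (t := t) ((memD _).mp hq)).2
      have hw : (X1 : ℝ) + 1 / 2 ≤ (cm X Y (u, t)).1 := hw
      linarith
    have := int_const (conv_ge _) θc.continuousOn hc (x := z) (y := (((X1 : ℝ) + 1 / 2, 0) : E)) hz
      (le_refl ((X1 : ℝ) + 1 / 2))
    rw [this, hlow _ (by norm_num), cl01_of_ge (by simp only; linarith)]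
  · intro z h1 h2 h3 h4
    obtain ⟨⟨u, t⟩, hq, rfl⟩ := hin z h1 h2
    have ht := (hmem u t hq).mp ⟨h3, h4⟩
    have k1 := Int.floor_le t
    have k2 := (Int.lt_floor_add_one t).le
    have k3 : 0 ≤ ⌊t⌋ := Int.floor_nonneg.mpr ht.1.le
    have k4 : ⌊t⌋ < L := Int.floor_lt.mpr ht.2
    generalize ⌊t⌋ = k at *
    have b := P.box k hq.le k1 k2
    have s := P.step k
    refine ⟨k, k3, k4.le, ?_, ?_⟩
    · have g1 : X k - 1 ≤ min (X k) (X (k + 1)) := le_min (by omega) (by omega)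
      have g2 : max (X k) (X (k + 1)) ≤ X k + 1 := max_le (by omega) (by omega)
      have g1 : (X k : ℝ) - 1 ≤ ((min (X k) (X (k + 1)) : ℤ) : ℝ) := by exact_mod_cast g1
      have g2 : ((max (X k) (X (k + 1)) : ℤ) : ℝ) ≤ X k + 1 := by exact_mod_cast g2
      rw [abs_le]; constructor <;> linarith [b.1.1, b.1.2]
    · have g1 : Y k - 1 ≤ min (Y k) (Y (k + 1)) := le_min (by omega) (by omega)
      have g2 : max (Y k) (Y (k + 1)) ≤ Y k + 1 := max_le (by omega) (by omega)
      have g1 : (Y k : ℝ) - 1 ≤ ((min (Y k) (Y (k + 1)) : ℤ) : ℝ) := by exact_mod_cast g1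
      have g2 : ((max (Y k) (Y (k + 1)) : ℤ) : ℝ) ≤ Y k + 1 := by exact_mod_cast g2
      rw [abs_le]; constructor <;> linarith [b.2.1, b.2.2]

end L
end Ann


namespace Ann
open Set Filter Topology

/-- lattice graph on a set of vertices -/
def latG (V : Set (ℤ × ℤ)) : SimpleGraph (ℤ × ℤ) where
  Adj v w := v ∈ V ∧ w ∈ V ∧ ((w.1 - v.1 = 1 ∧ w.2 - v.2 = 0) ∨ (w.1 - v.1 = -1 ∧ w.2 - v.2 = 0) ∨
    (w.1 - v.1 = 0 ∧ w.2 - v.2 = 1) ∨ (w.1 - v.1 = 0 ∧ w.2 - v.2 = -1))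
  symm := ⟨by
    rintro v w ⟨h1, h2, h⟩
    refine ⟨h2, h1, ?_⟩
    omega⟩
  loopless := ⟨by
    rintro v ⟨h1, h2, h⟩
    omega⟩

theorem latt_comb {V : Set (ℤ × ℤ)} {N : ℤ} (hV : ∀ v ∈ V, 2 ≤ v.2 ∧ v.2 ≤ N - 2)
    (h0 : ((0, 2) : ℤ × ℤ) ∈ V) (hr : (latG V).Reachable (0, 2) (0, N - 2)) :
    ∃ (X Y : ℤ → ℤ) (L : ℤ), LP X Y N L ∧ ∀ k, 0 ≤ k → k ≤ L → (X k, Y k) ∈ V ∨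
      (X k = 0 ∧ (Y k = 0 ∨ Y k = 1 ∨ Y k = N - 1 ∨ Y k = N)) := by
  obtain ⟨p, hp⟩ := hr.exists_isPath
  obtain ⟨l, hl⟩ : ∃ l : ℕ, l = p.length := ⟨_, rfl⟩
  obtain ⟨v, hv⟩ : ∃ v : ℕ → ℤ × ℤ, v = p.getVert := ⟨_, rfl⟩
  have v0 : v 0 = (0, 2) := by rw [hv]; exact p.getVert_zero
  have vl : v l = (0, N - 2) := by rw [hv, hl]; exact p.getVert_length
  have vadj : ∀ i, i < l → (latG V).Adj (v i) (v (i + 1)) := by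
    intro i hi; rw [hv]; exact p.adj_getVert_succ (hl ▸ hi)
  have vinj : ∀ i j, i ≤ l → j ≤ l → v i = v j → i = j := by
    intro i j hi hj h
    rw [hv] at h
    exact hp.getVert_injOn (by rw [← hl]; exact hi) (by rw [← hl]; exact hj) h
  have vmem : ∀ i, i ≤ l → v i ∈ V := by
    intro i hi
    rcases i with _ | i
    · rw [v0]; exact h0
    · exact (vadj i (by omega)).2.1
  clear hv hl hp hr
  obtain ⟨X, hX⟩ : ∃ X : ℤ → ℤ, X = fun k => if k < 2 then 0 else if (l : ℤ) + 2 < k then 0 else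
    (v (k - 2).toNat).1 := ⟨_, rfl⟩
  obtain ⟨Y, hY⟩ : ∃ Y : ℤ → ℤ, Y = fun k => if k < 2 then k else if (l : ℤ) + 2 < k then
    k - l - 4 + N else (v (k - 2).toNat).2 := ⟨_, rfl⟩
  have lo : ∀ k, k < 2 → X k = 0 ∧ Y k = k := by
    intro k hk; rw [hX, hY]; simp [hk]
  have hi : ∀ k, (l : ℤ) + 2 < k → X k = 0 ∧ Y k = k - l - 4 + N := by
    intro k hk; rw [hX, hY]
    have : ¬ k < 2 := by omega
    simp [hk, this]
  have mi : ∀ i : ℕ, i ≤ l → X ((i : ℤ) + 2) = (v i).1 ∧ Y ((i : ℤ) + 2) = (v i).2 := by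
    intro i hil; rw [hX, hY]
    have h1 : ¬ ((i : ℤ) + 2) < 2 := by omega
    have h2 : ¬ (l : ℤ) + 2 < (i : ℤ) + 2 := by omega
    have h3 : ((i : ℤ) + 2 - 2).toNat = i := by omega
    simp only [h1, h2, if_false]
    rw [h3]; exact ⟨rfl, rfl⟩
  have tri : ∀ k : ℤ, k < 2 ∨ (l : ℤ) + 2 < k ∨ ∃ i : ℕ, i ≤ l ∧ k = (i : ℤ) + 2 := by
    intro k
    by_cases h1 : k < 2
    · exact Or.inl h1
    by_cases h2 : (l : ℤ) + 2 < k
    · exact Or.inr (Or.inl h2)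
    · exact Or.inr (Or.inr ⟨(k - 2).toNat, by omega, by omega⟩)
  clear hX hY
  have m0 := mi 0 (by omega)
  have ml := mi l le_rfl
  rw [v0] at m0
  rw [vl] at ml
  have hN := hV _ h0
  simp only at hN m0 ml
  norm_num at m0
  refine ⟨X, Y, l + 4, ⟨by omega, ?_, ?_, ?_, ?_, ?_⟩, ?_⟩
  · intro i j hx hy
    rcases tri i with h | h | ⟨a, ha, rfl⟩ <;> rcases tri j with h' | h' | ⟨b, hb, rfl⟩
    · have := lo i h; have := lo j h'; omega
    · have := lo i h; have := hi j h'; omega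
    · have := lo i h; have := mi b hb; have := hV _ (vmem b hb); omega
    · have := hi i h; have := lo j h'; omega
    · have := hi i h; have := hi j h'; omega
    · have := hi i h; have := mi b hb; have := hV _ (vmem b hb); omega
    · have := lo j h'; have := mi a ha; have := hV _ (vmem a ha); omega
    · have := hi j h'; have := mi a ha; have := hV _ (vmem a ha); omega
    · have e1 := mi a ha
      have e2 := mi b hb
      have := vinj a b ha hb (Prod.ext (by omega) (by omega))
      rw [this]
  · intro k
    rcases tri k with h | h | ⟨a, ha, rfl⟩
    · have e1 := lo k h
      by_cases h1 : k + 1 < 2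
      · have := lo (k + 1) h1; omega
      · obtain rfl : k = 1 := by omega
        norm_num
        omega
    · have := hi k h; have := hi (k + 1) (by omega); omega
    · have e1 := mi a ha
      by_cases h1 : a < l
      · have e2 := mi (a + 1) h1
        have := (vadj a h1).2.2
        push_cast at e2
        rw [show (a : ℤ) + 2 + 1 = (a : ℤ) + 1 + 2 by ring]
        omega
      · obtain rfl : a = l := by omega
        have := hi ((a : ℤ) + 2 + 1) (by omega)
        rw [vl] at e1
        simp only at e1
        omega
  · intro k hk
    by_cases h : k < 2
    · exact lo k h
    · obtain rfl : k = 2 := by omega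
      exact m0
  · intro k hk
    by_cases h : (l : ℤ) + 2 < k
    · have := hi k h; omega
    · obtain rfl : k = (l : ℤ) + 2 := by omega
      omega
  · intro k h1 h2
    rcases tri k with h | h | ⟨a, ha, rfl⟩
    · omega
    · omega
    · rw [(mi a ha).2]; exact hV _ (vmem a ha)
  · intro k h1 h2
    rcases tri k with h | h | ⟨a, ha, rfl⟩
    · have := lo k h; right; omega
    · have := hi k h; right; omega
    · left; rw [(mi a ha).1, (mi a ha).2]; exact vmem a ha

/-- one diagonal move -/
theorem latG_diag {V : Set (ℤ × ℤ)} {v w : ℤ × ℤ} (hv : v ∈ V) (hw : w ∈ V)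
    (hvw : ((v.1, w.2) : ℤ × ℤ) ∈ V) (h1 : |v.1 - w.1| ≤ 1) (h2 : |v.2 - w.2| ≤ 1) :
    (latG V).Reachable v w := by
  have h1 := abs_le.mp h1
  have h2 := abs_le.mp h2
  have r1 : (latG V).Reachable v (v.1, w.2) := by
    by_cases h : v.2 = w.2
    · rw [← h]
    · refine SimpleGraph.Adj.reachable ⟨hv, hvw, ?_⟩
      simp only
      omega
  have r2 : (latG V).Reachable (v.1, w.2) w := by
    by_cases h : v.1 = w.1
    · rw [h]
    · refine SimpleGraph.Adj.reachable ⟨hvw, hw, ?_⟩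
      simp only
      omega
  exact r1.trans r2

theorem round_near {x y : ℝ} (h : |x - y| < 1 / 2) : |round x - round y| ≤ 1 := by
  have h1 := abs_le.mp (abs_sub_round x)
  have h2 := abs_le.mp (abs_sub_round y)
  have h3 := abs_lt.mp h
  have h4 : ((round x - round y : ℤ) : ℝ) < ((2 : ℤ) : ℝ) := by push_cast; linarith
  have h5 : ((-2 : ℤ) : ℝ) < ((round x - round y : ℤ) : ℝ) := by push_cast; linarith
  have h4 := Int.cast_lt.mp h4
  have h5 := Int.cast_lt.mp h5
  rw [abs_le]; omega

theorem lattice {O : Set E} (hO : IsOpen O) {a : ℝ} (hj : JoinedIn (O ∩ S) (a, 0) (a, 1)) :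
    ∃ (X Y : ℤ → ℤ) (N L : ℤ), LP X Y N L ∧ 0 < N ∧ ∀ k, 0 ≤ k → k ≤ L → ∀ z : E,
      |z.1 - X k| ≤ 4 / 3 → |z.2 - Y k| ≤ 4 / 3 → ((a + z.1 / N, z.2 / N) : E) ∈ O := by
  obtain ⟨γ, hγ⟩ := hj
  have hK : IsCompact (range γ) := isCompact_range γ.continuous
  obtain ⟨ε, hε, hεO⟩ := hK.exists_thickening_subset_open hO
    (range_subset_iff.mpr fun t => (hγ t).1)
  obtain ⟨n, hn⟩ := exists_nat_gt (max (5 / ε) 10)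
  obtain ⟨N, hNn⟩ : ∃ N : ℤ, N = n := ⟨_, rfl⟩
  have hNr : (N : ℝ) = n := by rw [hNn]; push_cast; rfl
  rw [← hNr] at hn
  have hN1 : 5 / ε < N := lt_of_le_of_lt (le_max_left _ _) hn
  have hN2 : (10 : ℝ) < N := lt_of_le_of_lt (le_max_right _ _) hn
  have hN3 : 10 < N := by exact_mod_cast hN2
  have hN0 : (0 : ℝ) < N := by linarith
  clear hNn hNr hn
  -- scaled coordinates
  obtain ⟨gx, hgx⟩ : ∃ gx : unitInterval → ℝ, gx = fun t => ((γ t).1 - a) * N := ⟨_, rfl⟩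
  obtain ⟨gy, hgy⟩ : ∃ gy : unitInterval → ℝ, gy = fun t => (γ t).2 * N := ⟨_, rfl⟩
  have gxc : Continuous gx := by rw [hgx]; fun_prop
  have gyc : Continuous gy := by rw [hgy]; fun_prop
  have gy0 : ∀ t, 0 ≤ gy t := fun t => by rw [hgy]; exact mul_nonneg (hγ t).2.1 hN0.le
  have gy1 : ∀ t, gy t ≤ N := fun t => by
    rw [hgy]; have := mul_le_mul_of_nonneg_right (hγ t).2.2 hN0.le; simpa using this
  have inO : ∀ (t : unitInterval) (z : E), |z.1 - gx t| < 5 → |z.2 - gy t| < 5 →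
      ((a + z.1 / N, z.2 / N) : E) ∈ O := by
    intro t z h1 h2
    refine hεO (Metric.mem_thickening_iff.mpr ⟨γ t, mem_range_self t, ?_⟩)
    have h5 : 5 / (N : ℝ) < ε := by
      rw [div_lt_iff₀ hε] at hN1
      rw [div_lt_iff₀ hN0]; linarith
    refine lt_trans ?_ h5
    rw [Prod.dist_eq, max_lt_iff, Real.dist_eq, Real.dist_eq]
    constructor
    · have e : a + z.1 / N - (γ t).1 = (z.1 - gx t) / N := by rw [hgx]; field_simp; ring
      simp only
      rw [e, abs_div, abs_of_pos hN0]
      exact div_lt_div_of_pos_right h1 hN0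
    · have e : z.2 / N - (γ t).2 = (z.2 - gy t) / N := by rw [hgy]; field_simp
      simp only
      rw [e, abs_div, abs_of_pos hN0]
      exact div_lt_div_of_pos_right h2 hN0
  have x0 : gx 0 = 0 := by rw [hgx]; simp
  have y0 : gy 0 = 0 := by rw [hgy]; simp
  have x1 : gx 1 = 0 := by rw [hgx]; simp
  have y1 : gy 1 = N := by rw [hgy]; simp
  clear hgx hgy
  obtain ⟨V, hV⟩ : ∃ V : Set (ℤ × ℤ), V = {v | (2 ≤ v.2 ∧ v.2 ≤ N - 2) ∧ ∃ t, |(v.1 : ℝ) - gx t| ≤ 3 ∧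
    |(v.2 : ℝ) - gy t| ≤ 3} := ⟨_, rfl⟩
  have memV : ∀ v, v ∈ V ↔ (2 ≤ v.2 ∧ v.2 ≤ N - 2) ∧ ∃ t, |(v.1 : ℝ) - gx t| ≤ 3 ∧
    |(v.2 : ℝ) - gy t| ≤ 3 := fun v => by rw [hV]; rfl
  clear hV
  let cy : ℤ → ℤ := fun j => max 2 (min (N - 2) j)
  let r : unitInterval → ℤ × ℤ := fun t => (round (gx t), cy (round (gy t)))
  have cyr : ∀ j, 2 ≤ cy j ∧ cy j ≤ N - 2 := fun j => by simp only [cy]; omega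
  have rx : ∀ t, |((r t).1 : ℝ) - gx t| ≤ 1 / 2 := fun t => by
    rw [abs_sub_comm]; exact abs_sub_round _
  have ry : ∀ t, |((r t).2 : ℝ) - gy t| ≤ 5 / 2 := fun t => by
    have h1 := abs_le.mp (abs_sub_round (gy t))
    have h2 := gy0 t
    have h3 := gy1 t
    have h4 : -1 < round (gy t) := by
      have : ((-1 : ℤ) : ℝ) < round (gy t) := by push_cast; linarith
      exact_mod_cast this
    have h5 : round (gy t) < N + 1 := by
      have : ((round (gy t) : ℤ) : ℝ) < ((N + 1 : ℤ) : ℝ) := by push_cast; linarith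
      exact_mod_cast this
    have h6 : cy (round (gy t)) ≤ round (gy t) + 2 := by simp only [cy]; omega
    have h7 : round (gy t) - 2 ≤ cy (round (gy t)) := by simp only [cy]; omega
    have h6 : (cy (round (gy t)) : ℝ) ≤ round (gy t) + 2 := by exact_mod_cast h6
    have h7 : (round (gy t) : ℝ) - 2 ≤ cy (round (gy t)) := by exact_mod_cast h7
    show |(cy (round (gy t)) : ℝ) - gy t| ≤ 5 / 2
    rw [abs_le]; constructor <;> linarith
  have rV : ∀ t, r t ∈ V := fun t => (memV _).mpr ⟨cyr _, t, by linarith [rx t], by linarith [ry t]⟩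
  have loc : ∀ t t', |gx t - gx t'| < 1 / 2 → |gy t - gy t'| < 1 / 2 →
      (latG V).Reachable (r t) (r t') := by
    intro t t' h1 h2
    refine latG_diag (rV t) (rV t') ((memV _).mpr ⟨cyr _, t, by linarith [rx t], ?_⟩)
      (round_near h1) ?_
    · have := abs_le.mp (ry t')
      have := abs_lt.mp h2
      simp only
      rw [abs_le]; constructor <;> linarith
    · have h := abs_le.mp (round_near h2)
      simp only [r, cy]
      rw [abs_le]; omega
  have hr : (latG V).Reachable (r 0) (r 1) := by
    refine PreconnectedSpace.induction₂' (fun t t' => (latG V).Reachable (r t) (r t')) ?_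
      ⟨fun _ _ _ h h' => h.trans h'⟩ 0 1
    intro t
    have e1 : ∀ᶠ t' in 𝓝 t, |gx t - gx t'| < 1 / 2 := by
      have : ContinuousAt (fun t' => |gx t - gx t'|) t := by fun_prop
      exact this.eventually_lt_const (by simp)
    have e2 : ∀ᶠ t' in 𝓝 t, |gy t - gy t'| < 1 / 2 := by
      have : ContinuousAt (fun t' => |gy t - gy t'|) t := by fun_prop
      exact this.eventually_lt_const (by simp)
    filter_upwards [e1, e2] with t' h1 h2
    exact ⟨loc t t' h1 h2, (loc t t' h1 h2).symm⟩
  have r0 : r 0 = (0, 2) := by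
    simp only [r, x0, y0, cy, round_zero]
    ext
    · rfl
    · simp only; omega
  have r1 : r 1 = (0, N - 2) := by
    simp only [r, x1, y1, cy, round_zero, round_intCast]
    ext
    · rfl
    · simp only; omega
  rw [r0, r1] at hr
  obtain ⟨X, Y, L, P, hP⟩ := latt_comb (fun v hv => ((memV v).mp hv).1) (r0 ▸ rV 0) hr
  refine ⟨X, Y, N, L, P, by omega, fun k hk1 hk2 z hz1 hz2 => ?_⟩
  have hz1 := abs_le.mp hz1
  have hz2 := abs_le.mp hz2
  rcases hP k hk1 hk2 with h | ⟨h, h'⟩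
  · obtain ⟨-, t, h1, h2⟩ := (memV _).mp h
    have h1 := abs_le.mp h1
    have h2 := abs_le.mp h2
    simp only at h1 h2
    refine inO t z ?_ ?_ <;> rw [abs_lt] <;> constructor <;> linarith
  · have hx : (X k : ℝ) = 0 := by exact_mod_cast h
    rcases h' with h' | h' | h' | h'
    · have hy : (Y k : ℝ) = 0 := by exact_mod_cast h'
      refine inO 0 z ?_ ?_ <;> rw [abs_lt] <;> constructor <;> linarith
    · have hy : (Y k : ℝ) = 1 := by exact_mod_cast h'
      refine inO 0 z ?_ ?_ <;> rw [abs_lt] <;> constructor <;> linarith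
    · have hy : (Y k : ℝ) = N - 1 := by exact_mod_cast h'
      refine inO 1 z ?_ ?_ <;> rw [abs_lt] <;> constructor <;> linarith
    · have hy : (Y k : ℝ) = N := by exact_mod_cast h'
      refine inO 1 z ?_ ?_ <;> rw [abs_lt] <;> constructor <;> linarith

end Ann


namespace Ann
open Set Filter Topology

/-- affine rescaling -/
noncomputable def aff (a n : ℝ) (hn : 0 < n) : E ≃ₜ E where
  toFun z := (a + z.1 / n, z.2 / n)
  invFun z := ((z.1 - a) * n, z.2 * n)
  left_inv z := by ext <;> simp only <;> field_simp; ring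
  right_inv z := by ext <;> simp only <;> field_simp; ring
  continuous_toFun := by fun_prop
  continuous_invFun := by fun_prop

theorem move {O : Set E} (hO : IsOpen O) {s a : ℝ} (hs : ∀ z ∈ O, s < z.1 ∧ z.1 < s + 1)
    (hj : JoinedIn (O ∩ S) (a, 0) (a, 1)) :
    ∃ χ : E ≃ₜ E, (∀ z, z ∉ cell s → χ z = z) ∧ ∃ τ, s < τ ∧ τ < s + 1 ∧
      ∀ y, 0 ≤ y → y ≤ 1 → χ (τ, y) ∈ O := by
  obtain ⟨X, Y, N, L, P, hN, hk⟩ := lattice hO hj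
  have hN' : (0 : ℝ) < N := by exact_mod_cast hN
  have hL := P.hL
  have p0 := P.low 0 (by norm_num)
  have pL := P.high L (by omega)
  have hne : (Finset.Icc 0 L).Nonempty := ⟨0, by simp; omega⟩
  obtain ⟨k0, hk0, hmin⟩ := Finset.exists_min_image _ X hne
  obtain ⟨k1, hk1, hmax⟩ := Finset.exists_max_image _ X hne
  simp only [Finset.mem_Icc] at hk0 hk1 hmin hmax
  have out : ∀ k, ¬ (0 ≤ k ∧ k ≤ L) → X k = X 0 := by
    intro k hkk
    rw [p0.1]
    by_cases h : k ≤ 2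
    · exact (P.low k h).1
    · exact (P.high k (by omega)).1
  have hX : ∀ k, X k0 ≤ X k ∧ X k ≤ X k1 := by
    intro k
    by_cases h : 0 ≤ k ∧ k ≤ L
    · exact ⟨hmin k h, hmax k h⟩
    · rw [out k h]; exact ⟨hmin 0 (by omega), hmax 0 (by omega)⟩
  obtain ⟨c, θ, tt, K, hKk⟩ := P.collar_exists hX
  obtain ⟨χ, hχ, τ, hτ1, hτ2, hτ⟩ := brown K (a1 := X k0 - 1) (b1 := X k1 + 1)
    (by linarith) (by linarith)
  have A0 := hk k0 hk0.1 hk0.2 ((X k0 : ℝ) - 4 / 3, Y k0)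
    (abs_le.mpr ⟨by simp only; linarith, by simp only; linarith⟩) (by simp; norm_num)
  have A1 := hk k1 hk1.1 hk1.2 ((X k1 : ℝ) + 4 / 3, Y k1)
    (abs_le.mpr ⟨by simp only; linarith, by simp only; linarith⟩) (by simp; norm_num)
  have s0 := (hs _ A0).1
  have s1 := (hs _ A1).2
  simp only at s0 s1
  have B0 : ((a + τ / N, 0) : E) ∈ O := by
    have := hk 0 le_rfl (by omega) (τ, 0) (by rw [p0.1, abs_le]; constructor <;> push_cast <;> linarith)
      (by rw [p0.2]; norm_num)
    simpa using this
  have B1 : ((a + τ / N, 1) : E) ∈ O := by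
    have := hk L (by omega) le_rfl (τ, N) (by rw [pL.1, abs_le]; constructor <;> push_cast <;> linarith)
      (by rw [pL.2]; norm_num)
    simp only at this
    rwa [div_self hN'.ne'] at this
  have sτ := hs _ B0
  let A := aff a N hN'
  have Aa : ∀ z, A z = (a + z.1 / N, z.2 / N) := fun _ => rfl
  have As : ∀ z, A.symm z = ((z.1 - a) * N, z.2 * N) := fun _ => rfl
  refine ⟨(A.symm.trans χ).trans A, ?_, a + τ / N, sτ.1, sτ.2, ?_⟩
  · intro z hz
    show A (χ (A.symm z)) = z
    rw [hχ, A.apply_symm_apply]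
    rw [As]
    simp only
    by_contra hc
    push Not at hc
    obtain ⟨c1, c2, c3, c4⟩ := hc
    refine hz ⟨⟨?_, ?_⟩, ?_, ?_⟩
    · by_contra h
      push Not at h
      have h1 : (z.1 - a) * N < X k0 - 4 / 3 := by
        rw [← lt_div_iff₀ hN']; linarith
      linarith
    · by_contra h
      push Not at h
      have h1 : X k1 + 4 / 3 < (z.1 - a) * N := by
        rw [← div_lt_iff₀ hN']; linarith
      linarith
    · exact pos_of_mul_pos_left c3 hN'.le
    · by_contra h
      push Not at h
      have := mul_le_mul_of_nonneg_right h hN'.le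
      linarith
  · intro y hy0 hy1
    show A (χ (A.symm (a + τ / N, y))) ∈ O
    have e : A.symm (a + τ / N, y) = (τ, y * N) := by
      rw [As]; ext
      · simp only; field_simp; ring
      · rfl
    rw [e]
    rcases hy0.eq_or_lt with rfl | hy0
    · rw [zero_mul, hχ _ (by simp), Aa]
      simpa using B0
    rcases hy1.eq_or_lt with rfl | hy1
    · rw [one_mul, hχ _ (by simp), Aa]
      simp only
      rw [div_self hN'.ne']; exact B1
    have q1 : 0 < y * N := mul_pos hy0 hN'
    have q2 : y * N < N := by nlinarith
    obtain ⟨t1, t2⟩ := hτ _ q1 q2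
    have fixed : ∀ w : E, w = χ (τ, y * N) → (w.2 ≤ 0 ∨ (N : ℝ) ≤ w.2) → False := by
      intro w hw h
      have h1 : χ w = w := hχ w (by tauto)
      have h2 : w = (τ, y * N) := χ.injective (by rw [h1, hw])
      rw [h2] at h
      simp only at h
      rcases h with h | h <;> linarith
    obtain ⟨k, g1, g2, g3, g4⟩ := hKk _ t1 t2 (by by_contra h; exact fixed _ rfl (Or.inl (not_lt.mp h)))
      (by by_contra h; exact fixed _ rfl (Or.inr (not_lt.mp h)))
    exact hk k g1 g2 _ g3 g4

end Ann


namespace Ann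
open Set Filter Topology

/-- one step of the chain -/
theorem chain_step {m m' : E → ℝ} (hm' : Continuous m')
    (h0' : ∀ z : E, (z.2 ≤ 0 ∨ 1 ≤ z.2) → m' z = z.1) (C : ℝ) (hC : ∀ z, |m' z - z.1| ≤ C)
    (hp : ∀ z, m' (z + e1) = m' z + 1) (hd : ∀ z, |m' z - m z| ≤ 1 / 8)
    (h0 : ∀ z : E, (z.2 ≤ 0 ∨ 1 ≤ z.2) → m z = z.1)
    (ih : ∃ g : E ≃ₜ E, InG g ∧ Iso g ∧ ∃ τ b : ℝ, ∀ y, 0 ≤ y → y ≤ 1 →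
      b < m (g (τ, y)) ∧ m (g (τ, y)) < b + 1 / 8) :
    ∃ g : E ≃ₜ E, InG g ∧ Iso g ∧ ∃ τ b : ℝ, ∀ y, 0 ≤ y → y ≤ 1 →
      b < m' (g (τ, y)) ∧ m' (g (τ, y)) < b + 1 / 8 := by
  obtain ⟨g, hg, ig, τ, b, hb⟩ := ih
  have bτ := hb 0 le_rfl zero_le_one
  rw [hg.1 _ (Or.inl le_rfl), h0 _ (Or.inl le_rfl)] at bτ
  simp only at bτ
  obtain ⟨γ, hγ⟩ := hex_joined' hm' h0' C hC (b := b + 1 / 2) (b' := b + 5 / 8) (by linarith)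
  obtain ⟨a, ha⟩ : ∃ a : ℝ, a = (b + 1 / 2 + (b + 5 / 8)) / 2 := ⟨_, rfl⟩
  rw [← ha] at γ
  have inS : ∀ z, g.symm z ∈ S ↔ z ∈ S := fun z => by
    have := hg.symm.mem_iff z
    by_cases h : z.2 ≤ 0 ∨ 1 ≤ z.2
    · rw [hg.symm.1 z h]
    · push Not at h
      have h2 := this.mpr h
      exact ⟨fun _ => ⟨h.1.le, h.2.le⟩, fun _ => ⟨h2.1.le, h2.2.le⟩⟩
  have key : ∀ w : E, w ∈ S → (b + 1 / 2 < m' (g w) ∧ m' (g w) < b + 5 / 8) →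
      w.1 ≠ τ ∧ w.1 ≠ τ + 1 := by
    intro w hw h
    have h1 := hb w.2 hw.1 hw.2
    have h2 := abs_le.mp (hd (g (τ, w.2)))
    constructor
    · intro e
      have : w = (τ, w.2) := Prod.ext e rfl
      rw [this] at h
      linarith
    · intro e
      have : w = (τ, w.2) + e1 := Prod.ext e (by simp)
      rw [this, hg.2, hp] at h
      linarith
  obtain ⟨O, hO⟩ : ∃ O : Set E, O = {w | (b + 1 / 2 < m' (g w) ∧ m' (g w) < b + 5 / 8) ∧
    (τ < w.1 ∧ w.1 < τ + 1)} := ⟨_, rfl⟩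
  have memO : ∀ w, w ∈ O ↔ (b + 1 / 2 < m' (g w) ∧ m' (g w) < b + 5 / 8) ∧
    (τ < w.1 ∧ w.1 < τ + 1) := fun w => by rw [hO]; rfl
  have Oo : IsOpen O := by
    rw [hO]
    have c1 : Continuous (fun w => m' (g w)) := hm'.comp g.continuous
    exact ((isOpen_lt continuous_const c1).inter (isOpen_lt c1 continuous_const)).inter
      ((isOpen_lt continuous_const continuous_fst).inter (isOpen_lt continuous_fst continuous_const))
  have hj : JoinedIn (O ∩ S) (a, 0) (a, 1) := by
    obtain ⟨γ, hγ⟩ := hex_joined' hm' h0' C hC (b := b + 1 / 2) (b' := b + 5 / 8) (by linarith)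
    have e0 : g.symm (a, 0) = (a, 0) := hg.symm.1 _ (Or.inl le_rfl)
    have e1 : g.symm (a, 1) = (a, 1) := hg.symm.1 _ (Or.inr le_rfl)
    let δ : Path ((a, 0) : E) (a, 1) :=
      { toFun := fun t => g.symm (γ t)
        continuous_toFun := g.symm.continuous.comp γ.continuous
        source' := by rw [γ.source, ← ha, e0]
        target' := by rw [γ.target, ← ha, e1] }
    have δS : ∀ t, δ t ∈ S := fun t => (inS _).mpr (hγ t).2
    have δm : ∀ t, b + 1 / 2 < m' (g (δ t)) ∧ m' (g (δ t)) < b + 5 / 8 := fun t => by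
      show b + 1 / 2 < m' (g (g.symm (γ t))) ∧ m' (g (g.symm (γ t))) < b + 5 / 8
      rw [g.apply_symm_apply]; exact (hγ t).1
    have δc : ContinuousOn (fun t => (δ t).1) univ := by fun_prop
    have δ0 : (δ 0).1 = a := by rw [δ.source]
    refine ⟨δ, fun t => ⟨(memO _).mpr ⟨δm t, ?_, ?_⟩, δS t⟩⟩
    · exact conn_gt isPreconnected_univ δc (fun t _ => (key _ (δS t) (δm t)).1) (mem_univ 0)
        (by rw [δ0]; linarith) (mem_univ t)
    · exact conn_lt isPreconnected_univ δc (fun t _ => (key _ (δS t) (δm t)).2) (mem_univ 0)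
        (by rw [δ0]; linarith) (mem_univ t)
  obtain ⟨χ, hχ, τ', t1, t2, ht⟩ := move Oo (fun w hw => ((memO w).mp hw).2) hj
  obtain ⟨Ψ, hΨ, iΨ, eΨ⟩ := per_exists χ hχ
  refine ⟨Ψ.trans g, hΨ.trans hg, ig.comp iΨ, τ', b + 1 / 2, fun y h1 h2 => ?_⟩
  have h3 := (memO _).mp (ht y h1 h2)
  show b + 1 / 2 < m' (g (Ψ (τ', y))) ∧ m' (g (Ψ (τ', y))) < b + 1 / 2 + 1 / 8
  rw [eΨ (τ', y) t1.le t2]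
  exact ⟨h3.1.1, by linarith [h3.1.2]⟩

theorem iso_of_InG {h : E ≃ₜ E} (hh : InG h) : Iso h := by
  obtain ⟨C, hC⟩ := exists_bound_periodic h.symm.continuous hh.symm.2 hh.symm.1
  obtain ⟨X, hX⟩ : ∃ X : E → ℝ, X = fun z => (h.symm z).1 := ⟨_, rfl⟩
  have Xc : Continuous X := by rw [hX]; fun_prop
  have X0 : ∀ z : E, (z.2 ≤ 0 ∨ 1 ≤ z.2) → X z = z.1 := fun z hz => by
    rw [hX]; simp only; rw [hh.symm.1 z hz]
  have Xp : ∀ z, X (z + e1) = X z + 1 := fun z => by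
    rw [hX]; simp only; rw [hh.symm.2]; rfl
  have Xb : ∀ z, |X z - z.1| ≤ C := fun z => by
    have h1 := norm_fst_le (h.symm z - z)
    rw [hX]; exact h1.trans (hC z)
  obtain ⟨K, hK⟩ := exists_nat_gt (max (8 * C) 1)
  have K1 : 8 * C < K := lt_of_le_of_lt (le_max_left _ _) hK
  have K0 : (0 : ℝ) < K := lt_trans one_pos (lt_of_le_of_lt (le_max_right _ _) hK)
  have C0 : 0 ≤ C := (abs_nonneg _).trans (Xb 0)
  let m : ℕ → E → ℝ := fun k z => z.1 + (k / K : ℝ) * (X z - z.1)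
  have main : ∀ k : ℕ, k ≤ K → ∃ g : E ≃ₜ E, InG g ∧ Iso g ∧ ∃ τ b : ℝ, ∀ y, 0 ≤ y → y ≤ 1 →
      b < m k (g (τ, y)) ∧ m k (g (τ, y)) < b + 1 / 8 := by
    intro k
    induction k with
    | zero =>
      intro _
      refine ⟨Homeomorph.refl E, ⟨fun _ _ => rfl, fun _ => rfl⟩, Iso.refl, 1 / 16, 0, fun y _ _ => ?_⟩
      simp only [m, Homeomorph.refl_apply]
      norm_num
    | succ k ih =>
      intro hk
      refine chain_step (m := m k) (m' := m (k + 1)) ?_ ?_ C ?_ ?_ ?_ ?_ (ih (by omega))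
      · fun_prop
      · intro z hz; simp only [m]; rw [X0 z hz]; ring
      · intro z
        simp only [m]
        rw [show z.1 + ((k + 1 : ℕ) : ℝ) / K * (X z - z.1) - z.1 =
          ((k + 1 : ℕ) : ℝ) / K * (X z - z.1) by ring, abs_mul]
        have h1 : |((k + 1 : ℕ) : ℝ) / K| ≤ 1 := by
          rw [abs_of_nonneg (by positivity), div_le_one K0]
          exact_mod_cast hk
        calc _ ≤ 1 * C := mul_le_mul h1 (Xb z) (abs_nonneg _) zero_le_one
          _ = C := one_mul C
      · intro z
        simp only [m]; rw [Xp]; simp only [Prod.fst_add, e1_fst]; ring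
      · intro z
        simp only [m]
        rw [show z.1 + ((k + 1 : ℕ) : ℝ) / K * (X z - z.1) - (z.1 + (k : ℝ) / K * (X z - z.1)) =
          (X z - z.1) / K by push_cast; field_simp; ring, abs_div, abs_of_pos K0, div_le_iff₀ K0]
        linarith [Xb z]
      · intro z hz; simp only [m]; rw [X0 z hz]; ring
  obtain ⟨g, hg, ig, τ, b, hb⟩ := main K le_rfl
  have mK : ∀ z, m K z = X z := fun z => by simp only [m]; field_simp; ring
  have bτ := hb 0 le_rfl zero_le_one
  rw [mK, hg.1 _ (Or.inl le_rfl), X0 _ (Or.inl le_rfl)] at bτ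
  simp only at bτ
  have hb' : ∀ y, b < X (g (τ, y)) ∧ X (g (τ, y)) < b + 1 / 8 := by
    intro y
    by_cases hy : 0 ≤ y ∧ y ≤ 1
    · have := hb y hy.1 hy.2
      rwa [mK] at this
    · have : y ≤ 0 ∨ 1 ≤ y := by
        by_contra hc; push Not at hc; exact hy ⟨hc.1.le, hc.2.le⟩
      rw [hg.1 _ this, X0 _ this]; exact bτ
  have hf : InG (h.trans g.symm) := hh.trans hg.symm
  have fe : ∀ z, (h.trans g.symm) z = g.symm (h z) := fun _ => rfl
  have key : ∀ z : E, b + 1 / 4 ≤ z.1 → z.1 ≤ b + 3 / 4 →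
      (g.symm (h z)).1 ≠ τ ∧ (g.symm (h z)).1 ≠ τ + 1 := by
    intro z h1 h2
    have hb1 := hb' (g.symm (h z)).2
    have hz : ∀ w, w = g.symm (h z) → X (g w) = z.1 := by
      intro w hw
      rw [hw, hX]; simp
    constructor
    · intro e
      rw [hz (τ, (g.symm (h z)).2) (Prod.ext e.symm rfl)] at hb1
      linarith
    · intro e
      have e2 : ((τ, (g.symm (h z)).2) : E) + e1 = g.symm (h z) := Prod.ext e.symm (by simp)
      have := hz _ e2
      rw [hg.2, Xp] at this
      linarith
  have ib : Iso (h.trans g.symm) := by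
    refine iso_of_band hf (s := τ) (σ1 := b + 1 / 4) (σ2 := b + 3 / 4) (by linarith) ?_
    intro z h1 h2
    have hconv : IsPreconnected ({z : E | b + 1 / 4 ≤ z.1} ∩ {z : E | z.1 ≤ b + 3 / 4}) :=
      ((convex_halfSpace_ge (f := fun z : E => z.1) ⟨fun _ _ => rfl, fun _ _ => rfl⟩ _).inter
        (convex_halfSpace_le (f := fun z : E => z.1) ⟨fun _ _ => rfl, fun _ _ => rfl⟩ _)).isPreconnected
    have fc : ContinuousOn (fun z => ((h.trans g.symm) z).1)
        ({z : E | b + 1 / 4 ≤ z.1} ∩ {z : E | z.1 ≤ b + 3 / 4}) := by fun_prop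
    have hpm : ((b + 1 / 2, 0) : E) ∈ ({z : E | b + 1 / 4 ≤ z.1} ∩ {z : E | z.1 ≤ b + 3 / 4}) :=
      ⟨show b + 1 / 4 ≤ b + 1 / 2 by linarith, show b + 1 / 2 ≤ b + 3 / 4 by linarith⟩
    have hp0 : (h.trans g.symm) ((b + 1 / 2, 0) : E) = (b + 1 / 2, 0) := hf.1 _ (Or.inl le_rfl)
    constructor
    · refine conn_gt hconv fc (fun z hz => (key z hz.1 hz.2).1) hpm ?_ ⟨h1, h2⟩
      rw [hp0]; simp only; linarith
    · refine conn_lt hconv fc (fun z hz => (key z hz.1 hz.2).2) hpm ?_ ⟨h1, h2⟩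
      rw [hp0]; simp only; linarith
  refine (ig.comp ib).congr fun z => ?_
  rw [fe, g.apply_symm_apply]

end Ann


namespace Ann
open Set Filter Topology

/-- identification with the complex plane -/
def toC (z : E) : ℂ := ⟨z.1, z.2⟩

theorem toC_cont : Continuous toC := Complex.equivRealProdCLM.symm.continuous

theorem toC_ne {z : E} (h : z ≠ 0) : toC z ≠ 0 := by
  intro h0
  apply h
  have h1 := congrArg Complex.re h0
  have h2 := congrArg Complex.im h0
  exact Prod.ext h1 h2

theorem bdry {Φ J : E → E} (hΦ : Continuous Φ) (hJ : Continuous J) (JS : ∀ z, J z ∈ S)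
    (hJΦ : ∀ z ∈ S, Φ (J z) = z) (hinj : ∀ z ∈ S, ∀ w ∈ S, Φ z = Φ w → z = w)
    {P : E} (hP : P.2 = 1) : ¬ (0 < (Φ P).2 ∧ (Φ P).2 < 1) := by
  rintro ⟨h1, h2⟩
  obtain ⟨Q, hQ⟩ : ∃ Q : E, Q = Φ P := ⟨_, rfl⟩
  rw [← hQ] at h1 h2
  have PS : P ∈ S := ⟨by rw [hP]; norm_num, hP.le⟩
  obtain ⟨r, r0, r1, r2⟩ : ∃ r : ℝ, 0 < r ∧ r ≤ Q.2 ∧ r ≤ 1 - Q.2 :=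
    ⟨min Q.2 (1 - Q.2), lt_min h1 (by linarith), min_le_left _ _, min_le_right _ _⟩
  let w : ℝ → E := fun s => (Q.1 + r * Real.cos s, Q.2 + r * Real.sin s)
  have wc : Continuous w := by fun_prop
  have wS : ∀ s, w s ∈ S := by
    intro s
    have a1 := Real.neg_one_le_sin s
    have a2 := Real.sin_le_one s
    constructor
    · show 0 ≤ Q.2 + r * Real.sin s; nlinarith
    · show Q.2 + r * Real.sin s ≤ 1; nlinarith
  have wp : ∀ s, w (s + 2 * Real.pi) = w s := by
    intro s; simp only [w, Real.cos_add_two_pi, Real.sin_add_two_pi]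
  have wQ : ∀ s, toC (w s - Q) = (r : ℂ) * (Real.cos s + Real.sin s * Complex.I) := by
    intro s
    apply Complex.ext
    · simp only [toC, w, Prod.fst_sub, Complex.mul_re, Complex.add_re, Complex.add_im, Complex.mul_im,
        Complex.ofReal_re, Complex.ofReal_im, Complex.I_re, Complex.I_im]
      ring
    · simp only [toC, w, Prod.snd_sub, Complex.mul_re, Complex.add_re, Complex.add_im, Complex.mul_im,
        Complex.ofReal_re, Complex.ofReal_im, Complex.I_re, Complex.I_im]
      ring
  have wne : ∀ s, w s ≠ Q := by
    intro s h
    have e1 : r * Real.cos s = 0 := by have := congrArg Prod.fst h; simp only [w] at this; linarith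
    have e2 : r * Real.sin s = 0 := by have := congrArg Prod.snd h; simp only [w] at this; linarith
    have e3 := Real.sin_sq_add_cos_sq s
    have e4 : r ^ 2 * (Real.sin s ^ 2 + Real.cos s ^ 2) = 0 := by
      linear_combination (r * Real.cos s) * e1 + (r * Real.sin s) * e2
    rw [e3] at e4
    nlinarith
  let K : E → E := fun v => J (w v.2) + cl01 v.1 • (((P.1, 1 / 2) : E) - J (w v.2))
  have Kc : Continuous K := by
    have := cl01_cont
    fun_prop
  have KS : ∀ v, K v ∈ S ∧ K v ≠ P := by
    intro v
    have a := JS (w v.2)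
    have a1 : 0 ≤ (J (w v.2)).2 := a.1
    have a2 : (J (w v.2)).2 ≤ 1 := a.2
    have c := cl01_mem v.1
    have e : (K v).2 = (1 - cl01 v.1) * (J (w v.2)).2 + cl01 v.1 * (1 / 2) := by
      simp only [K, Prod.snd_add, Prod.smul_snd, Prod.snd_sub, smul_eq_mul]; ring
    refine ⟨⟨?_, ?_⟩, ?_⟩
    · rw [e]; nlinarith
    · rw [e]; nlinarith
    · intro h
      rcases c.1.eq_or_lt with c0 | c0
      · have : K v = J (w v.2) := by simp only [K]; rw [← c0, zero_smul, add_zero]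
        rw [this] at h
        apply wne v.2
        rw [hQ, ← h, hJΦ _ (wS _)]
      · rw [h, hP] at e
        nlinarith
  have Kne : ∀ v, Φ (K v) - Q ≠ 0 := by
    intro v h
    rw [sub_eq_zero, hQ] at h
    exact (KS v).2 (hinj _ (KS v).1 _ PS h)
  let f : E → AddCircle (2 * Real.pi) := fun v => ((Complex.arg (toC (Φ (K v) - Q)) : ℝ) : Real.Angle)
  have fc : Continuous f := by
    rw [continuous_iff_continuousAt]
    intro v
    have c1 : ContinuousAt (fun v => toC (Φ (K v) - Q)) v := by
      have := toC_cont
      fun_prop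
    exact ContinuousAt.comp (g := ((fun θ : ℝ => (θ : Real.Angle)) ∘ Complex.arg))
      (f := fun v => toC (Φ (K v) - Q)) (Complex.continuousAt_arg_coe_angle (toC_ne (Kne v))) c1
  obtain ⟨G, Gc, hG⟩ := lift_circle _ f fc
  have hG : ∀ v, ((G v : ℝ) : Real.Angle) = ((Complex.arg (toC (Φ (K v) - Q)) : ℝ) : Real.Angle) := hG
  have pp := Real.pi_pos
  have hinteg : ∀ a b : ℝ, (a : Real.Angle) = b → ∃ n : ℤ, (a - b) / (2 * Real.pi) = n := by
    intro a b h
    obtain ⟨n, hn⟩ := Real.Angle.angle_eq_iff_two_pi_dvd_sub.mp h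
    exact ⟨n, by rw [hn]; field_simp⟩
  have Kp : ∀ a s, K (a, s + 2 * Real.pi) = K (a, s) := by
    intro a s; simp only [K, wp]
  have A := int_const (isPreconnected_univ (α := E))
    (f := fun v => (G (v.1, v.2 + 2 * Real.pi) - G v) / (2 * Real.pi))
    (Continuous.continuousOn (by fun_prop)) (fun v _ => hinteg _ _ (by rw [hG, hG, Kp]))
    (mem_univ ((0, 0) : E)) (mem_univ ((1, 0) : E))
  have K1 : ∀ s, K (1, s) = (P.1, 1 / 2) := by
    intro s
    simp only [K]; rw [cl01_of_ge le_rfl, one_smul]; abel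
  have B := int_const (isPreconnected_univ (α := ℝ))
    (f := fun s => (G (1, s) - G (1, 0)) / (2 * Real.pi))
    (Continuous.continuousOn (by fun_prop)) (fun v _ => hinteg _ _ (by rw [hG, hG, K1, K1]))
    (mem_univ 0) (mem_univ (2 * Real.pi))
  have K0 : ∀ s, K (0, s) = J (w s) := by
    intro s
    simp only [K]; rw [cl01_of_le le_rfl, zero_smul, add_zero]
  have D := int_const (isPreconnected_univ (α := ℝ))
    (f := fun s => (G (0, s) - s) / (2 * Real.pi))
    (Continuous.continuousOn (by fun_prop)) (fun s _ => hinteg _ _ (by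
      rw [hG, K0, hJΦ _ (wS s), wQ]
      have := Complex.arg_mul_cos_add_sin_mul_I_coe_angle r0 (s : Real.Angle)
      simpa using this))
    (mem_univ 0) (mem_univ (2 * Real.pi))
  simp only [zero_add] at A B D
  field_simp at A B D
  linarith

end Ann


namespace Ann
open Set Filter Topology

theorem bound_cl {f : E → E} (hf : Continuous f) (hp : ∀ z, f (z + e1) = f z + e1)
    (h0 : ∀ z : E, f z - z = f (z.1, cl01 z.2) - (z.1, cl01 z.2)) :
    ∃ C : ℝ, ∀ z, ‖f z - z‖ ≤ C := by
  have hK : IsCompact (Icc (0 : ℝ) 1 ×ˢ Icc (0 : ℝ) 1) := isCompact_Icc.prod isCompact_Icc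
  obtain ⟨C, hC⟩ := hK.exists_bound_of_continuousOn (f := fun z : E => f z - z)
    (by fun_prop)
  refine ⟨C, fun z => ?_⟩
  have e := equiv_zsmul hp (-⌊z.1⌋) (z.1, cl01 z.2)
  have h1 : f z - z = f (Int.fract z.1, cl01 z.2) - (Int.fract z.1, cl01 z.2) := by
    rw [h0 z]
    have e2 : ((z.1, cl01 z.2) : E) + (((-⌊z.1⌋ : ℤ) : ℝ), 0) = (Int.fract z.1, cl01 z.2) := by
      ext <;> simp [Int.fract, sub_eq_add_neg]
    rw [← e2, e]; abel
  rw [h1]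
  exact hC _ ⟨⟨Int.fract_nonneg _, (Int.fract_lt_one _).le⟩, cl01_mem _⟩

theorem smono {f : ℝ → ℝ} (hf : Continuous f) (hi : Function.Injective f)
    (hp : ∀ x, f (x + 1) = f x + 1) : StrictMono f := by
  rcases hf.strictMono_of_inj hi with h | h
  · exact h
  · have := h (show (0 : ℝ) < 0 + 1 by norm_num)
    rw [hp] at this; linarith

theorem surj1 {f : ℝ → ℝ} (hf : Continuous f) (hp : ∀ x, f (x + 1) = f x + 1) :
    Function.Surjective f := by
  have hp2 : ∀ z : E, (fun z : E => ((f z.1, z.2) : E)) (z + e1) = (fun z : E => ((f z.1, z.2) : E)) z + e1 := by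
    intro z; ext <;> simp [hp]
  have hn : ∀ n : ℤ, f n = f 0 + n := by
    intro n
    have := congrArg Prod.fst (equiv_zsmul (f := fun z : E => ((f z.1, z.2) : E)) hp2 n (0, 0))
    simpa using this
  intro y
  have h1 : f ((⌊y - f 0⌋ : ℤ) : ℝ) ≤ y := by rw [hn]; linarith [Int.floor_le (y - f 0)]
  have h2 : y ≤ f ((⌈y - f 0⌉ : ℤ) : ℝ) := by rw [hn]; linarith [Int.le_ceil (y - f 0)]
  exact mem_range_of_exists_le_of_exists_ge hf ⟨_, h1⟩ ⟨_, h2⟩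

theorem iso_of_ext {h : E ≃ₜ E} (hp : ∀ z, h (z + e1) = h z + e1) {f0 f1 : ℝ → ℝ}
    (h0 : ∀ z : E, z.2 ≤ 0 → h z = (f0 z.1, z.2)) (h1 : ∀ z : E, 1 ≤ z.2 → h z = (f1 z.1, z.2)) :
    Iso h := by
  have f0e : ∀ x, f0 x = (h (x, 0)).1 := fun x => by rw [h0 (x, 0) le_rfl]
  have f1e : ∀ x, f1 x = (h (x, 1)).1 := fun x => by rw [h1 (x, 1) le_rfl]
  have c0 : Continuous f0 := by
    rw [show f0 = fun x => (h (x, 0)).1 from funext f0e]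
    have := h.continuous; fun_prop
  have c1 : Continuous f1 := by
    rw [show f1 = fun x => (h (x, 1)).1 from funext f1e]
    have := h.continuous; fun_prop
  have p0 : ∀ x, f0 (x + 1) = f0 x + 1 := by
    intro x
    have := congrArg Prod.fst (hp (x, 0))
    rw [f0e, f0e]; simpa [e1] using this
  have p1 : ∀ x, f1 (x + 1) = f1 x + 1 := by
    intro x
    have := congrArg Prod.fst (hp (x, 1))
    rw [f1e, f1e]; simpa [e1] using this
  have m0 : StrictMono f0 := smono c0 (by
    intro x y hxy
    have : h (x, 0) = h (y, 0) := by rw [h0 (x, 0) le_rfl, h0 (y, 0) le_rfl]; simp [hxy]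
    simpa using h.injective this) p0
  have m1 : StrictMono f1 := smono c1 (by
    intro x y hxy
    have : h (x, 1) = h (y, 1) := by rw [h1 (x, 1) le_rfl, h1 (y, 1) le_rfl]; simp [hxy]
    simpa using h.injective this) p1
  let M : ℝ → ℝ → ℝ → ℝ := fun t y x =>
    (1 - t) * ((1 - cl01 y) * f0 x + cl01 y * f1 x) + t * x
  have Mm : ∀ t ∈ Icc (0 : ℝ) 1, ∀ y, StrictMono (M t y) := by
    intro t ht y a b hab
    have k0 := m0 hab
    have k1 := m1 hab
    have c := cl01_mem y
    have q : (1 - cl01 y) * f0 a + cl01 y * f1 a < (1 - cl01 y) * f0 b + cl01 y * f1 b := by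
      rcases c.1.eq_or_lt with c0 | c0
      · rw [← c0]; linarith
      · nlinarith [mul_lt_mul_of_pos_left k1 c0, mul_le_mul_of_nonneg_left k0.le (sub_nonneg.mpr c.2)]
    show (1 - t) * _ + t * a < (1 - t) * _ + t * b
    rcases ht.1.eq_or_lt with c0 | c0
    · rw [← c0]; linarith
    · nlinarith [mul_lt_mul_of_pos_left hab c0, mul_le_mul_of_nonneg_left q.le (sub_nonneg.mpr ht.2)]
  have Mc : ∀ t y, Continuous (M t y) := by intro t y; simp only [M]; fun_prop
  have Mp : ∀ t y x, M t y (x + 1) = M t y x + 1 := by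
    intro t y x; simp only [M, p0, p1]; ring
  let F : ℝ → E → E := fun t z => (M t z.2 z.1, z.2)
  have Fc : Continuous (fun q : ℝ × E => F q.1 q.2) := by
    have := cl01_cont
    simp only [F, M]; fun_prop
  have Fb : ∀ t ∈ Icc (0 : ℝ) 1, Function.Bijective (F t) := by
    intro t ht
    constructor
    · rintro ⟨a, b⟩ ⟨c, d⟩ hh
      simp only [F, Prod.mk.injEq] at hh
      obtain ⟨e, rfl⟩ := hh
      rw [(Mm t ht b).injective e]
    · rintro ⟨a, b⟩
      obtain ⟨x, hx⟩ := surj1 (Mc t b) (Mp t b) a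
      exact ⟨(x, b), by simp only [F, hx]⟩
  have Fp : ∀ t z, F t (z + e1) = F t z + e1 := by
    intro t z; ext <;> simp [F, Mp]
  have I0 : (0 : ℝ) ∈ Icc (0 : ℝ) 1 := ⟨le_rfl, zero_le_one⟩
  have IB : Iso (F 0) := ⟨F, Fc, fun _ => rfl, fun z => by ext <;> simp [F, M], fun t ht =>
    ⟨Fb t ht, Fp t, fun z => Iff.rfl⟩⟩
  have B0c : Continuous (F 0) := Fc.comp (by fun_prop : Continuous fun z : E => ((0 : ℝ), z))
  have clcl : ∀ y, cl01 (cl01 y) = cl01 y := fun y => cl01_id (cl01_mem y).1 (cl01_mem y).2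
  obtain ⟨C, hC⟩ := bound_cl B0c (Fp 0) (by
    intro z; ext <;> simp [F, M, clcl])
  let B := mkH (F 0) B0c (Fb 0 I0) C hC
  have Bp : ∀ z, B (z + e1) = B z + e1 := Fp 0
  have hG : InG (h.trans B.symm) := by
    constructor
    · intro z hz
      rw [Homeomorph.trans_apply, Homeomorph.symm_apply_eq]
      rcases hz with hz | hz
      · rw [h0 z hz]; show _ = F 0 z
        simp [F, M, cl01_of_le hz]
      · rw [h1 z hz]; show _ = F 0 z
        simp [F, M, cl01_of_ge hz]
    · intro z
      rw [Homeomorph.trans_apply, Homeomorph.symm_apply_eq, hp, Bp, Homeomorph.trans_apply,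
        Homeomorph.apply_symm_apply]
  refine (IB.comp (iso_of_InG hG)).congr fun z => ?_
  show B (B.symm (h z)) = h z
  simp

/-- descending an isotopy to the annulus -/
theorem descend {g : E → E} (hg : Iso g)
    (h : AddCircle (1 : ℝ) × unitInterval → AddCircle (1 : ℝ) × unitInterval)
    (hh : ∀ (x : ℝ) (y : unitInterval), ((g (x, y)).1 : AddCircle (1 : ℝ)) = (h ((x : AddCircle (1 : ℝ)), y)).1 ∧
      (g (x, y)).2 = (h ((x : AddCircle (1 : ℝ)), y)).2) :
    ∃ F : unitInterval × (AddCircle (1 : ℝ) × unitInterval) → AddCircle (1 : ℝ) × unitInterval,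
      Continuous F ∧ (∀ p, F (0, p) = h p) ∧
      (∀ p, F (1, p) = p) ∧ (∀ t : unitInterval, IsHomeomorph fun p => F (t, p)) := by
  obtain ⟨G, Gc, G0, G1, Gp⟩ := hg
  let u : ℝ → E → AddCircle (1 : ℝ) × unitInterval := fun t z =>
    (((G t z).1 : AddCircle (1 : ℝ)), projIcc 0 1 zero_le_one (G t z).2)
  have uc : Continuous (fun q : ℝ × E => u q.1 q.2) := by
    have a : Continuous fun q : ℝ × E => (((G q.1 q.2).1 : ℝ) : AddCircle (1 : ℝ)) :=
      (AddCircle.continuous_mk' 1).comp (continuous_fst.comp Gc)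
    exact a.prodMk (continuous_projIcc.comp (continuous_snd.comp Gc))
  have up : ∀ t ∈ Icc (0 : ℝ) 1, ∀ z, ∀ n : ℤ, u t (z + ((n : ℝ), 0)) = u t z := by
    intro t ht z n
    simp only [u, equiv_zsmul (Gp t ht).2.1 n z]
    ext
    · simp
    · simp
  let π : unitInterval × (ℝ × unitInterval) → unitInterval × (AddCircle (1 : ℝ) × unitInterval) :=
    fun q => (q.1, ((q.2.1 : AddCircle (1 : ℝ)), q.2.2))
  have πq : IsOpenQuotientMap π :=
    IsOpenQuotientMap.id.prodMap ((QuotientAddGroup.isOpenQuotientMap_mk).prodMap IsOpenQuotientMap.id)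
  let U : unitInterval × (ℝ × unitInterval) → AddCircle (1 : ℝ) × unitInterval :=
    fun q => u q.1 (q.2.1, q.2.2)
  have Uc : Continuous U := uc.comp
    (by fun_prop : Continuous fun q : unitInterval × (ℝ × unitInterval) =>
      (((q.1 : ℝ), ((q.2.1, (q.2.2 : ℝ)) : E)) : ℝ × E))
  have Uπ : ∀ q r, π q = π r → U q = U r := by
    rintro ⟨t, x, y⟩ ⟨t', x', y'⟩ hqr
    simp only [π, Prod.mk.injEq] at hqr
    obtain ⟨rfl, hx, rfl⟩ := hqr
    obtain ⟨n, hn⟩ := coe_eq_int hx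
    have e : ((x, (y : ℝ)) : E) = (x', (y : ℝ)) + ((n : ℝ), 0) := by
      ext
      · simp only [Prod.fst_add]; linarith
      · simp
    simp only [U]
    rw [e, up _ t.2]
  let F : unitInterval × (AddCircle (1 : ℝ) × unitInterval) → AddCircle (1 : ℝ) × unitInterval :=
    fun q => U (Function.surjInv πq.surjective q)
  have Fπ : ∀ q, F (π q) = U q := fun q => Uπ _ _ (Function.surjInv_eq πq.surjective _)
  have Fx : ∀ (t : unitInterval) (x : ℝ) (y : unitInterval),
      F (t, ((x : AddCircle (1 : ℝ)), y)) = u t (x, y) := fun t x y => Fπ (t, x, y)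
  have Fc : Continuous F := by
    rw [πq.isQuotientMap.continuous_iff, show F ∘ π = U from funext Fπ]
    exact Uc
  have ySm : ∀ y : unitInterval, ∀ x : ℝ, ((x, (y : ℝ)) : E) ∈ S := fun y x => ⟨y.2.1, y.2.2⟩
  refine ⟨F, Fc, ?_, ?_, ?_⟩
  · rintro ⟨x, y⟩
    obtain ⟨x, rfl⟩ := QuotientAddGroup.mk_surjective x
    refine (Fx 0 x y).trans ?_
    obtain ⟨a, b⟩ := hh x y
    simp only [u, Icc.coe_zero, G0]
    refine Prod.ext a ?_
    simp only [b, projIcc_val]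
  · rintro ⟨x, y⟩
    obtain ⟨x, rfl⟩ := QuotientAddGroup.mk_surjective x
    refine (Fx 1 x y).trans ?_
    simp only [u, Icc.coe_one, G1, projIcc_val]
  · intro t
    obtain ⟨Gb, Ge, GS⟩ := Gp t t.2
    rw [isHomeomorph_iff_continuous_bijective]
    refine ⟨by fun_prop, ?_, ?_⟩
    · rintro ⟨x, y⟩ ⟨x', y'⟩ hxy
      obtain ⟨x, rfl⟩ := QuotientAddGroup.mk_surjective x
      obtain ⟨x', rfl⟩ := QuotientAddGroup.mk_surjective x'
      have hxy : u t (x, y) = u t (x', y') := by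
        rw [← Fx, ← Fx]; exact hxy
      simp only [u, Prod.mk.injEq] at hxy
      obtain ⟨n, hn⟩ := coe_eq_int hxy.1
      have s1 := (GS _).mpr (ySm y x)
      have s2 := (GS _).mpr (ySm y' x')
      have e2 := congrArg Subtype.val hxy.2
      rw [projIcc_of_mem zero_le_one s1, projIcc_of_mem zero_le_one s2] at e2
      have e3 : G t (x, y) = G t ((x', (y' : ℝ)) + ((n : ℝ), 0)) := by
        rw [equiv_zsmul Ge]
        refine Prod.ext ?_ ?_
        · simp only [Prod.fst_add]; linarith
        · simpa using e2
      have e4 := Gb.1 e3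
      have e5 : x = x' + n := congrArg Prod.fst e4
      have e6 : (y : ℝ) = y' + 0 := congrArg Prod.snd e4
      have e7 : y = y' := Subtype.ext (by linarith)
      subst e7 e5
      refine Prod.ext ?_ rfl
      show ((x' + n : ℝ) : AddCircle (1 : ℝ)) = (x' : AddCircle (1 : ℝ))
      simp
    · rintro ⟨x, y⟩
      obtain ⟨x, rfl⟩ := QuotientAddGroup.mk_surjective x
      obtain ⟨w, hw⟩ := Gb.2 (x, y)
      have wS : w ∈ S := (GS w).mp (by rw [hw]; exact ySm y x)
      refine ⟨((w.1 : AddCircle (1 : ℝ)), ⟨w.2, wS⟩), ?_⟩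
      refine (Fx t w.1 ⟨w.2, wS⟩).trans ?_
      show u t w = _
      simp only [u, hw, projIcc_val]

end Ann


namespace Ann
open Set Filter Topology

/-- projection of the plane to the annulus -/
noncomputable def ι (z : E) : AddCircle (1 : ℝ) × unitInterval :=
  ((z.1 : AddCircle (1 : ℝ)), projIcc 0 1 zero_le_one z.2)

theorem ι_cont : Continuous ι :=
  ((AddCircle.continuous_mk' 1).comp continuous_fst).prodMk (continuous_projIcc.comp continuous_snd)

theorem ι_snd (z : E) : ((ι z).2 : ℝ) = cl01 z.2 := rfl

theorem ι_fst (z : E) : (ι z).1 = (z.1 : AddCircle (1 : ℝ)) := rfl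

theorem ι_shift (z : E) (n : ℤ) : ι (z + ((n : ℝ), 0)) = ι z := by
  unfold ι; ext <;> simp

theorem ι_e1 (z : E) : ι (z + e1) = ι z := by
  have := ι_shift z 1
  simpa [e1] using this

theorem clcl (y : ℝ) : cl01 (cl01 y) = cl01 y := cl01_id (cl01_mem y).1 (cl01_mem y).2

theorem ι_cl (z : E) : ι (z.1, cl01 z.2) = ι z :=
  Prod.ext rfl (Subtype.ext (clcl z.2))

theorem main
    (h : Homeomorph (AddCircle (1 : ℝ) × unitInterval) (AddCircle (1 : ℝ) × unitInterval))
    (H : unitInterval × (AddCircle (1 : ℝ) × unitInterval) → AddCircle (1 : ℝ) × unitInterval)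
    (Hcont : Continuous H)
    (H0 : ∀ p, H (0, p) = h p) (H1 : ∀ p, H (1, p) = p)
    (hb : ∀ p, ((h p).2 : ℝ) = 0 ↔ (p.2 : ℝ) = 0) :
    ∃ F : unitInterval × (AddCircle (1 : ℝ) × unitInterval) → AddCircle (1 : ℝ) × unitInterval,
      Continuous F ∧ (∀ p, F (0, p) = h p) ∧
      (∀ p, F (1, p) = p) ∧ (∀ t : unitInterval, IsHomeomorph fun p => F (t, p)) := by
  have clc := cl01_cont
  have ic := ι_cont
  have hc := h.continuous
  have hsc := h.symm.continuous
  -- the lift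
  obtain ⟨G, Gc, hG⟩ := lift_circle (V := ℝ × E) 1
    (fun v => (H (projIcc 0 1 zero_le_one v.1, ι v.2)).1) (by
      have : Continuous (projIcc (0 : ℝ) 1 zero_le_one) := continuous_projIcc
      fun_prop)
  have g1 : ∀ z : E, ∃ n : ℤ, G (1, z) - z.1 = n := fun z => coe_eq_int (by
    rw [hG]; simp only [projIcc_right]
    exact congrArg Prod.fst (H1 (ι z)))
  have g1c : ∀ z w : E, G (1, z) - z.1 = G (1, w) - w.1 := fun z w =>
    int_const (isPreconnected_univ (α := E)) (f := fun z => G (1, z) - z.1)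
      (Continuous.continuousOn (by fun_prop)) (fun z _ => g1 z) (mem_univ z) (mem_univ w)
  have g2 : ∀ v : ℝ × E, G (v.1, v.2 + e1) - G v = 1 := by
    intro v
    have a := int_const (isPreconnected_univ (α := ℝ × E)) (f := fun v => G (v.1, v.2 + e1) - G v)
      (Continuous.continuousOn (by fun_prop)) (fun v _ => coe_eq_int (by
        rw [hG, hG]; simp only [ι_e1])) (mem_univ v) (mem_univ ((1 : ℝ), (0 : E)))
    have b := g1c (0 + e1) 0
    simp only [Prod.fst_add, e1_fst, Prod.fst_zero] at a b
    linarith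
  let p : E → ℝ := fun z => G (0, (z.1, cl01 z.2))
  have pc : Continuous p := by fun_prop
  have ph : ∀ z, (p z : AddCircle (1 : ℝ)) = (h (ι z)).1 := by
    intro z
    simp only [p]
    rw [hG]
    simp only [projIcc_left, ι_cl]
    exact congrArg Prod.fst (H0 (ι z))
  have pe : ∀ z, p (z + e1) = p z + 1 := by
    intro z
    have := g2 (0, (z.1, cl01 z.2))
    have e : ((z.1, cl01 z.2) : E) + e1 = ((z + e1).1, cl01 (z + e1).2) := by ext <;> simp
    rw [e] at this
    simp only [p]; linarith
  have pcl : ∀ z : E, p (z.1, cl01 z.2) = p z := by intro z; simp only [p, clcl]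
  let q : E → ℝ := fun z => (h (ι z)).2
  have qc : Continuous q := by fun_prop
  have qe : ∀ z, q (z + e1) = q z := by intro z; simp only [q, ι_e1]
  have qcl : ∀ z : E, q (z.1, cl01 z.2) = q z := by intro z; simp only [q, ι_cl]
  have q01 : ∀ z, 0 ≤ q z ∧ q z ≤ 1 := fun z => (h (ι z)).2.2
  let Φ : E → E := fun z => (p z, q z)
  have Φc : Continuous Φ := pc.prodMk qc
  have ΦS : ∀ z, Φ z ∈ S := q01
  have Φe : ∀ z, Φ (z + e1) = Φ z + e1 := by
    intro z; ext <;> simp [Φ, pe, qe]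
  have Φι : ∀ z, ι (Φ z) = h (ι z) := fun z =>
    Prod.ext (ph z) (projIcc_val zero_le_one _)
  have Sι : ∀ z ∈ S, ∀ w ∈ S, ι z = ι w → ∃ n : ℤ, z = w + ((n : ℝ), 0) := by
    intro z hz w hw e
    obtain ⟨n, hn⟩ := coe_eq_int (congrArg Prod.fst e)
    have e2 : cl01 z.2 = cl01 w.2 := congrArg (fun a => (a.2 : ℝ)) e
    rw [cl01_id hz.1 hz.2, cl01_id hw.1 hw.2] at e2
    refine ⟨n, Prod.ext ?_ ?_⟩
    · simp only [Prod.fst_add]; linarith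
    · simpa using e2
  have Φi : ∀ z ∈ S, ∀ w ∈ S, Φ z = Φ w → z = w := by
    intro z hz w hw e
    have e1 : ι z = ι w := h.injective (by rw [← Φι, ← Φι, e])
    obtain ⟨n, rfl⟩ := Sι z hz w hw e1
    rw [equiv_zsmul Φe] at e
    rw [left_eq_add.mp e.symm, add_zero]
  -- the inverse lift
  obtain ⟨p', p'c, hp'⟩ := lift_circle (V := E) 1 (fun z => (h.symm (ι z)).1) (by fun_prop)
  let J0 : E → E := fun z => (p' z, (h.symm (ι z)).2)
  have J0c : Continuous J0 := by fun_prop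
  have J0ι : ∀ z, ι (J0 z) = h.symm (ι z) := fun z =>
    Prod.ext (hp' z) (projIcc_val zero_le_one _)
  have J0h : ∀ z, ι (Φ (J0 z)) = ι z := by intro z; rw [Φι, J0ι, h.apply_symm_apply]
  have j0 : ∀ z : E, ∃ n : ℤ, p (J0 z) - z.1 = n := fun z =>
    coe_eq_int (congrArg Prod.fst (J0h z))
  obtain ⟨n, hn⟩ := j0 0
  have j1 : ∀ z : E, p (J0 z) - z.1 = n := fun z => by
    rw [← hn]
    exact int_const (isPreconnected_univ (α := E)) (f := fun z => p (J0 z) - z.1)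
      (Continuous.continuousOn (by fun_prop)) (fun z _ => j0 z) (mem_univ z) (mem_univ 0)
  let J : E → E := fun z => J0 z + (((-n : ℤ) : ℝ), 0)
  have Jc : Continuous J := by fun_prop
  have JS : ∀ z, J z ∈ S := by
    intro z
    have : (J z).2 = ((h.symm (ι z)).2 : ℝ) := by simp [J, J0]
    show 0 ≤ (J z).2 ∧ (J z).2 ≤ 1
    rw [this]; exact (h.symm (ι z)).2.2
  have ΦJ : ∀ z ∈ S, Φ (J z) = z := by
    intro z hz
    simp only [J]
    rw [equiv_zsmul Φe]
    have e2 : q (J0 z) = z.2 := by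
      have e2 : cl01 (Φ (J0 z)).2 = cl01 z.2 := congrArg (fun a => (a.2 : ℝ)) (J0h z)
      rwa [cl01_id hz.1 hz.2, cl01_id (ΦS _).1 (ΦS _).2] at e2
    refine Prod.ext ?_ ?_
    · show p (J0 z) + ((-n : ℤ) : ℝ) = z.1
      have := j1 z
      push_cast; linarith
    · show q (J0 z) + 0 = z.2
      linarith
  have JΦ : ∀ z ∈ S, J (Φ z) = z := fun z hz => Φi _ (JS _) _ hz (ΦJ _ (ΦS z))
  have Ji : ∀ z ∈ S, ∀ w ∈ S, J z = J w → z = w := by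
    intro z hz w hw e
    rw [← ΦJ z hz, e, ΦJ w hw]
  -- boundary
  have b0 : ∀ z, q z = 0 ↔ cl01 z.2 = 0 := fun z => hb (ι z)
  have b1 : ∀ z : E, z.2 = 1 → q z = 1 := by
    intro z hz
    have k := bdry Φc Jc JS ΦJ Φi hz
    have k0 : q z ≠ 0 := by rw [Ne, b0, hz, cl01_of_ge le_rfl]; norm_num
    by_contra k1
    exact k ⟨lt_of_le_of_ne (q01 z).1 (Ne.symm k0), lt_of_le_of_ne (q01 z).2 k1⟩
  have b2 : ∀ z ∈ S, q z = 1 → z.2 = 1 := by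
    intro z hz hq
    have k := bdry Jc Φc ΦS JΦ Ji (P := Φ z) hq
    rw [JΦ z hz] at k
    have k0 : z.2 ≠ 0 := by
      intro k0
      have := (b0 z).mpr (by rw [k0, cl01_of_le le_rfl])
      linarith
    by_contra k1
    exact k ⟨lt_of_le_of_ne hz.1 (Ne.symm k0), lt_of_le_of_ne hz.2 k1⟩
  have qlow : ∀ z : E, z.2 ≤ 0 → q z = 0 := fun z hz => (b0 z).mpr (cl01_of_le hz)
  have qhigh : ∀ z : E, 1 ≤ z.2 → q z = 1 := fun z hz => by
    rw [← qcl, cl01_of_ge hz]; exact b1 _ rfl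
  -- the extension
  let T : E → E := fun z => (p z, q z + (z.2 - cl01 z.2))
  have Tc : Continuous T := by fun_prop
  have Te : ∀ z, T (z + e1) = T z + e1 := by
    intro z; ext <;> simp [T, pe, qe]
  have Tlow : ∀ z : E, z.2 ≤ 0 → T z = (p (z.1, 0), z.2) := by
    intro z hz
    simp only [T]
    rw [qlow z hz, ← pcl z, cl01_of_le hz, sub_zero, zero_add]
  have Thigh : ∀ z : E, 1 ≤ z.2 → T z = (p (z.1, 1), z.2) := by
    intro z hz
    simp only [T]
    rw [qhigh z hz, ← pcl z, cl01_of_ge hz, add_sub_cancel]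
  have TS : ∀ z ∈ S, T z = Φ z := by
    intro z hz
    simp only [T, Φ]; rw [cl01_id hz.1 hz.2, sub_self, add_zero]
  have Tq : ∀ z, cl01 (T z).2 = q z := by
    intro z
    rcases le_total z.2 0 with hz | hz
    · rw [Tlow z hz, qlow z hz]; exact cl01_of_le hz
    rcases le_total 1 z.2 with hz1 | hz1
    · rw [Thigh z hz1, qhigh z hz1]; exact cl01_of_ge hz1
    · rw [TS z ⟨hz, hz1⟩]; exact cl01_id (q01 z).1 (q01 z).2
  have Tb : Function.Bijective T := by
    constructor
    · intro z w e
      have eq : q z = q w := by rw [← Tq, ← Tq, e]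
      have ep : p z = p w := congrArg Prod.fst e
      have e2 : q z + (z.2 - cl01 z.2) = q w + (w.2 - cl01 w.2) := congrArg Prod.snd e
      have e3 := Φi (z.1, cl01 z.2) (cl01_mem _) (w.1, cl01 w.2) (cl01_mem _) (by
        simp only [Φ, pcl, qcl, eq, ep])
      obtain ⟨e4, e5⟩ := Prod.mk.inj e3
      exact Prod.ext e4 (by linarith)
    · intro w
      rcases le_total w.2 0 with hz | hz
      · have a := ΦJ (w.1, 0) ⟨le_rfl, zero_le_one⟩
        have s := JS (w.1, 0)
        have a2 : cl01 (J (w.1, 0)).2 = 0 := (b0 _).mp (congrArg Prod.snd a)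
        rw [cl01_id s.1 s.2] at a2
        refine ⟨((J (w.1, 0)).1, w.2), ?_⟩
        refine (Tlow ((J (w.1, 0)).1, w.2) hz).trans (Prod.ext ?_ rfl)
        show p ((J (w.1, 0)).1, 0) = w.1
        nth_rw 2 [← a2]
        exact congrArg Prod.fst a
      rcases le_total 1 w.2 with hz1 | hz1
      · have a := ΦJ (w.1, 1) ⟨zero_le_one, le_rfl⟩
        have a2 : (J (w.1, 1)).2 = 1 := b2 _ (JS _) (congrArg Prod.snd a)
        refine ⟨((J (w.1, 1)).1, w.2), ?_⟩
        refine (Thigh ((J (w.1, 1)).1, w.2) hz1).trans (Prod.ext ?_ rfl)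
        show p ((J (w.1, 1)).1, 1) = w.1
        nth_rw 2 [← a2]
        exact congrArg Prod.fst a
      · exact ⟨J w, by rw [TS _ (JS w), ΦJ w ⟨hz, hz1⟩]⟩
  obtain ⟨C, hC⟩ := bound_cl Tc Te (by
    intro z
    simp only [T, clcl, pcl, qcl]
    ext
    · rfl
    · simp only [Prod.snd_sub]; ring)
  have I := iso_of_ext (h := mkH T Tc Tb C hC) Te (f0 := fun x => p (x, 0))
    (f1 := fun x => p (x, 1)) Tlow Thigh
  refine descend I h fun x y => ?_
  have e : ι (x, y) = ((x : AddCircle (1 : ℝ)), y) := Prod.ext rfl (projIcc_val zero_le_one _)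
  rw [mkH_apply, TS (x, y) ⟨y.2.1, y.2.2⟩, ← e]
  exact ⟨ph _, rfl⟩

end Ann

open unitInterval

/-- Every homeomorphism of the closed annulus `(ℝ/ℤ) × [0,1]` that is homotopic to
the identity and maps the boundary circle `(ℝ/ℤ) × {0}` onto itself is isotopic to
the identity. -/
theorem homeomorph_closed_annulus_homotopic_to_id_isotopic_to_id
    (h : Homeomorph (AddCircle (1 : ℝ) × I) (AddCircle (1 : ℝ) × I))
    (H : I × (AddCircle (1 : ℝ) × I) → AddCircle (1 : ℝ) × I)
    (Hcont : Continuous H)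
    (H0 : ∀ p, H (0, p) = h p)
    (H1 : ∀ p, H (1, p) = p)
    (hbd : (fun p => h p) '' {p : AddCircle (1 : ℝ) × I | (p.2 : ℝ) = 0}
      = {p : AddCircle (1 : ℝ) × I | (p.2 : ℝ) = 0}) :
    ∃ F : I × (AddCircle (1 : ℝ) × I) → AddCircle (1 : ℝ) × I, Continuous F ∧
      (∀ p, F (0, p) = h p) ∧
      (∀ p, F (1, p) = p) ∧
      (∀ t : I, IsHomeomorph fun p => F (t, p)) := by
  refine Ann.main h H Hcont H0 H1 fun p => ⟨fun hp => ?_, fun hp => ?_⟩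
  · have hm : h p ∈ {p : AddCircle (1 : ℝ) × I | (p.2 : ℝ) = 0} := hp
    rw [← hbd] at hm
    obtain ⟨r, hr, e⟩ := hm
    rw [← h.injective e]
    exact hr
  · have hm : h p ∈ (fun p => h p) '' {p : AddCircle (1 : ℝ) × I | (p.2 : ℝ) = 0} := ⟨p, hp, rfl⟩
    rw [hbd] at hm
    exact hm
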